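/- arXiv:math/0410252 — 5 statements merged into one kernel-verified Lean document; each statement's English description precedes it below -/
import Mathlib

section
/- Let f, g ∈ ℂ[x_0,…,x_4] be homogeneous of degrees n and 2r respectively, with n ≥ 2, r ≥ 3 and 2r ≥ n, such that the hypersurface {f = 0} ⊂ ℙ⁴ is smooth. Let S = {f = g = 0} ⊂ ℙ⁴(ℂ) and suppose that Sing(S) is finite with 4·|Sing(S)| ≤ (2r+n−2)·r. Then the singular points of S impose independent linear conditions on homogeneous polynomials of degree 3r+n−5: for every point P ∈ Sing(S) there exists a homogeneous polynomial of degree 3r+n−5 in ℂ[x_0,…,x_4] vanishing at every point of Sing(S) \ {P} and not vanishing at P. -/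
open MvPolynomial

noncomputable section

/-- The projective space `ℙ^N(ℂ)`. -/
abbrev ProjPt (N : ℕ) := Projectivization ℂ (Fin (N + 1) → ℂ)

/-- A (homogeneous) polynomial vanishes at a point of projective space. -/
def VanishesAt {N : ℕ} (F : MvPolynomial (Fin (N + 1)) ℂ) (p : ProjPt N) : Prop :=
  eval p.rep F = 0

/-- The `2 × 5` Jacobian matrix of `f, g` evaluated at `v`. -/
def Jac5 (f g : MvPolynomial (Fin 5) ℂ) (v : Fin 5 → ℂ) : Matrix (Fin 2) (Fin 5) ℂ :=
  Matrix.of ![fun j : Fin 5 => eval v (pderiv j f), fun j : Fin 5 => eval v (pderiv j g)]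

/-- The singular locus of `S = {f = g = 0} ⊂ ℙ⁴(ℂ)`: points of `S` where the Jacobian
matrix has rank at most `1`. -/
def SingCI5 (f g : MvPolynomial (Fin 5) ℂ) : Set (ProjPt 4) :=
  {p : ProjPt 4 | eval p.rep f = 0 ∧ eval p.rep g = 0 ∧ (Jac5 f g p.rep).rank ≤ 1}


set_option linter.unusedSectionVars false


section Aux

variable {ι : Type} [Fintype ι] (v : ι → Fin 5 → ℂ)

/-- Pointwise multiplication of a weight function by a linear form. -/
def mulL : (Fin 5 → ℂ) →ₗ[ℂ] (ι → ℂ) →ₗ[ℂ] (ι → ℂ) :=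
  LinearMap.mk₂ ℂ (fun a c i => (a ⬝ᵥ v i) * c i)
    (by intro a b c; ext i; simp [add_dotProduct, add_mul])
    (by intro t a c; ext i; simp [mul_assoc])
    (by intro a c d; ext i; simp [mul_add])
    (by intro t a c; ext i; simp; ring)

lemma mulL_apply (a : Fin 5 → ℂ) (c : ι → ℂ) (i : ι) : mulL v a c i = (a ⬝ᵥ v i) * c i := rfl

/-- The linear form as a polynomial. -/
def linP (a : Fin 5 → ℂ) : MvPolynomial (Fin 5) ℂ := ∑ k, C (a k) * X k

lemma linP_eval (a w : Fin 5 → ℂ) : eval w (linP a) = a ⬝ᵥ w := by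
  simp [linP, dotProduct]

lemma linP_hom (a : Fin 5 → ℂ) : (linP a).IsHomogeneous 1 := by
  apply IsHomogeneous.sum
  intro k _
  simpa using (isHomogeneous_C (Fin 5) (a k)).mul (isHomogeneous_X ℂ k)

/-- The pairing of weights with polynomials. -/
def pr (c : ι → ℂ) : MvPolynomial (Fin 5) ℂ →ₗ[ℂ] ℂ where
  toFun F := ∑ i, c i * eval (v i) F
  map_add' F G := by simp [mul_add, Finset.sum_add_distrib]
  map_smul' t F := by simp [Finset.mul_sum]; congr 1; ext i; ring

lemma pr_apply (c : ι → ℂ) (F : MvPolynomial (Fin 5) ℂ) :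
    pr v c F = ∑ i, c i * eval (v i) F := rfl

lemma pr_mulL (a : Fin 5 → ℂ) (c : ι → ℂ) (F : MvPolynomial (Fin 5) ℂ) :
    pr v (mulL v a c) F = pr v c (linP a * F) := by
  simp only [pr_apply, mulL_apply, map_mul, linP_eval]
  congr 1; ext i; ring

/-- Weights killing all forms of degree `j - 1`. -/
def Z (j : ℕ) : Submodule ℂ (ι → ℂ) where
  carrier := {c | ∀ k, k + 1 = j → ∀ F : MvPolynomial (Fin 5) ℂ, F.IsHomogeneous k → pr v c F = 0}
  add_mem' := by
    intro c d hc hd k hk F hF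
    have h1 := hc k hk F hF
    have h2 := hd k hk F hF
    simp only [pr_apply] at *
    simp [add_mul, Finset.sum_add_distrib, h1, h2]
  zero_mem' := by intro k hk F hF; simp [pr_apply]
  smul_mem' := by
    intro t c hc k hk F hF
    have h1 := hc k hk F hF
    simp only [pr_apply] at *
    simp [mul_assoc, ← Finset.mul_sum, h1]

lemma mem_Z_succ (j : ℕ) (c : ι → ℂ) :
    c ∈ Z v (j + 1) ↔ ∀ F : MvPolynomial (Fin 5) ℂ, F.IsHomogeneous j → pr v c F = 0 := by
  constructor
  · intro h F hF; exact h j rfl F hF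
  · intro h k hk F hF
    obtain rfl : k = j := by omega
    exact h F hF

lemma mem_Z_zero (c : ι → ℂ) : c ∈ Z v 0 := by
  intro k hk; omega

lemma mulL_mem {j : ℕ} {c : ι → ℂ} (hc : c ∈ Z v (j + 1)) (a : Fin 5 → ℂ) :
    mulL v a c ∈ Z v j := by
  intro k hk F hF
  rw [pr_mulL]
  refine (mem_Z_succ v j c).1 hc _ ?_
  have := (linP_hom a).mul hF
  rwa [← hk, add_comm k 1]

lemma X_eq_linP (k : Fin 5) : (X k : MvPolynomial (Fin 5) ℂ) = linP (Pi.single k 1) := by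
  unfold linP
  rw [Finset.sum_eq_single k] <;> simp +contextual

lemma mem_of_mulL {j : ℕ} {c : ι → ℂ} (h : ∀ k : Fin 5, mulL v (Pi.single k 1) c ∈ Z v (j + 1)) :
    c ∈ Z v (j + 2) := by
  rw [mem_Z_succ]
  intro F hF
  have e := hF.sum_X_mul_pderiv
  have h2 : pr v c (∑ k, X k * pderiv k F) = 0 := by
    rw [map_sum]
    apply Finset.sum_eq_zero
    intro k _
    rw [X_eq_linP, ← pr_mulL]
    exact (mem_Z_succ v j _).1 (h k) _ (by simpa using hF.pderiv (i := k))
  rw [e, map_nsmul] at h2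
  exact (smul_eq_zero.1 h2).resolve_left (by omega)

lemma mulL_comm (a b : Fin 5 → ℂ) (c : ι → ℂ) : mulL v a (mulL v b c) = mulL v b (mulL v a c) := by
  ext i; simp only [mulL_apply]; ring

lemma Z_anti (l : Fin 5 → ℂ) (hl : ∀ i, l ⬝ᵥ v i = 1) (j : ℕ) : Z v (j + 1) ≤ Z v j := by
  intro c hc
  have := mulL_mem v hc l
  have e : mulL v l c = c := by ext i; simp [mulL_apply, hl]
  rwa [e] at this

/-- multiplication by a product of linear forms -/
def mulP (a : ℕ → Fin 5 → ℂ) (s : Finset ℕ) : (ι → ℂ) →ₗ[ℂ] (ι → ℂ) :=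
  LinearMap.mulLeft ℂ (fun i => ∏ k ∈ s, (a k ⬝ᵥ v i))

lemma mulP_apply (a : ℕ → Fin 5 → ℂ) (s : Finset ℕ) (c : ι → ℂ) (i : ι) :
    mulP v a s c i = (∏ k ∈ s, (a k ⬝ᵥ v i)) * c i := rfl

lemma mulP_insert (a : ℕ → Fin 5 → ℂ) (s : Finset ℕ) (t : ℕ) (ht : t ∉ s) (c : ι → ℂ) :
    mulP v a (insert t s) c = mulL v (a t) (mulP v a s c) := by
  ext i; simp only [mulP_apply, mulL_apply, Finset.prod_insert ht]; ring

lemma mulP_insert' (a : ℕ → Fin 5 → ℂ) (s : Finset ℕ) (t : ℕ) (ht : t ∉ s) (c : ι → ℂ) :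
    mulP v a (insert t s) c = mulP v a s (mulL v (a t) c) := by
  ext i; simp only [mulP_apply, mulL_apply, Finset.prod_insert ht]; ring

lemma mulP_mem (a : ℕ → Fin 5 → ℂ) (s : Finset ℕ) (p : ℕ) (c : ι → ℂ)
    (hc : c ∈ Z v (p + s.card)) : mulP v a s c ∈ Z v p := by
  induction s using Finset.induction_on generalizing p with
  | empty =>
    have e : mulP v a ∅ c = c := by ext i; simp [mulP_apply]
    rw [e]; simpa using hc
  | insert t s ht ih =>
    rw [mulP_insert v a s t ht]
    apply mulL_mem
    apply ih
    rw [Finset.card_insert_of_notMem ht] at hc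
    convert hc using 2; ring

lemma green_seq (j : ℕ)
    (h : ∀ a, ∃ c ∈ Z v j, c ∉ Z v (j + 1) ∧ mulL v a c ∈ Z v j) (t : ℕ) (ht : t ≤ j) :
    ∃ (a : ℕ → Fin 5 → ℂ) (c : ℕ → ι → ℂ), ∀ k ≤ t, c k ∈ Z v j ∧ mulL v (a k) (c k) ∈ Z v j ∧
      ∀ p, p + t = j + k → mulP v a (Finset.Ioc k t) (c k) ∉ Z v (p + 1) := by
  induction t with
  | zero =>
    obtain ⟨c, hc, hc1, hc2⟩ := h 0
    refine ⟨fun _ => 0, fun _ => c, ?_⟩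
    intro k hk
    refine ⟨hc, hc2, ?_⟩
    intro p hp
    obtain rfl : k = 0 := by omega
    obtain rfl : p = j := by omega
    have e : mulP v (fun _ => 0) (Finset.Ioc 0 0) c = c := by ext i; simp [mulP_apply]
    rwa [e]
  | succ t ih =>
    obtain ⟨a, c, hac⟩ := ih (by omega)
    let W : Fin (t + 1) → Submodule ℂ (Fin 5 → ℂ) := fun k =>
      (Z v (j + k - t)).comap ((mulL v).flip (mulP v a (Finset.Ioc k t) (c k)))
    have hW : ∀ k, W k ≠ ⊤ := by
      intro k hk
      obtain ⟨h1, h2, h3⟩ := hac k (by omega)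
      refine h3 (j + k - t) (by omega) ?_
      obtain ⟨q, hq⟩ : ∃ q, j + k - t = q + 1 := ⟨j + k - t - 1, by omega⟩
      rw [hq]
      apply mem_of_mulL
      intro x
      have : (Pi.single x 1 : Fin 5 → ℂ) ∈ W k := by rw [hk]; trivial
      simp only [W, hq] at this
      exact this
    obtain ⟨b, hb⟩ := Submodule.exists_forall_notMem_of_forall_ne_top W hW
    obtain ⟨d, hd, hd1, hd2⟩ := h b
    refine ⟨Function.update a (t + 1) b, Function.update c (t + 1) d, ?_⟩
    intro k hk
    rcases Nat.lt_or_ge k (t + 1) with hlt | hge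
    · obtain ⟨h1, h2, h3⟩ := hac k (by omega)
      have hne : k ≠ t + 1 := by omega
      simp only [Function.update_of_ne hne]
      refine ⟨h1, h2, ?_⟩
      intro p hp hmem
      have hI : Finset.Ioc k (t + 1) = insert (t + 1) (Finset.Ioc k t) := by
        ext x; simp; omega
      rw [hI, mulP_insert _ _ _ _ (by simp)] at hmem
      have e : mulP v (Function.update a (t + 1) b) (Finset.Ioc k t) (c k)
          = mulP v a (Finset.Ioc k t) (c k) := by
        ext i
        simp only [mulP_apply]
        congr 1
        apply Finset.prod_congr rfl
        intro x hx
        have : x ≠ t + 1 := by simp at hx; omega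
        rw [Function.update_of_ne this]
      rw [e, Function.update_self] at hmem
      apply hb ⟨k, hlt⟩
      have hpp : j + k - t = p + 1 := by omega
      simp only [W, hpp]
      exact hmem
    · obtain rfl : k = t + 1 := by omega
      simp only [Function.update_self]
      refine ⟨hd, hd2, ?_⟩
      intro p hp
      obtain rfl : p = j := by omega
      have e : mulP v (Function.update a (t + 1) b) (Finset.Ioc (t + 1) (t + 1)) d = d := by
        ext i; simp [mulP_apply]
      rwa [e]

lemma green (l : Fin 5 → ℂ) (hl : ∀ i, l ⬝ᵥ v i = 1) (j : ℕ)
    (h : ∀ a, ∃ c ∈ Z v j, c ∉ Z v (j + 1) ∧ mulL v a c ∈ Z v j) :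
    Module.finrank ℂ (Z v (j + 1)) + (j + 1) ≤ Module.finrank ℂ (Z v j) := by
  obtain ⟨a, c, hac⟩ := green_seq v j h j le_rfl
  have key : ∀ α : ℕ → ℂ, (∑ k ∈ Finset.range (j + 1), α k • c k) ∈ Z v (j + 1) →
      ∀ k, k < j + 1 → α k = 0 := by
    intro α hα k
    induction k using Nat.strong_induction_on with
    | _ k ih =>
    intro hk
    by_contra hne
    obtain ⟨h1, h2, h3⟩ := hac k (by omega)
    apply h3 k (by omega)
    have hm : mulP v a (Finset.Ioc k j) (∑ k ∈ Finset.range (j + 1), α k • c k) ∈ Z v (k + 1) := by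
      apply mulP_mem
      rw [Nat.card_Ioc]
      convert hα using 2; omega
    rw [map_sum, Finset.sum_eq_add_sum_sdiff_singleton_of_mem (Finset.mem_range.2 hk)] at hm
    have hrest : ∑ x ∈ Finset.range (j + 1) \ {k}, mulP v a (Finset.Ioc k j) (α x • c x)
        ∈ Z v (k + 1) := by
      apply Submodule.sum_mem
      intro x hx
      simp at hx
      rw [map_smul]
      rcases Nat.lt_or_ge x k with hxk | hxk
      · rw [ih x hxk (by omega)]; simp
      · apply Submodule.smul_mem
        obtain ⟨g1, g2, g3⟩ := hac x (by omega)
        have hI : Finset.Ioc k j = insert x ((Finset.Ioc k j).erase x) := by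
          rw [Finset.insert_erase]; simp; omega
        rw [hI, mulP_insert' _ _ _ _ (by simp)]
        apply mulP_mem
        have hc : ((Finset.Ioc k j).erase x).card = j - k - 1 := by
          rw [Finset.card_erase_of_mem (by simp; omega)]; simp
        rw [hc]
        convert g2 using 2; omega
    have := (Submodule.add_mem_iff_left _ hrest).1 hm
    rw [map_smul] at this
    exact (Submodule.smul_mem_iff _ hne).1 this
  let f : (Fin (j + 1) → ℂ) →ₗ[ℂ] Z v j :=
    Fintype.linearCombination ℂ (fun k : Fin (j + 1) => (⟨c k, (hac k (by omega)).1⟩ : Z v j))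
  let g : Z v (j + 1) →ₗ[ℂ] Z v j := Submodule.inclusion (Z_anti v l hl j)
  have hinj : Function.Injective (f.coprod g) := by
    rw [← LinearMap.ker_eq_bot, LinearMap.ker_eq_bot']
    rintro ⟨α, y⟩ hxy
    have hs : (∑ k : Fin (j + 1), α k • c k) + (y : ι → ℂ) = 0 := by
      have := congrArg Subtype.val hxy
      simpa [f, g, Fintype.linearCombination_apply] using this
    have hα : ∀ k : Fin (j + 1), α k = 0 := by
      let β : ℕ → ℂ := fun k => if hk : k < j + 1 then α ⟨k, hk⟩ else 0
      have hβ : ∀ k : Fin (j + 1), β k = α k := by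
        intro k; simp only [β]; rw [dif_pos k.2]
      have hb : (∑ k ∈ Finset.range (j + 1), β k • c k) ∈ Z v (j + 1) := by
        rw [Finset.sum_range]
        have : ∑ k : Fin (j + 1), β k • c k = - (y : ι → ℂ) := by
          rw [eq_neg_iff_add_eq_zero, ← hs]
          simp only [hβ]
        rw [this]
        exact Submodule.neg_mem _ y.2
      intro k
      have := key β hb k k.2
      rwa [hβ] at this
    have hα' : α = 0 := funext hα
    subst hα'
    simp at hs
    simp [hs]
  have := LinearMap.finrank_le_finrank_of_injective hinj
  rw [Module.finrank_prod, Module.finrank_fin_fun] at this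
  omega

end Aux


/-- A finite commuting family of endomorphisms has a common eigenvector. -/
lemma common_eigen (n : ℕ) : ∀ (V : Type) [AddCommGroup V] [Module ℂ V] [FiniteDimensional ℂ V]
    [Nontrivial V] (T : Fin n → Module.End ℂ V) (_ : ∀ i j x, T i (T j x) = T j (T i x)),
    ∃ x : V, x ≠ 0 ∧ ∃ lam : Fin n → ℂ, ∀ i, T i x = lam i • x := by
  induction n with
  | zero =>
    intro V _ _ _ _ T _
    obtain ⟨x, hx⟩ := exists_ne (0 : V)
    exact ⟨x, hx, fun _ => 0, fun i => i.elim0⟩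
  | succ n ih =>
    intro V _ _ _ _ T hT
    obtain ⟨μ, hμ⟩ := Module.End.exists_eigenvalue (T 0)
    let E := (T 0).eigenspace μ
    have hE : ∀ i : Fin n, ∀ x ∈ E, T i.succ x ∈ E := by
      intro i x hx
      rw [Module.End.mem_eigenspace_iff] at hx ⊢
      rw [hT, hx, map_smul]
    have : Nontrivial E := by
      rw [Submodule.nontrivial_iff_ne_bot]
      exact hμ
    obtain ⟨x, hx, lam, hl⟩ := ih E (fun i => (T i.succ).restrict (hE i)) (by
      intro i j x
      apply Subtype.ext
      exact hT _ _ _)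
    refine ⟨x, by simpa using hx, Fin.cons μ lam, ?_⟩
    intro i
    refine Fin.cases ?_ ?_ i
    · exact Module.End.mem_eigenspace_iff.1 x.2
    · intro k
      simpa using congrArg Subtype.val (hl k)

/-- Eigenvector lemma for a pencil of maps. -/
lemma pencil_eigen {V V' V'' : Type} [AddCommGroup V] [Module ℂ V] [FiniteDimensional ℂ V]
    [AddCommGroup V'] [Module ℂ V'] [FiniteDimensional ℂ V']
    [AddCommGroup V''] [Module ℂ V''] [Nontrivial V] {n : ℕ}
    (x : Fin n → V →ₗ[ℂ] V') (x' : Fin n → V' →ₗ[ℂ] V'') (z : V →ₗ[ℂ] V') (z' : V' →ₗ[ℂ] V'')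
    (hz : Function.Bijective z) (hz' : Function.Injective z')
    (hxx : ∀ i j u, x' i (x j u) = x' j (x i u)) (hxz : ∀ i u, x' i (z u) = z' (x i u)) :
    ∃ u : V, u ≠ 0 ∧ ∃ lam : Fin n → ℂ, ∀ i, x i u = lam i • z u := by
  let e : V ≃ₗ[ℂ] V' := LinearEquiv.ofBijective z hz
  have he : ∀ y, z (e.symm y) = y := fun y => e.apply_symm_apply y
  obtain ⟨u, hu, lam, hl⟩ := common_eigen n V (fun i => e.symm.toLinearMap ∘ₗ x i) (by
    intro i j u
    apply hz.1
    apply hz'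
    simp only [LinearMap.comp_apply, LinearEquiv.coe_coe, he]
    rw [← hxz, ← hxz, he, he, hxx])
  refine ⟨u, hu, lam, fun i => ?_⟩
  have := congrArg z (hl i)
  simpa [he] using this

section Aux2

variable {ι : Type} [Fintype ι] (v : ι → Fin 5 → ℂ)

/-- Graded pieces. -/
abbrev QQ (j : ℕ) := (Z v j) ⧸ (Z v (j + 1)).comap (Z v j).subtype

/-- Multiplication by a linear form on graded pieces. -/
def mulQ (a : Fin 5 → ℂ) (j : ℕ) : QQ v (j + 1) →ₗ[ℂ] QQ v j :=
  Submodule.mapQ _ _ ((mulL v a).restrict (fun _ hc => mulL_mem v hc a)) (by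
    intro c hc
    exact mulL_mem v hc a)

lemma mulQ_mk (a : Fin 5 → ℂ) (j : ℕ) (c : Z v (j + 1)) :
    mulQ v a j (Submodule.Quotient.mk c) =
      Submodule.Quotient.mk (⟨mulL v a c, mulL_mem v c.2 a⟩ : Z v j) := rfl

lemma QQ_mk_eq_zero (j : ℕ) (c : Z v j) :
    (Submodule.Quotient.mk c : QQ v j) = 0 ↔ (c : ι → ℂ) ∈ Z v (j + 1) := by
  rw [Submodule.Quotient.mk_eq_zero]; rfl

lemma finrank_QQ (l : Fin 5 → ℂ) (hl : ∀ i, l ⬝ᵥ v i = 1) (j : ℕ) :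
    Module.finrank ℂ (QQ v j) + Module.finrank ℂ (Z v (j + 1)) = Module.finrank ℂ (Z v j) := by
  rw [← Submodule.finrank_quotient_add_finrank ((Z v (j + 1)).comap (Z v j).subtype)]
  congr 1
  exact (Submodule.comapSubtypeEquivOfLe (Z_anti v l hl j)).finrank_eq.symm

/-- `z` is injective in level `j`. -/
def Good (z : Fin 5 → ℂ) (j : ℕ) : Prop := ∀ c ∈ Z v j, mulL v z c ∈ Z v j → c ∈ Z v (j + 1)

lemma Good.succ {z : Fin 5 → ℂ} {j : ℕ} (h : Good v z j) : Good v z (j + 1) := by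
  intro c hc hz
  apply mem_of_mulL
  intro k
  apply h _ (mulL_mem v hc _)
  rw [mulL_comm]
  exact mulL_mem v hz _

lemma Good.inj {z : Fin 5 → ℂ} {j : ℕ} (h : Good v z (j + 1)) :
    Function.Injective (mulQ v z j) := by
  rw [← LinearMap.ker_eq_bot, LinearMap.ker_eq_bot']
  intro q
  induction q using Submodule.Quotient.induction_on with
  | _ c =>
  intro hq
  rw [mulQ_mk, QQ_mk_eq_zero] at hq
  rw [QQ_mk_eq_zero]
  exact h c c.2 hq

lemma exists_good (l : Fin 5 → ℂ) (hl : ∀ i, l ⬝ᵥ v i = 1) (j : ℕ)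
    (h : Module.finrank ℂ (QQ v j) ≤ j) : ∃ z, Good v z j := by
  by_contra hcon
  unfold Good at hcon
  push Not at hcon
  have h1 := green v l hl j (fun a => by
    obtain ⟨c, h1, h2, h3⟩ := hcon a
    exact ⟨c, h1, h3, h2⟩)
  have h2 := finrank_QQ v l hl j
  omega

lemma finrank_le (l : Fin 5 → ℂ) (hl : ∀ i, l ⬝ᵥ v i = 1) (j : ℕ)
    (h : Module.finrank ℂ (QQ v j) ≤ j) :
    Module.finrank ℂ (QQ v (j + 1)) ≤ Module.finrank ℂ (QQ v j) := by
  obtain ⟨z, hz⟩ := exists_good v l hl j h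
  exact LinearMap.finrank_le_finrank_of_injective (hz.succ).inj

/-- If the weight `c` is an eigenvector then it is an evaluation at the point `lam`. -/
lemma eigen_eval (J : ℕ) (c : ι → ℂ) (z lam : Fin 5 → ℂ)
    (h : ∀ k, mulL v (Pi.single k 1) c - lam k • mulL v z c ∈ Z v (J + 1)) (k : ℕ) :
    ∀ e, k + e = J + 1 → ∀ F : MvPolynomial (Fin 5) ℂ, F.IsHomogeneous k →
      pr v c (F * linP z ^ e) = eval lam F * pr v c (linP z ^ (J + 1)) := by
  induction k with
  | zero =>
    intro e he F hF
    obtain rfl : e = J + 1 := by omega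
    rw [← totalDegree_zero_iff_isHomogeneous, totalDegree_eq_zero_iff_eq_C] at hF
    rw [hF, ← smul_eq_C_mul, map_smul]
    simp
  | succ k ih =>
    intro e he F hF
    have hE := hF.sum_X_mul_pderiv
    have h1 : pr v c ((∑ x, X x * pderiv x F) * linP z ^ e)
        = eval lam (∑ x, X x * pderiv x F) * pr v c (linP z ^ (J + 1)) := by
      rw [Finset.sum_mul, map_sum, map_sum, Finset.sum_mul]
      apply Finset.sum_congr rfl
      intro x _
      have hd : (pderiv x F).IsHomogeneous k := by simpa using hF.pderiv (i := x)
      have h2 := (mem_Z_succ v J _).1 (h x) (pderiv x F * linP z ^ e) (by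
        have := hd.mul ((linP_hom z).pow e)
        convert this using 1; omega)
      have h3 : pr v (mulL v (Pi.single x 1) c - lam x • mulL v z c) (pderiv x F * linP z ^ e)
          = pr v (mulL v (Pi.single x 1) c) (pderiv x F * linP z ^ e)
            - lam x * pr v (mulL v z c) (pderiv x F * linP z ^ e) := by
        simp only [pr_apply, Pi.sub_apply, Pi.smul_apply, smul_eq_mul, sub_mul,
          Finset.sum_sub_distrib, Finset.mul_sum, mul_assoc]
      rw [h3, sub_eq_zero, pr_mulL, pr_mulL, ← X_eq_linP] at h2
      rw [mul_assoc, h2, RingHom.map_mul, eval_X, mul_assoc, ← ih (e + 1) (by omega) _ hd]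
      congr 2
      ring
    rw [hE] at h1
    rw [nsmul_eq_mul, mul_assoc, ← nsmul_eq_mul, map_nsmul, RingHom.map_mul, map_natCast, mul_assoc,
      nsmul_eq_mul] at h1
    exact mul_left_cancel₀ (by exact_mod_cast Nat.succ_ne_zero k) h1

lemma drop (l : Fin 5 → ℂ) (hl : ∀ i, l ⬝ᵥ v i = 1) (m : ℕ)
    (hcut : ∀ q : Fin 5 → ℂ, q ≠ 0 → l ⬝ᵥ q = 0 → ∃ F : MvPolynomial (Fin 5) ℂ,
      F.IsHomogeneous m ∧ (∀ i, eval (v i) F = 0) ∧ eval q F ≠ 0)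
    (j : ℕ) (hj : m ≤ j + 1)
    (h : Module.finrank ℂ (QQ v j) ≤ j) (hpos : 0 < Module.finrank ℂ (QQ v j)) :
    Module.finrank ℂ (QQ v (j + 1)) < Module.finrank ℂ (QQ v j) := by
  refine lt_of_le_of_ne (finrank_le v l hl j h) ?_
  intro heq
  obtain ⟨z, hz⟩ := exists_good v l hl j h
  obtain ⟨i, rfl⟩ : ∃ i, j = i + 1 := ⟨j - 1, by omega⟩
  have : Nontrivial (QQ v (i + 1 + 1)) := Module.nontrivial_of_finrank_pos (by omega : 0 < Module.finrank ℂ (QQ v (i + 1 + 1)))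
  have hb : Function.Bijective (mulQ v z (i + 1)) :=
    ⟨hz.succ.inj, (LinearMap.injective_iff_surjective_of_finrank_eq_finrank heq).1 hz.succ.inj⟩
  obtain ⟨u, hu, lam, hlam⟩ := pencil_eigen (fun k : Fin 5 => mulQ v (Pi.single k 1) (i + 1))
    (fun k => mulQ v (Pi.single k 1) i) (mulQ v z (i + 1)) (mulQ v z i) hb hz.inj
    (by
      intro a b u
      induction u using Submodule.Quotient.induction_on with
      | _ c =>
      simp only [mulQ_mk, mulL_comm v (Pi.single a 1)])
    (by
      intro a u
      induction u using Submodule.Quotient.induction_on with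
      | _ c =>
      simp only [mulQ_mk, mulL_comm v (Pi.single a 1)])
  induction u using Submodule.Quotient.induction_on with
  | _ c =>
  rw [Ne, QQ_mk_eq_zero] at hu
  have hev := eigen_eval v (i + 1) c z lam (by
    intro k
    have := hlam k
    simp only [mulQ_mk] at this
    rw [← Submodule.Quotient.mk_smul, Submodule.Quotient.eq] at this
    exact this)
  have hκ : pr v c (linP z ^ (i + 1 + 1)) ≠ 0 := by
    intro h0
    apply hu
    rw [mem_Z_succ]
    intro F hF
    have := hev (i + 1 + 1) 0 rfl F hF
    simpa [h0] using this
  have hzl : lam ≠ 0 := by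
    rintro rfl
    have := hev (i + 1 + 1) 0 rfl (linP z ^ (i + 1 + 1)) (by simpa using (linP_hom z).pow (i + 1 + 1))
    rw [map_pow, linP_eval, dotProduct_zero, zero_pow (by omega), zero_mul, pow_zero, mul_one] at this
    exact hκ this
  have hll : l ⬝ᵥ lam = 0 := by
    have h1 := hev 1 (i + 1) (by omega) (linP l) (linP_hom l)
    have h2 : pr v c (linP l * linP z ^ (i + 1)) = 0 := by
      rw [← pr_mulL]
      have e : mulL v l c = c := by ext i; simp [mulL_apply, hl]
      rw [e]
      exact (mem_Z_succ v (i + 1) _).1 c.2 _ (by simpa using (linP_hom z).pow (i + 1))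
    rw [h2, linP_eval] at h1
    exact (mul_eq_zero.1 h1.symm).resolve_right hκ
  obtain ⟨F, hF, hFv, hFl⟩ := hcut lam hzl hll
  have h1 := hev m (i + 1 + 1 - m) (by omega) F hF
  have h2 : pr v c (F * linP z ^ (i + 1 + 1 - m)) = 0 := by
    simp [pr_apply, hFv]
  rw [h2] at h1
  exact mul_ne_zero hFl hκ h1.symm

lemma Z_stab (l : Fin 5 → ℂ) (hl : ∀ i, l ⬝ᵥ v i = 1)
    (hsep : ∀ i i', i ≠ i' → ∃ a : Fin 5 → ℂ, a ⬝ᵥ v i' = 0 ∧ a ⬝ᵥ v i ≠ 0)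
    (j : ℕ) (h : Z v j ≤ Z v (j + 1)) : Z v j = ⊥ := by
  classical
  rw [eq_bot_iff]
  intro c hc
  have hanti : ∀ j, Z v (j + 1) ≤ Z v 1 := by
    intro j
    induction j with
    | zero => exact le_rfl
    | succ j ih => exact (Z_anti v l hl _).trans ih
  have hj1 : Z v j ≤ Z v 1 := h.trans (hanti j)
  choose! a ha using hsep
  -- multiplication by any product of linear forms preserves `Z v j`
  have hprod : ∀ (s : Finset ι) (b : ι → Fin 5 → ℂ) ,
      (fun x => (∏ k ∈ s, (b k ⬝ᵥ v x)) * c x) ∈ Z v j := by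
    intro s b
    induction s using Finset.induction_on with
    | empty => simpa using hc
    | insert t s ht ih =>
      have := mulL_mem v (h ih) (b t)
      convert this using 1
      ext x
      rw [mulL_apply, Finset.prod_insert ht, mul_assoc]
  rw [Submodule.mem_bot]
  ext i
  have h1 := (mem_Z_succ v 0 _).1 (hj1 (hprod (Finset.univ.erase i) (fun k => a i k))) 1
    (isHomogeneous_one _ _)
  rw [pr_apply, Finset.sum_eq_single i] at h1
  · simp only [map_one, mul_one] at h1
    refine (mul_eq_zero.1 h1).resolve_left ?_
    refine Finset.prod_ne_zero_iff.2 ?_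
    intro k hk
    exact (ha i k (Finset.ne_of_mem_erase hk).symm).2
  · intro k _ hk
    rw [Finset.prod_eq_zero (i := k) (by simp [hk])]
    · simp
    · exact (ha i k hk.symm).1
  · simp

lemma core (l : Fin 5 → ℂ) (hl : ∀ i, l ⬝ᵥ v i = 1)
    (hsep : ∀ i i', i ≠ i' → ∃ a : Fin 5 → ℂ, a ⬝ᵥ v i' = 0 ∧ a ⬝ᵥ v i ≠ 0) (m r : ℕ)
    (hcut : ∀ q : Fin 5 → ℂ, q ≠ 0 → l ⬝ᵥ q = 0 → ∃ F : MvPolynomial (Fin 5) ℂ,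
      F.IsHomogeneous m ∧ (∀ i, eval (v i) F = 0) ∧ eval q F ≠ 0)
    (hr : 1 ≤ r) (hm : 2 * r ≤ m) (hcard : 4 * Fintype.card ι ≤ m * r) :
    Z v (m + r - 2) = ⊥ := by
  by_contra hne
  set b : ℕ → ℕ := fun j => Module.finrank ℂ (QQ v j) with hb
  have hanti : ∀ j k, j ≤ k → Z v k ≤ Z v j := by
    intro j k hjk
    induction k, hjk using Nat.le_induction with
    | base => exact le_rfl
    | succ k _ ih => exact (Z_anti v l hl k).trans ih
  have hpos : ∀ j, j ≤ m + r - 2 → 1 ≤ b j := by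
    intro j hj
    by_contra h0
    have h0 : Module.finrank ℂ (QQ v j) = 0 := by simp only [hb] at h0; omega
    have h1 := finrank_QQ v l hl j
    have h2 : Z v (j + 1) = Z v j :=
      Submodule.eq_of_le_of_finrank_eq (Z_anti v l hl j) (by omega)
    have h3 := Z_stab v l hl hsep j h2.ge
    exact hne (eq_bot_iff.2 (h3 ▸ hanti j _ hj))
  have hle : ∀ j, b j ≤ j → b (j + 1) ≤ b j := fun j => finrank_le v l hl j
  have hlt : ∀ j, m ≤ j + 1 → b j ≤ j → 0 < b j → b (j + 1) < b j :=
    fun j => drop v l hl m hcut j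
  have hsum : ∀ J, ∑ j ∈ Finset.range J, b j + Module.finrank ℂ (Z v J) = Fintype.card ι := by
    intro J
    induction J with
    | zero =>
      have : Z v 0 = ⊤ := eq_top_iff.2 (fun c _ => mem_Z_zero v c)
      rw [this]; simp
    | succ J ih =>
      rw [Finset.sum_range_succ]
      have := finrank_QQ v l hl J
      simp only [hb] at *
      omega
  clear_value b
  -- the lower bound
  have hlow : ∀ j, r ≤ j + 1 → j < m → r ≤ b j := by
    intro j hrj hjm
    by_contra hcon
    have h1 : ∀ k, b (j + k) ≤ b j := by
      intro k
      induction k with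
      | zero => exact le_rfl
      | succ k ih => exact (hle (j + k) (by omega)).trans ih
    have h2 : ∀ k, k + 1 ≤ r → b (m - 1 + k) + k ≤ b j := by
      intro k
      induction k with
      | zero =>
        intro _
        have := h1 (m - 1 - j)
        rwa [show j + (m - 1 - j) = m - 1 + 0 by omega] at this
      | succ k ih =>
        intro hk
        have i1 := ih (by omega)
        have i2 := hpos (m - 1 + k) (by omega)
        have i3 := hlt (m - 1 + k) (by omega) (by omega) (by omega)
        rw [show m - 1 + (k + 1) = m - 1 + k + 1 by omega]
        omega
    have h3 := h2 (r - 1) (by omega)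
    have h4 := hpos (m - 1 + (r - 1)) (by omega)
    omega
  have h5 : ∑ j ∈ Finset.Ico (r - 1) m, r ≤ ∑ j ∈ Finset.range m, b j := by
    calc ∑ j ∈ Finset.Ico (r - 1) m, r ≤ ∑ j ∈ Finset.Ico (r - 1) m, b j := by
          apply Finset.sum_le_sum
          intro j hj
          rw [Finset.mem_Ico] at hj
          exact hlow j (by omega) hj.2
      _ ≤ _ := by
          apply Finset.sum_le_sum_of_subset
          intro j hj
          rw [Finset.mem_Ico] at hj
          simpa using hj.2
  have h6 := hsum m
  simp only [Finset.sum_const, Nat.card_Ico, smul_eq_mul] at h5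
  have h7 : 4 * ((m - (r - 1)) * r) ≤ m * r := by omega
  rw [← mul_assoc] at h7
  have h8 := Nat.le_of_mul_le_mul_right h7 (by omega)
  omega

end Aux2


lemma hom_eval_smul {F : MvPolynomial (Fin 5) ℂ} {k : ℕ} (hF : F.IsHomogeneous k) (t : ℂ)
    (w : Fin 5 → ℂ) : eval (t • w) F = t ^ k * eval w F := by
  rw [eval_eq', eval_eq', Finset.mul_sum]
  apply Finset.sum_congr rfl
  intro d hd
  have h1 : ∑ i, d i = k := by
    have := hF (mem_support_iff.1 hd)
    rw [← this, Finsupp.weight_apply, Finsupp.sum_fintype] <;> simp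
  simp only [Pi.smul_apply, smul_eq_mul, mul_pow, Finset.prod_mul_distrib]
  rw [Finset.prod_pow_eq_pow_sum, h1]
  ring

lemma jac_minor (f g : MvPolynomial (Fin 5) ℂ) (w : Fin 5 → ℂ) :
    (Jac5 f g w).rank ≤ 1 ↔ ∀ a b, eval w (pderiv a f * pderiv b g - pderiv b f * pderiv a g) = 0 := by
  have hrow : (Jac5 f g w).row = ![fun j : Fin 5 => eval w (pderiv j f),
      fun j : Fin 5 => eval w (pderiv j g)] := rfl
  have hind : LinearIndependent ℂ (Jac5 f g w).row ↔ ¬ (Jac5 f g w).rank ≤ 1 := by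
    rw [linearIndependent_iff_card_le_finrank_span, Matrix.rank_eq_finrank_span_row, Set.finrank]
    simp; omega
  rw [← not_iff_not, ← hind, hrow, LinearIndependent.pair_iff]
  constructor
  · intro h hcon
    have h0 : ∀ a, eval w (pderiv a f) = 0 := by
      intro a
      have := (h (eval w (pderiv a g)) (- eval w (pderiv a f)) (by
        ext b
        have := hcon a b
        simp only [map_sub, map_mul] at this
        simp only [Pi.add_apply, Pi.smul_apply, smul_eq_mul, Pi.zero_apply]
        linear_combination - this)).2
      simpa using this
    have := (h 1 0 (by ext b; simp [h0])).1
    simp at this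
  · intro h s t hst
    push Not at h
    obtain ⟨a, b, hab⟩ := h
    simp only [map_sub, map_mul] at hab
    have ha := congrFun hst a
    have hb := congrFun hst b
    simp only [Pi.add_apply, Pi.smul_apply, smul_eq_mul, Pi.zero_apply] at ha hb
    constructor
    · refine (mul_eq_zero.1 (?_ : s * _ = 0)).resolve_right hab
      linear_combination (eval w (pderiv b g)) * ha - (eval w (pderiv a g)) * hb
    · refine (mul_eq_zero.1 (?_ : t * _ = 0)).resolve_right hab
      linear_combination (eval w (pderiv a f)) * hb - (eval w (pderiv b f)) * ha

lemma sing_cut (n r : ℕ) (f g : MvPolynomial (Fin 5) ℂ)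
    (hf : f.IsHomogeneous n) (hg : g.IsHomogeneous (2 * r)) (hn : 2 ≤ n) (hr : 1 ≤ r)
    (p : ProjPt 4) (hp : p ∉ SingCI5 f g) :
    ∃ F : MvPolynomial (Fin 5) ℂ, F.IsHomogeneous (2 * r + n - 2) ∧
      (∀ q ∈ SingCI5 f g, eval q.rep F = 0) ∧ eval p.rep F ≠ 0 := by
  obtain ⟨k, hk⟩ : ∃ k, p.rep k ≠ 0 := Function.ne_iff.1 p.rep_nonzero
  by_cases h1 : eval p.rep f = 0
  · by_cases h2 : eval p.rep g = 0
    · have h3 : ¬ (Jac5 f g p.rep).rank ≤ 1 := fun h3 => hp ⟨h1, h2, h3⟩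
      rw [jac_minor] at h3
      push Not at h3
      obtain ⟨a, b, hab⟩ := h3
      refine ⟨pderiv a f * pderiv b g - pderiv b f * pderiv a g, ?_, ?_, hab⟩
      · have e1 := (hf.pderiv (i := a)).mul (hg.pderiv (i := b))
        have e2 := (hf.pderiv (i := b)).mul (hg.pderiv (i := a))
        have e := e1.sub e2
        rwa [show n - 1 + (2 * r - 1) = 2 * r + n - 2 by omega] at e
      · intro q hq
        exact (jac_minor f g _).1 hq.2.2 a b
    · refine ⟨g * X k ^ (n - 2), ?_, ?_, ?_⟩
      · convert hg.mul ((isHomogeneous_X ℂ k).pow (n - 2)) using 1; omega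
      · intro q hq; simp [hq.2.1]
      · simp [h2, hk]
  · refine ⟨f * X k ^ (2 * r - 2), ?_, ?_, ?_⟩
    · convert hf.mul ((isHomogeneous_X ℂ k).pow (2 * r - 2)) using 1; omega
    · intro q hq; simp [hq.1]
    · simp [h1, hk]

lemma exists_lin (φ : (Fin 5 → ℂ) →ₗ[ℂ] ℂ) : ∃ a : Fin 5 → ℂ, ∀ w, a ⬝ᵥ w = φ w := by
  refine ⟨fun k => φ (Pi.single k 1), fun w => ?_⟩
  rw [LinearMap.pi_apply_eq_sum_univ φ w]
  simp only [dotProduct, smul_eq_mul]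
  apply Finset.sum_congr rfl
  intro k _
  rw [mul_comm]
  congr 2
  ext x
  simp [Pi.single_apply, eq_comm]


theorem stmt_7 (n r : ℕ) (f g : MvPolynomial (Fin 5) ℂ)
    (hf : f.IsHomogeneous n) (hg : g.IsHomogeneous (2 * r))
    (hn : 2 ≤ n) (hr : 3 ≤ r) (hrn : n ≤ 2 * r)
    (hFsmooth : ∀ p : ProjPt 4, eval p.rep f = 0 → ∃ j : Fin 5, eval p.rep (pderiv j f) ≠ 0)
    (hfin : (SingCI5 f g).Finite)
    (hcard : 4 * (SingCI5 f g).ncard ≤ (2 * r + n - 2) * r) :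
    ∀ P ∈ SingCI5 f g, ∃ F : MvPolynomial (Fin 5) ℂ,
      F.IsHomogeneous (3 * r + n - 5) ∧
      (∀ Q ∈ SingCI5 f g, Q ≠ P → VanishesAt F Q) ∧ ¬ VanishesAt F P := by
  intro P hP
  classical
  letI : Fintype (SingCI5 f g) := hfin.fintype
  -- a linear form not vanishing at any of the points
  obtain ⟨l, hl⟩ : ∃ l : Fin 5 → ℂ, ∀ i : SingCI5 f g, l ⬝ᵥ i.1.rep ≠ 0 := by
    obtain ⟨l, hl⟩ := Module.Dual.exists_forall_ne_zero_of_forall_exists (K := ℂ)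
      (M := Fin 5 → ℂ)
      (fun i : SingCI5 f g => (dotProductBilin ℂ ℂ).flip i.1.rep) (by
        intro i
        obtain ⟨k, hk⟩ : ∃ k, i.1.rep k ≠ 0 := Function.ne_iff.1 i.1.rep_nonzero
        exact ⟨Pi.single k 1, by simpa [dotProductBilin] using hk⟩)
    exact ⟨l, fun i => hl i⟩
  let v : SingCI5 f g → Fin 5 → ℂ := fun i => (l ⬝ᵥ i.1.rep)⁻¹ • i.1.rep
  have hv1 : ∀ i, l ⬝ᵥ v i = 1 := by
    intro i
    simp only [v, dotProduct_smul, smul_eq_mul]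
    exact inv_mul_cancel₀ (hl i)
  have hcore : Z v ((2 * r + n - 2) + r - 2) = ⊥ := by
    apply core v l hv1
    · intro i i' hne
      have hli := Projectivization.linearIndependent_pair_iff_ne.2
        (fun h => hne (Subtype.ext h.symm) : i'.1 ≠ i.1)
      rw [LinearIndependent.pair_iff' i'.1.rep_nonzero] at hli
      have hnot : i.1.rep ∉ Submodule.span ℂ {i'.1.rep} := by
        rw [Submodule.mem_span_singleton]
        rintro ⟨a, ha⟩
        exact hli a ha
      obtain ⟨φ, h1, h2⟩ := Submodule.exists_dual_map_eq_bot_of_notMem hnot inferInstance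
      obtain ⟨a, ha⟩ := exists_lin φ
      refine ⟨a, ?_, ?_⟩
      · have : φ i'.1.rep = 0 := by
          have : φ i'.1.rep ∈ Submodule.map φ (Submodule.span ℂ {i'.1.rep}) :=
            Submodule.mem_map_of_mem (Submodule.mem_span_singleton_self _)
          rw [h2] at this
          simpa using this
        simp [v, dotProduct_smul, ha, this]
      · simp only [v, ha, map_smul, smul_eq_mul]
        exact mul_ne_zero (inv_ne_zero (hl i)) h1
    · intro q hq hlq
      obtain ⟨t, ht⟩ := Projectivization.exists_smul_eq_mk_rep ℂ q hq
      have hp : (Projectivization.mk ℂ q hq : ProjPt 4) ∉ SingCI5 f g := by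
        intro hp
        apply hl ⟨_, hp⟩
        change l ⬝ᵥ (Projectivization.mk ℂ q hq).rep = 0
        rw [← ht, Units.smul_def, dotProduct_smul, hlq, smul_zero]
      obtain ⟨F, hF, hF0, hFp⟩ := sing_cut n r f g hf hg hn (by omega) _ hp
      refine ⟨F, hF, ?_, ?_⟩
      · intro i
        simp only [v]
        rw [hom_eval_smul hF, hF0 _ i.2, mul_zero]
      · intro h0
        apply hFp
        change eval (Projectivization.mk ℂ q hq).rep F = 0
        rw [← ht, Units.smul_def, hom_eval_smul hF, h0, mul_zero]
    · omega
    · omega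
    · rw [← Nat.card_eq_fintype_card]
      exact hcard
  -- duality
  let E : homogeneousSubmodule (Fin 5) ℂ (3 * r + n - 5) →ₗ[ℂ] (SingCI5 f g → ℂ) :=
    { toFun := fun F i => eval (v i) F.1
      map_add' := by intro F G; ext i; simp
      map_smul' := by intro t F; ext i; simp }
  have hE : LinearMap.range E = ⊤ := by
    by_contra hne
    obtain ⟨φ, h1, h2⟩ := Submodule.exists_dual_map_eq_bot_of_lt_top
      (lt_top_iff_ne_top.2 hne) inferInstance
    have hφ : ∀ w, φ w = ∑ i, φ (Pi.single i 1) * w i := by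
      intro w
      rw [LinearMap.pi_apply_eq_sum_univ φ w]
      apply Finset.sum_congr rfl
      intro k _
      rw [mul_comm, smul_eq_mul]
      congr 2
      ext x
      simp [Pi.single_apply, eq_comm]
    have hc : (fun i => φ (Pi.single i 1)) ∈ Z v ((2 * r + n - 2) + r - 2) := by
      rw [show (2 * r + n - 2) + r - 2 = (3 * r + n - 5) + 1 by omega, mem_Z_succ]
      intro F hF
      rw [pr_apply, ← hφ (fun i => eval (v i) F)]
      have : φ (E ⟨F, hF⟩) ∈ Submodule.map φ (LinearMap.range E) :=
        Submodule.mem_map_of_mem (LinearMap.mem_range_self _ _)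
      rw [h2] at this
      exact (Submodule.mem_bot ℂ).1 this
    rw [hcore, Submodule.mem_bot] at hc
    apply h1
    ext w
    simp [congrFun hc]
  obtain ⟨⟨F, hF⟩, hFE⟩ : Pi.single (⟨P, hP⟩ : SingCI5 f g) (1 : ℂ) ∈ LinearMap.range E := by
    rw [hE]; trivial
  have hFv : ∀ i : SingCI5 f g, eval i.1.rep F =
      (l ⬝ᵥ i.1.rep) ^ (3 * r + n - 5) * (Pi.single (⟨P, hP⟩ : SingCI5 f g) (1 : ℂ) : _ → ℂ) i := by
    intro i
    rw [← hFE]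
    change _ = _ * eval (v i) F
    rw [← hom_eval_smul hF]
    simp only [v]
    rw [smul_smul, mul_inv_cancel₀ (hl i), one_smul]
  refine ⟨F, hF, ?_, ?_⟩
  · intro Q hQ hne
    have := hFv ⟨Q, hQ⟩
    rw [Pi.single_eq_of_ne (fun h => hne (congrArg Subtype.val h)), mul_zero] at this
    exact this
  · intro h0
    have := hFv ⟨P, hP⟩
    rw [Pi.single_eq_same, mul_one] at this
    unfold VanishesAt at h0
    exact pow_ne_zero _ (hl ⟨P, hP⟩) (this.symm.trans h0)
end
end

section
/- Let f, g ∈ ℂ[x_0,…,x_5] be homogeneous of degrees n and k respectively with n ≥ k ≥ 1, let X = {f = g = 0} ⊂ ℙ⁵(ℂ), and suppose that Sing(X) is finite. Then there exist λ ∈ ℂ \ {0} and a homogeneous polynomial h ∈ ℂ[x_0,…,x_5] of degree n−k such that, setting f̂ = λf + hg, one has {f̂ = g = 0} = X and every point P ∈ ℙ⁵(ℂ) at which f̂ and all partial derivatives ∂f̂/∂x_j vanish belongs to Sing(X). -/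
open MvPolynomial

noncomputable section

/-- The `2 × 6` Jacobian matrix of `f, g` evaluated at `v`. -/
def Jac6 (f g : MvPolynomial (Fin 6) ℂ) (v : Fin 6 → ℂ) : Matrix (Fin 2) (Fin 6) ℂ :=
  Matrix.of ![fun j : Fin 6 => eval v (pderiv j f), fun j : Fin 6 => eval v (pderiv j g)]

/-- The singular locus of `X = {f = g = 0} ⊂ ℙ⁵(ℂ)`: points of `X` where the Jacobian
matrix has rank at most `1`. -/
def SingCI6 (f g : MvPolynomial (Fin 6) ℂ) : Set (ProjPt 5) :=
  {p : ProjPt 5 | eval p.rep f = 0 ∧ eval p.rep g = 0 ∧ (Jac6 f g p.rep).rank ≤ 1}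

open TensorProduct in
lemma isAlgebraic_of_D_eq_zero {K : Type} [Field K] [Algebra ℂ K] (φ : K)
    (h : KaehlerDifferential.D ℂ K φ = 0) : IsAlgebraic ℂ φ := by
  by_contra htr
  have hinj : Function.Injective (Polynomial.aeval φ : Polynomial ℂ →ₐ[ℂ] K) :=
    transcendental_iff_injective.mp htr
  let : Algebra (Polynomial ℂ) K := (Polynomial.aeval φ : Polynomial ℂ →ₐ[ℂ] K).toAlgebra
  have : IsScalarTower ℂ (Polynomial ℂ) K := IsScalarTower.of_algHom _
  have : FaithfulSMul (Polynomial ℂ) K := (faithfulSMul_iff_algebraMap_injective _ _).mpr hinj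
  let : Algebra (FractionRing (Polynomial ℂ)) K := FractionRing.liftAlgebra _ _
  have : IsScalarTower (Polynomial ℂ) (FractionRing (Polynomial ℂ)) K :=
    FractionRing.isScalarTower_liftAlgebra _ _
  have : CharZero (FractionRing (Polynomial ℂ)) := by
    exact charZero_of_injective_algebraMap
      (R := Polynomial ℂ) (IsFractionRing.injective _ _)
  have : Algebra.FormallySmooth (FractionRing (Polynomial ℂ)) K := by
    obtain ⟨s, hs⟩ := exists_isTranscendenceBasis (FractionRing (Polynomial ℂ)) K
    have halg := hs.isAlgebraic_field
    exact Algebra.FormallySmooth.of_algebraicIndependent_of_isSeparable hs.1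
  have : Algebra.FormallySmooth (Polynomial ℂ) (FractionRing (Polynomial ℂ)) :=
    .of_isLocalization (nonZeroDivisors _)
  have : Algebra.FormallySmooth (Polynomial ℂ) K := .comp _ (FractionRing (Polynomial ℂ)) _
  have hX : KaehlerDifferential.mapBaseChange ℂ (Polynomial ℂ) K
      (1 ⊗ₜ KaehlerDifferential.D ℂ (Polynomial ℂ) Polynomial.X) = 0 := by
    rw [KaehlerDifferential.mapBaseChange_tmul, one_smul, KaehlerDifferential.map_D]
    have : algebraMap (Polynomial ℂ) K Polynomial.X = φ := by
      change Polynomial.aeval φ Polynomial.X = φ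
      simp
    rw [this, h]
  obtain ⟨x, hx⟩ := (Algebra.H1Cotangent.exact_δ_mapBaseChange ℂ (Polynomial ℂ) K _).mp hX
  rw [Subsingleton.elim x 0, map_zero] at hx
  have h2 := congrArg (LinearMap.lTensor K
    (KaehlerDifferential.polynomialEquiv ℂ).toLinearMap) hx
  have h3 := congrArg (TensorProduct.rid (Polynomial ℂ) K) h2
  simp at h3


lemma D_map_eq_sum {σ : Type} [Fintype σ] [DecidableEq σ] {K : Type} [Field K] [Algebra ℂ K]
    (q : MvPolynomial σ ℂ →ₐ[ℂ] K) (x : MvPolynomial σ ℂ) :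
    KaehlerDifferential.D ℂ K (q x)
      = ∑ i, q (pderiv i x) • KaehlerDifferential.D ℂ K (q (X i)) := by
  induction x using MvPolynomial.induction_on with
  | C a =>
    have : q (C a) = algebraMap ℂ K a := q.commutes a
    rw [this]; simp
  | add x y hx hy => simp [hx, hy, add_smul, Finset.sum_add_distrib]
  | mul_X x i hx =>
    have h : ∀ j, q (pderiv j (x * X i)) • KaehlerDifferential.D ℂ K (q (X j))
        = (if j = i then q x • KaehlerDifferential.D ℂ K (q (X i)) else 0)
          + q (X i) • q (pderiv j x) • KaehlerDifferential.D ℂ K (q (X j)) := by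
      intro j
      rw [Derivation.leibniz, pderiv_X, smul_eq_mul, smul_eq_mul, map_add, map_mul, map_mul,
        add_smul, mul_smul (q (X i))]
      congr 1
      by_cases hij : j = i
      · subst hij; simp
      · rw [if_neg hij, Pi.single_eq_of_ne' hij]; simp
    rw [Finset.sum_congr rfl (fun j _ => h j), Finset.sum_add_distrib, ← Finset.smul_sum, ← hx,
      map_mul, Derivation.leibniz]
    simp

lemma const_of_map {σ : Type} [Fintype σ] [DecidableEq σ] (S : Finset σ)
    {K : Type} [Field K] [Algebra ℂ K] (q : MvPolynomial σ ℂ →ₐ[ℂ] K)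
    (F G : MvPolynomial σ ℂ)
    (h1 : ∀ i ∉ S, q (X i) = 0)
    (h2 : ∀ j ∈ S, q (pderiv j F * G - F * pderiv j G) = 0) (hG : q G ≠ 0) :
    ∃ c : ℂ, q (F - C c * G) = 0 := by
  have halg : IsAlgebraic ℂ (q F / q G) := by
    apply isAlgebraic_of_D_eq_zero
    rw [Derivation.leibniz_div, D_map_eq_sum, D_map_eq_sum q G, Finset.smul_sum, Finset.smul_sum,
      ← Finset.sum_sub_distrib, Finset.smul_sum]
    apply Finset.sum_eq_zero
    intro j _
    by_cases hj : j ∈ S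
    · have := h2 j hj
      rw [map_sub, map_mul, map_mul] at this
      rw [smul_smul, smul_smul, ← sub_smul]
      rw [show q G * q (pderiv j F) - q F * q (pderiv j G) = 0 by linear_combination this]
      simp
    · rw [h1 j hj]; simp
  obtain ⟨c, hc⟩ : ∃ c : ℂ, algebraMap ℂ K c = q F / q G := by
    have hm : q F / q G ∈ algebraicClosure ℂ K := mem_algebraicClosure_iff.mpr halg
    rw [IntermediateField.eq_bot_of_isAlgClosed_of_isAlgebraic (algebraicClosure ℂ K)] at hm
    exact IntermediateField.mem_bot.mp hm
  refine ⟨c, ?_⟩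
  have : q (C c) = algebraMap ℂ K c := q.commutes c
  rw [map_sub, map_mul, this, hc, div_mul_cancel₀ _ hG, sub_self]

lemma const_of_prime {σ : Type} [Fintype σ] [DecidableEq σ] (S : Finset σ)
    (F G : MvPolynomial σ ℂ) (p : Ideal (MvPolynomial σ ℂ)) (hp : p.IsPrime)
    (h1 : ∀ i ∉ S, (X i : MvPolynomial σ ℂ) ∈ p)
    (h2 : ∀ j ∈ S, pderiv j F * G - F * pderiv j G ∈ p) (hG : G ∉ p) :
    ∃ c : ℂ, F - C c * G ∈ p := by
  let q : MvPolynomial σ ℂ →ₐ[ℂ] FractionRing (MvPolynomial σ ℂ ⧸ p) :=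
    (IsScalarTower.toAlgHom ℂ (MvPolynomial σ ℂ ⧸ p) _).comp (Ideal.Quotient.mkₐ ℂ p)
  have hq : ∀ x, q x = 0 ↔ x ∈ p := by
    intro x
    change algebraMap (MvPolynomial σ ℂ ⧸ p) (FractionRing (MvPolynomial σ ℂ ⧸ p))
      (Ideal.Quotient.mk p x) = 0 ↔ _
    rw [FaithfulSMul.algebraMap_eq_zero_iff, Ideal.Quotient.eq_zero_iff_mem]
  obtain ⟨c, hc⟩ := const_of_map S q F G (fun i hi => (hq _).mpr (h1 i hi))
    (fun j hj => (hq _).mpr (h2 j hj)) (fun h => hG ((hq _).mp h))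
  exact ⟨c, (hq _).mp hc⟩

/-- Bertini for a pencil on a coordinate subspace, away from `G = 0`. -/
lemma pencil {σ : Type} [Fintype σ] [DecidableEq σ] (S : Finset σ) (F G : MvPolynomial σ ℂ) :
    ∃ c : ℂ, ∀ v : σ → ℂ, (∀ i ∉ S, v i = 0) → eval v G ≠ 0 →
      eval v (F + C c * G) = 0 → ¬ ∀ j ∈ S, eval v (pderiv j (F + C c * G)) = 0 := by
  let I : Ideal (MvPolynomial σ ℂ) := Ideal.span
    ((X '' {i | i ∉ S}) ∪ ((fun j => pderiv j F * G - F * pderiv j G) '' {j | j ∈ S}))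
  have hfin : I.minimalPrimes.Finite := Ideal.finite_minimalPrimes_of_isNoetherianRing _ I
  have hex : ∀ p ∈ I.minimalPrimes, ∃ c : ℂ, G ∉ p → F - C c * G ∈ p := by
    intro p hp
    by_cases hG : G ∈ p
    · exact ⟨0, fun h => absurd hG h⟩
    · have hI : I ≤ p := hp.1.2
      obtain ⟨c, hc⟩ := const_of_prime S F G p hp.1.1
        (fun i hi => hI (Ideal.subset_span (Or.inl ⟨i, hi, rfl⟩)))
        (fun j hj => hI (Ideal.subset_span (Or.inr ⟨j, hj, rfl⟩))) hG
      exact ⟨c, fun _ => hc⟩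
  choose! c hc using hex
  obtain ⟨a, ha⟩ := ((hfin.image (fun p => - c p)).infinite_compl).nonempty
  refine ⟨a, fun v hv hG h0 hd => ha ?_⟩
  have hIv : I ≤ RingHom.ker (eval v) := by
    rw [Ideal.span_le]
    rintro x (⟨i, hi, rfl⟩ | ⟨j, hj, rfl⟩)
    · simpa [RingHom.mem_ker] using hv i hi
    · have := hd j hj
      simp at this h0
      simp only [SetLike.mem_coe, RingHom.mem_ker, map_sub, map_mul]
      linear_combination eval v G * this - eval v (pderiv j G) * h0
  have : (RingHom.ker (eval v)).IsPrime := RingHom.ker_isPrime _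
  obtain ⟨p, hp, hpv⟩ := Ideal.exists_minimalPrimes_le hIv
  have hm := hpv (hc p hp (fun h => hG (hpv h)))
  simp [RingHom.mem_ker] at hm h0
  refine ⟨p, hp, ?_⟩
  have : (a + c p) * eval v G = 0 := by linear_combination h0 - hm
  rcases mul_eq_zero.mp this with h | h
  · change - c p = a
    linear_combination -h
  · exact absurd h hG

/-- Induction over coordinate subspaces. -/
lemma bertini {σ : Type} [Fintype σ] [DecidableEq σ] (F g : MvPolynomial σ ℂ) (d : ℕ) (hd : d ≠ 0)
    (S : Finset σ) :
    ∃ h : MvPolynomial σ ℂ, h.IsHomogeneous d ∧ ∀ v : σ → ℂ, v ≠ 0 → (∀ i ∉ S, v i = 0) →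
      eval v g ≠ 0 → eval v (F + h * g) = 0 →
      ¬ ∀ j ∈ S, eval v (pderiv j (F + h * g)) = 0 := by
  induction S using Finset.induction_on with
  | empty =>
    refine ⟨0, isHomogeneous_zero _ _ _, fun v hv h => absurd (funext fun i => h i (by simp)) hv⟩
  | insert i S hi ih =>
    obtain ⟨h, hh, H⟩ := ih
    obtain ⟨c, hc⟩ := pencil (insert i S) (F + h * g) (X i ^ d * g)
    refine ⟨h + C c * X i ^ d, hh.add ?_, ?_⟩
    · have := (isHomogeneous_C σ c).mul ((isHomogeneous_X ℂ i).pow d)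
      simpa using this
    · intro v hv hS hg h0 hder
      have e : F + (h + C c * X i ^ d) * g = F + h * g + C c * (X i ^ d * g) := by ring
      rw [e] at h0 hder
      by_cases hvi : v i = 0
      · refine H v hv ?_ hg ?_ ?_
        · intro j hj
          by_cases hji : j = i
          · rw [hji, hvi]
          · exact hS j (by simp [hji, hj])
        · simpa [hvi, hd] using h0
        · intro j hj
          have := hder j (Finset.mem_insert_of_mem hj)
          have hij : i ≠ j := fun e => hi (e ▸ hj)
          rw [map_add, map_add, Derivation.leibniz (pderiv j) (C c),
            Derivation.leibniz (pderiv j) (X i ^ d), Derivation.leibniz_pow,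
            pderiv_X_of_ne hij] at this
          simpa [hvi, hd] using this
      · exact hc v hS (by simp [hvi, hg]) h0 hder

lemma bertini' {σ : Type} [Fintype σ] [DecidableEq σ] (F g : MvPolynomial σ ℂ) (d : ℕ) :
    ∃ h : MvPolynomial σ ℂ, h.IsHomogeneous d ∧ ∀ v : σ → ℂ, v ≠ 0 →
      eval v g ≠ 0 → eval v (F + h * g) = 0 →
      ¬ ∀ j, eval v (pderiv j (F + h * g)) = 0 := by
  by_cases hd : d = 0
  · subst hd
    obtain ⟨c, hc⟩ := pencil Finset.univ F g
    exact ⟨C c, isHomogeneous_C _ _, fun v _ hg h0 h => hc v (by simp) hg h0 (fun j _ => h j)⟩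
  · obtain ⟨h, hh, H⟩ := bertini F g d hd Finset.univ
    exact ⟨h, hh, fun v hv hg h0 h => H v hv (by simp) hg h0 (fun j _ => h j)⟩

theorem stmt_8 (n k : ℕ) (f g : MvPolynomial (Fin 6) ℂ)
    (hf : f.IsHomogeneous n) (hg : g.IsHomogeneous k)
    (hk : 1 ≤ k) (hkn : k ≤ n)
    (hfin : (SingCI6 f g).Finite) :
    ∃ (lam : ℂ) (h : MvPolynomial (Fin 6) ℂ), lam ≠ 0 ∧ h.IsHomogeneous (n - k) ∧
      ({p : ProjPt 5 | eval p.rep (C lam * f + h * g) = 0 ∧ eval p.rep g = 0}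
        = {p : ProjPt 5 | eval p.rep f = 0 ∧ eval p.rep g = 0}) ∧
      ∀ p : ProjPt 5,
        (eval p.rep (C lam * f + h * g) = 0 ∧
          ∀ j : Fin 6, eval p.rep (pderiv j (C lam * f + h * g)) = 0) →
        p ∈ SingCI6 f g := by
  obtain ⟨h, hh, H⟩ := bertini' f g (n - k)
  refine ⟨1, h, one_ne_zero, hh, ?_, ?_⟩
  · ext p
    simp only [Set.mem_setOf_eq, map_add, map_mul, eval_C, one_mul]
    constructor
    · rintro ⟨h1, h2⟩
      rw [h2] at h1
      exact ⟨by simpa using h1, h2⟩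
    · rintro ⟨h1, h2⟩
      rw [h1, h2]
      simp
  · rintro p ⟨h0, hd⟩
    rw [C_1, one_mul] at h0 hd
    have hg0 : eval p.rep g = 0 := by
      by_contra hne
      exact H p.rep p.rep_nonzero hne h0 hd
    have hf0 : eval p.rep f = 0 := by
      rw [map_add, map_mul, hg0, mul_zero, add_zero] at h0
      exact h0
    refine ⟨hf0, hg0, ?_⟩
    have hfac : Jac6 f g p.rep = Matrix.vecMulVec ![- eval p.rep h, 1]
        (fun j : Fin 6 => eval p.rep (pderiv j g)) := by
      ext i j
      have := hd j
      rw [map_add, Derivation.leibniz, map_add, map_add, smul_eq_mul, smul_eq_mul, map_mul,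
        map_mul, hg0, zero_mul, add_zero] at this
      fin_cases i
      · simp [Jac6, Matrix.vecMulVec_apply]
        linear_combination this
      · simp [Jac6, Matrix.vecMulVec_apply]
    rw [hfac]
    exact Matrix.rank_vecMulVec_le _ _
end
end

section
/- Let f, g ∈ ℂ[x_0,…,x_4] be homogeneous of degrees n and 2r respectively with 2r ≥ n ≥ 2, such that the hypersurface {f = 0} ⊂ ℙ⁴ is smooth; let S = {f = g = 0} ⊂ ℙ⁴(ℂ) and suppose that Sing(S) is finite. Then there exist λ ∈ ℂ \ {0} and a homogeneous polynomial h ∈ ℂ[x_0,…,x_4] of degree 2r−n such that, setting ĝ = λg + hf, one has {f = ĝ = 0} = S and every point P ∈ ℙ⁴(ℂ) at which ĝ and all partial derivatives ∂ĝ/∂x_j vanish belongs to Sing(S). -/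
open MvPolynomial

noncomputable section

lemma exists_deriv_aux (s : Set ℂ) (hs : s.Finite) :
    ∃ (c : Fin 5 → ℂ) (D : Fin 5 → Derivation ℤ ℂ ℂ),
      (∀ i, ∀ a ∈ s, D i a = 0) ∧ ∀ i j, D i (c j) = if i = j then 1 else 0 := by
  classical
  let K := Subfield.closure s
  have hK : Cardinal.mk K ≤ Cardinal.aleph0 :=
    (Subfield.cardinalMk_closure_le_max s).trans (by
      simpa using (Cardinal.le_aleph0_iff_set_countable.2 hs.countable))
  obtain ⟨ι, v, hv⟩ := exists_isTranscendenceBasis' K ℂ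
  have hι : Infinite ι := by
    have h := IsAlgClosed.cardinal_eq_cardinal_transcendence_basis_of_aleph0_lt v hv hK
      (by rw [Cardinal.mk_complex]; exact Cardinal.aleph0_lt_continuum)
    rw [Cardinal.infinite_iff]
    simp only [Cardinal.lift_id] at h
    rw [← h, Cardinal.mk_complex]
    exact Cardinal.aleph0_le_continuum
  let e : Fin 5 ↪ ι := Fin.valEmbedding.trans (Infinite.natEmbedding ι)
  let : Algebra (MvPolynomial ι K) ℂ := (aeval (R := K) v).toRingHom.toAlgebra
  have hmap : ∀ P : MvPolynomial ι K, algebraMap (MvPolynomial ι K) ℂ P = aeval v P := fun _ => rfl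
  have : IsScalarTower K (MvPolynomial ι K) ℂ := .of_algebraMap_eq fun x => by
    rw [hmap]; simp [MvPolynomial.algebraMap_eq]
  have : FaithfulSMul (MvPolynomial ι K) ℂ :=
    (faithfulSMul_iff_algebraMap_injective _ _).2 hv.1
  let := FractionRing.liftAlgebra (MvPolynomial ι K) ℂ
  have alg : Algebra.IsAlgebraic (MvPolynomial ι K) ℂ := by
    have := hv.isAlgebraic
    refine Algebra.IsAlgebraic.of_ringHom_of_comp_eq
      (R := MvPolynomial ι K) (S := Algebra.adjoin K (Set.range v)) (A := ℂ) (B := ℂ)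
      hv.1.aevalEquiv.toRingEquiv.toRingHom (RingHom.id ℂ) hv.1.aevalEquiv.surjective
      Function.injective_id ?_
    ext P
    · simp [hmap]
    · simp [hmap]
  have alg' : Algebra.IsAlgebraic (FractionRing (MvPolynomial ι K)) ℂ :=
    (IsFractionRing.comap_isAlgebraic_iff (A := MvPolynomial ι K)).1 alg
  have : Algebra.FormallyEtale (FractionRing (MvPolynomial ι K)) ℂ :=
    Algebra.FormallyEtale.of_isSeparable _ _
  have : Algebra.FormallyEtale (MvPolynomial ι K) (FractionRing (MvPolynomial ι K)) :=
    .of_isLocalization (nonZeroDivisors _)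
  have : Algebra.FormallyEtale (MvPolynomial ι K) ℂ :=
    .comp _ (FractionRing (MvPolynomial ι K)) _
  have key : ∀ w : ι → ℂ, ∃ D : Derivation K ℂ ℂ, ∀ i, D (v i) = w i := by
    intro w
    let d : Derivation K (MvPolynomial ι K) ℂ := mkDerivation K w
    let l := d.liftKaehlerDifferential
    let L := LinearMap.liftBaseChange ℂ l
    let M := L ∘ₗ
      (KaehlerDifferential.tensorKaehlerEquivOfFormallyEtale K (MvPolynomial ι K) ℂ).symm.toLinearMap
    refine ⟨M.compDer (KaehlerDifferential.D K ℂ), fun i => ?_⟩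
    have : v i = algebraMap (MvPolynomial ι K) ℂ (X i) := by rw [hmap]; simp
    rw [this]
    simp [M, L, l, d, KaehlerDifferential.tensorKaehlerEquivOfFormallyEtale_symm_D_algebraMap, mkDerivation_X]
  choose D hD using fun i : Fin 5 => key (fun k => if e i = k then 1 else 0)
  refine ⟨fun j => v (e j), fun i => (D i).restrictScalars ℤ, fun i a ha => ?_, fun i j => ?_⟩
  · exact (D i).map_algebraMap (⟨a, Subfield.subset_closure ha⟩ : K)
  · simp [hD]

lemma E_aux (D : Derivation ℤ ℂ ℂ) (p : Fin 5 → ℂ) : ∃ E : MvPolynomial (Fin 5) ℂ → ℂ,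
    (∀ F, E F = D (eval p F) - ∑ j, eval p (pderiv j F) * D (p j)) ∧
    (∀ F G, E (F + G) = E F + E G) ∧
    (∀ F G, E (F * G) = E F * eval p G + eval p F * E G) ∧
    (∀ a, E (C a) = D a) ∧ (∀ j, E (X j) = 0) := by
  refine ⟨_, fun F => rfl, fun F G => ?_, fun F G => ?_, fun a => ?_, fun j => ?_⟩
  · simp [add_mul, Finset.sum_add_distrib]; ring
  · simp only [map_mul, Derivation.leibniz, smul_eq_mul, map_add, add_mul, Finset.sum_add_distrib, sub_mul, mul_sub, Finset.sum_mul, Finset.mul_sum]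
    have h1 : ∀ j, eval p F * eval p (pderiv j G) * D (p j) = eval p F * (eval p (pderiv j G) * D (p j)) := fun j => by ring
    have h2 : ∀ j, eval p G * eval p (pderiv j F) * D (p j) = (eval p (pderiv j F) * D (p j)) * eval p G := fun j => by ring
    simp only [h1, h2]; ring
  · simp
  · simp [pderiv_X, Pi.single_apply, apply_ite]

lemma E_aux2 (D : Derivation ℤ ℂ ℂ) (p : Fin 5 → ℂ) : ∃ E : MvPolynomial (Fin 5) ℂ → ℂ,
    (∀ F, E F = D (eval p F) - ∑ j, eval p (pderiv j F) * D (p j)) ∧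
    (∀ F G, E (F + G) = E F + E G) ∧
    (∀ F G, E (F * G) = E F * eval p G + eval p F * E G) ∧
    (∀ a j d, E (C a * X j ^ d) = D a * p j ^ d) ∧ 
    (∀ F, (∀ m, D (coeff m F) = 0) → E F = 0) ∧ 
    (∀ F : Fin 5 → MvPolynomial (Fin 5) ℂ, E (∑ i, F i) = ∑ i, E (F i)) := by
  obtain ⟨E, h0, hadd, hmul, hC, hX⟩ := E_aux D p
  have hXp : ∀ j d, E (X j ^ d) = 0 := by
    intro j d
    induction d with
    | zero => rw [pow_zero, ← C_1, hC]; simp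
    | succ d ih => rw [pow_succ, hmul, ih, hX]; simp
  have hz : E 0 = 0 := by simp [h0]
  have hsum : ∀ {α : Type} (t : Finset α) (F : α → MvPolynomial (Fin 5) ℂ),
      E (∑ i ∈ t, F i) = ∑ i ∈ t, E (F i) := by
    intro α t F
    exact map_sum (⟨⟨E, hz⟩, hadd⟩ : MvPolynomial (Fin 5) ℂ →+ ℂ) F t
  refine ⟨E, h0, hadd, hmul, fun a j d => ?_, fun F hF => ?_, fun F => hsum _ F⟩
  · rw [hmul, hXp, hC]; simp
  · have hprod : ∀ (t : Finset (Fin 5)) (m : Fin 5 →₀ ℕ), E (∏ j ∈ t, X j ^ m j) = 0 := by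
      intro t m
      induction t using Finset.induction_on with
      | empty => rw [Finset.prod_empty, ← C_1, hC]; simp
      | insert a t ha ih => rw [Finset.prod_insert ha, hmul, hXp, ih]; simp
    rw [F.as_sum, hsum]
    refine Finset.sum_eq_zero fun m _ => ?_
    rw [monomial_eq, hmul, hC, hF, Finsupp.prod, hprod]; simp

theorem stmt_9 (n r : ℕ) (f g : MvPolynomial (Fin 5) ℂ)
    (hf : f.IsHomogeneous n) (hg : g.IsHomogeneous (2 * r))
    (hn : 2 ≤ n) (hrn : n ≤ 2 * r)
    (hFsmooth : ∀ p : ProjPt 4, eval p.rep f = 0 → ∃ j : Fin 5, eval p.rep (pderiv j f) ≠ 0)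
    (hfin : (SingCI5 f g).Finite) :
    ∃ (lam : ℂ) (h : MvPolynomial (Fin 5) ℂ), lam ≠ 0 ∧ h.IsHomogeneous (2 * r - n) ∧
      ({p : ProjPt 4 | eval p.rep f = 0 ∧ eval p.rep (C lam * g + h * f) = 0}
        = {p : ProjPt 4 | eval p.rep f = 0 ∧ eval p.rep g = 0}) ∧
      ∀ p : ProjPt 4,
        (eval p.rep (C lam * g + h * f) = 0 ∧
          ∀ j : Fin 5, eval p.rep (pderiv j (C lam * g + h * f)) = 0) →
        p ∈ SingCI5 f g := by
  classical
  obtain ⟨c, D, hD, hDc⟩ := exists_deriv_aux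
    ((Set.image f.coeff (f.support : Set (Fin 5 →₀ ℕ))) ∪ (Set.image g.coeff (g.support : Set (Fin 5 →₀ ℕ))))
    ((f.support.finite_toSet.image _).union (g.support.finite_toSet.image _))
  have hDf : ∀ i m, D i (coeff m f) = 0 := by
    intro i m
    by_cases h : coeff m f = 0
    · rw [h, map_zero]
    · exact hD i _ (Or.inl ⟨m, by simpa using h, rfl⟩)
  have hDg : ∀ i m, D i (coeff m g) = 0 := by
    intro i m
    by_cases h : coeff m g = 0
    · rw [h, map_zero]
    · exact hD i _ (Or.inr ⟨m, by simpa using h, rfl⟩)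
  let d := 2 * r - n
  let h : MvPolynomial (Fin 5) ℂ := ∑ j, C (c j) * X j ^ d
  have hh : h.IsHomogeneous d := by
    refine IsHomogeneous.sum _ _ _ fun j _ => ?_
    simpa using (isHomogeneous_C (Fin 5) (c j)).mul ((isHomogeneous_X ℂ j).pow d)
  refine ⟨1, h, one_ne_zero, hh, ?_, ?_⟩
  · ext p
    simp only [Set.mem_ofPred_eq, map_add, map_mul, eval_C, one_mul]
    constructor
    · rintro ⟨h1, h2⟩
      exact ⟨h1, by simpa [h1] using h2⟩
    · rintro ⟨h1, h2⟩
      exact ⟨h1, by simp [h1, h2]⟩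
  · rintro p ⟨hp, hdp⟩
    rw [C_1, one_mul] at hp hdp
    have hf0 : eval p.rep f = 0 := by
      obtain ⟨i, hi⟩ : ∃ i, p.rep i ≠ 0 := Function.ne_iff.1 p.rep_nonzero
      obtain ⟨E, h0, hadd, hmul, hCX, hker, hsum⟩ := E_aux2 (D i) p.rep
      have e1 : E (g + h * f) = 0 := by
        rw [h0, hp]
        simp only [hdp]
        simp
      have e2 : E h = p.rep i ^ d := by
        rw [hsum]
        simp [hCX, hDc]
      rw [hadd, hmul, hker g (hDg i), hker f (hDf i), e2] at e1
      simp only [zero_add, mul_zero, add_zero] at e1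
      exact (mul_eq_zero.1 e1).resolve_left (pow_ne_zero _ hi)
    have hg0 : eval p.rep g = 0 := by simpa [hf0] using hp
    refine ⟨hf0, hg0, ?_⟩
    have hJ : Jac5 f g p.rep = Matrix.vecMulVec ![1, - eval p.rep h]
        (fun j => eval p.rep (pderiv j f)) := by
      ext a j
      have := hdp j
      simp only [map_add, Derivation.leibniz, smul_eq_mul, map_mul, hf0, zero_mul, add_zero] at this
      fin_cases a
      · simp [Jac5, Matrix.vecMulVec]
      · simp only [Jac5, Matrix.vecMulVec]
        simp
        linear_combination this
    rw [hJ]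
    exact Matrix.rank_vecMulVec_le _ _
end
end

section
/- Let n, k be integers with n ≥ 5, k ≥ 2 and n ≥ k, and let Σ ⊂ ℙ²(ℂ) be a finite set such that 5·|Σ| ≤ (n+k−2)(n−1) and such that, for every integer t ≥ 1 and every nonzero homogeneous polynomial C of degree t in ℂ[x_0,x_1,x_2], at most t(n+k−2) points of Σ lie on the plane curve {C = 0}. Then for every point P ∈ Σ there exists a homogeneous polynomial of degree 2n+k−6 in ℂ[x_0,x_1,x_2] that vanishes at every point of Σ \ {P} and does not vanish at P. -/
open MvPolynomial

noncomputable section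

lemma aux_finrank (n : ℕ) :
    Module.finrank ℂ (homogeneousSubmodule (Fin 3) ℂ n) = (n+2).choose 2 := by
  classical
  have h1 : homogeneousSubmodule (Fin 3) ℂ n = Submodule.span ℂ
      (((Finset.univ.finsuppAntidiag n : Finset (Fin 3 →₀ ℕ)).image
        (fun s => (monomial s (1 : ℂ))) : Finset _) : Set (MvPolynomial (Fin 3) ℂ)) := by
    rw [homogeneousSubmodule_eq_finsupp_supported, AddMonoidAlgebra.supported_eq_span_single]
    congr 1
    ext p
    simp [Finsupp.degree_eq_sum, MvPolynomial.single_eq_monomial]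
  have hinj : Function.Injective (fun s : Fin 3 →₀ ℕ => (monomial s (1 : ℂ))) := by
    simpa using (basisMonomials (Fin 3) ℂ).injective
  rw [h1, finrank_span_finset_eq_card, Finset.card_image_of_injective _ hinj,
    Finset.card_finsuppAntidiag_nat_eq_choose]
  · simp only [Finset.card_univ, Fintype.card_fin]
    rw [show 3 + n - 1 = n + 2 by omega, Nat.choose_symm_add]
  · have := (basisMonomials (Fin 3) ℂ).linearIndependent
    rw [coe_basisMonomials] at this
    rw [Finset.coe_image]
    exact (this.linearIndepOn_id).mono (Set.image_subset_range _ _)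

instance aux_finite (n : ℕ) : Module.Finite ℂ (homogeneousSubmodule (Fin 3) ℂ n) :=
  Module.Finite.iff_fg.mpr (homogeneousSubmodule_fg (Fin 3) ℂ n)

/-- grading map -/
def gradMap : MvPolynomial (Fin 3) ℂ →ₐ[ℂ] Polynomial (MvPolynomial (Fin 3) ℂ) :=
  aeval (fun i => Polynomial.C (X i) * Polynomial.X)

lemma gradMap_monomial (s : Fin 3 →₀ ℕ) (r : ℂ) :
    gradMap (monomial s r) = Polynomial.monomial s.degree (monomial s r) := by
  rw [gradMap, aeval_monomial, ← Polynomial.C_mul_X_pow_eq_monomial, monomial_eq (s := s) (a := r)]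
  simp only [Finsupp.prod, mul_pow, Finset.prod_mul_distrib, map_mul, map_prod, map_pow,
    Finset.prod_pow_eq_pow_sum, Finsupp.degree]
  rw [mul_assoc]
  rfl

lemma gradMap_coeff (A : MvPolynomial (Fin 3) ℂ) (n : ℕ) :
    (gradMap A).coeff n = homogeneousComponent n A := by
  induction A using MvPolynomial.induction_on' with
  | monomial s r =>
    rw [gradMap_monomial, Polynomial.coeff_monomial]
    split_ifs with h
    · rw [homogeneousComponent_eq_self]
      exact isHomogeneous_monomial r h
    · rw [homogeneousComponent_of_mem (isHomogeneous_monomial r rfl), if_neg (Ne.symm h)]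
  | add p q hp hq => simp [hp, hq]

lemma isHomogeneous_of_gradMap {A : MvPolynomial (Fin 3) ℂ}
    (h : (gradMap A).natTrailingDegree = (gradMap A).natDegree) :
    A.IsHomogeneous (gradMap A).natDegree := by
  have : A = homogeneousComponent (gradMap A).natDegree A := by
    conv_lhs => rw [← sum_homogeneousComponent A]
    by_cases hd : (gradMap A).natDegree ∈ Finset.range (A.totalDegree + 1)
    · rw [Finset.sum_eq_single_of_mem _ hd]
      intro b _ hb
      rw [← gradMap_coeff]
      rcases lt_or_gt_of_ne hb with hb | hb
      · exact Polynomial.coeff_eq_zero_of_lt_natTrailingDegree (h ▸ hb)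
      · exact Polynomial.coeff_eq_zero_of_natDegree_lt hb
    · rw [homogeneousComponent_eq_zero _ _ (by simpa using hd)]
      apply Finset.sum_eq_zero
      intro b hb'
      have hb : b ≠ (gradMap A).natDegree := fun hb => hd (hb ▸ hb')
      rw [← gradMap_coeff]
      rcases lt_or_gt_of_ne hb with hb | hb
      · exact Polynomial.coeff_eq_zero_of_lt_natTrailingDegree (h ▸ hb)
      · exact Polynomial.coeff_eq_zero_of_natDegree_lt hb
  rw [this]
  convert homogeneousComponent_isHomogeneous _ A
  rw [← this]

lemma homog_factor {A B : MvPolynomial (Fin 3) ℂ} {d : ℕ} (h : (A * B).IsHomogeneous d)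
    (h0 : A * B ≠ 0) : ∃ a b, a + b = d ∧ A.IsHomogeneous a ∧ B.IsHomogeneous b := by
  have hinj : Function.Injective gradMap := by
    rw [injective_iff_map_eq_zero]
    intro P hP
    rw [← sum_homogeneousComponent P]
    simp [← gradMap_coeff, hP]
  have hA : gradMap A ≠ 0 := by
    rw [Ne, map_eq_zero_iff _ hinj]; exact left_ne_zero_of_mul h0
  have hB : gradMap B ≠ 0 := by
    rw [Ne, map_eq_zero_iff _ hinj]; exact right_ne_zero_of_mul h0
  have hm : gradMap A * gradMap B = Polynomial.monomial d (A * B) := by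
    rw [← map_mul]
    ext1 n
    rw [gradMap_coeff, Polynomial.coeff_monomial, homogeneousComponent_of_mem h]
    simp [eq_comm]
  have h1 := Polynomial.natDegree_mul hA hB
  have h2 := Polynomial.natTrailingDegree_mul hA hB
  rw [hm, Polynomial.natDegree_monomial_eq _ h0] at h1
  rw [hm, Polynomial.natTrailingDegree_monomial h0] at h2
  have h3 := Polynomial.natTrailingDegree_le_natDegree (gradMap A)
  have h4 := Polynomial.natTrailingDegree_le_natDegree (gradMap B)
  exact ⟨_, _, h1.symm, isHomogeneous_of_gradMap (by omega), isHomogeneous_of_gradMap (by omega)⟩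

lemma elim_poly {R : Type*} [CommRing R] [IsDomain R] [UniqueFactorizationMonoid R]
    (f g : Polynomial R) (h : IsRelPrime f g) : ∃ (a b : Polynomial R) (r : R), r ≠ 0 ∧ a * f + b * g = Polynomial.C r := by
  classical
  let : NormalizationMonoid R := UniqueFactorizationMonoid.strongNormalizationMonoid.toNormalizationMonoid
  let : NormalizedGCDMonoid R := UniqueFactorizationMonoid.toNormalizedGCDMonoid R
  let K := FractionRing R
  have hinj : Function.Injective (algebraMap R K) := IsFractionRing.injective R K
  have hc : IsCoprime (f.map (algebraMap R K)) (g.map (algebraMap R K)) := by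
    rw [← isRelPrime_iff_isCoprime]
    intro d hdf hdg
    by_cases hd : d = 0
    · subst hd
      rw [zero_dvd_iff, Polynomial.map_eq_zero_iff hinj] at hdf hdg
      subst hdf; subst hdg
      exact absurd (h (dvd_refl _) (dvd_refl _)) not_isUnit_zero
    · apply Polynomial.isUnit_or_eq_zero_of_isUnit_integerNormalization_primPart (R := R) hd
      set d1 := IsLocalization.integerNormalization (nonZeroDivisors R) d with hd1
      obtain ⟨b, hb, hbd⟩ := IsLocalization.integerNormalization_spec (nonZeroDivisors R) d
      have hdd : d1.primPart.map (algebraMap R K) ∣ d := by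
        have h1 : d1.primPart.map (algebraMap R K) ∣ d1.map (algebraMap R K) :=
          Polynomial.map_dvd _ (d1.primPart_dvd)
        rw [hbd] at h1
        have hb0 : algebraMap R K b ≠ 0 := by
          rw [Ne, map_eq_zero_iff _ hinj]
          exact nonZeroDivisors.ne_zero hb
        rw [show b • d = Polynomial.C (algebraMap R K b) * d by
          rw [← Polynomial.smul_eq_C_mul]; simp] at h1
        exact (Polynomial.isUnit_C.mpr (IsUnit.mk0 _ hb0)).dvd_mul_left.mp h1
      apply h
      · exact (d1.isPrimitive_primPart).dvd_of_fraction_map_dvd_fraction_map (hdd.trans hdf)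
      · exact (d1.isPrimitive_primPart).dvd_of_fraction_map_dvd_fraction_map (hdd.trans hdg)
  obtain ⟨A, B, hAB⟩ := hc
  obtain ⟨a, ha, hA⟩ := IsLocalization.integerNormalization_spec (nonZeroDivisors R) A
  obtain ⟨b, hb, hB⟩ := IsLocalization.integerNormalization_spec (nonZeroDivisors R) B
  refine ⟨Polynomial.C b * IsLocalization.integerNormalization (nonZeroDivisors R) A,
    Polynomial.C a * IsLocalization.integerNormalization (nonZeroDivisors R) B, a * b,
    mul_ne_zero (nonZeroDivisors.ne_zero ha) (nonZeroDivisors.ne_zero hb), ?_⟩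
  apply Polynomial.map_injective _ hinj
  have hA' : Polynomial.map (algebraMap R K) (IsLocalization.integerNormalization (nonZeroDivisors R) A) = Polynomial.C (algebraMap R K a) * A := by
    rw [← Polynomial.smul_eq_C_mul, hA]; simp 
  have hB' : Polynomial.map (algebraMap R K) (IsLocalization.integerNormalization (nonZeroDivisors R) B) = Polynomial.C (algebraMap R K b) * B := by
    rw [← Polynomial.smul_eq_C_mul, hB]; simp 
  simp only [Polynomial.map_add, Polynomial.map_mul, Polynomial.map_C, map_mul, hA', hB']
  linear_combination (Polynomial.C (algebraMap R K a) * Polynomial.C (algebraMap R K b)) * hAB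

/-- restriction to a line through the point (1,0,0) -/
def resMap (y z : ℂ) : MvPolynomial (Fin 3) ℂ →ₐ[ℂ] Polynomial ℂ :=
  aeval ![Polynomial.X, Polynomial.C y, Polynomial.C z]

lemma resMap_monomial (y z : ℂ) (s : Fin 3 →₀ ℕ) (r : ℂ) :
    resMap y z (monomial s r) = Polynomial.monomial (s 0) (r * y ^ s 1 * z ^ s 2) := by
  rw [resMap, aeval_monomial, Finsupp.prod_fintype _ _ (by simp)]
  simp only [Fin.prod_univ_three, ← Polynomial.C_mul_X_pow_eq_monomial]
  simp
  ring

lemma resMap_eval (y z x : ℂ) (F : MvPolynomial (Fin 3) ℂ) :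
    (resMap y z F).eval x = eval ![x, y, z] F := by
  induction F using MvPolynomial.induction_on' with
  | monomial s r =>
    rw [resMap_monomial, eval_monomial, Finsupp.prod_fintype _ _ (by simp)]
    simp [Fin.prod_univ_three]
    ring
  | add p q hp hq => simp [hp, hq]

lemma deg3 (s : Fin 3 →₀ ℕ) : s.degree = s 0 + s 1 + s 2 := by
  rw [Finsupp.degree_eq_sum, Fin.sum_univ_three]

lemma hom_deg {F : MvPolynomial (Fin 3) ℂ} {p : ℕ} (hF : F.IsHomogeneous p) {s : Fin 3 →₀ ℕ}
    (hs : s ∈ F.support) : p = s 0 + s 1 + s 2 := by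
  have h : p = s.degree := hF.degree_eq_sum_deg_support hs
  rw [h, deg3]

lemma resMap_natDegree (y z : ℂ) {F : MvPolynomial (Fin 3) ℂ} {p : ℕ} (hF : F.IsHomogeneous p) :
    (resMap y z F).natDegree ≤ p := by
  rw [F.as_sum, map_sum]
  apply Polynomial.natDegree_sum_le_of_forall_le
  intro s hs
  rw [resMap_monomial]
  refine (Polynomial.natDegree_monomial_le _).trans ?_
  have := hom_deg hF hs
  omega

lemma resMap_coeff (y z : ℂ) {F : MvPolynomial (Fin 3) ℂ} {p : ℕ} (hF : F.IsHomogeneous p) :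
    (resMap y z F).coeff p = eval ![1, 0, 0] F := by
  rw [F.as_sum, map_sum, map_sum, Polynomial.finsetSum_coeff]
  apply Finset.sum_congr rfl
  intro s hs
  have := hom_deg hF hs
  rw [resMap_monomial, eval_monomial, Finsupp.prod_fintype _ _ (by simp), Polynomial.coeff_monomial]
  simp only [Fin.prod_univ_three]
  split_ifs with h
  · have h1 : s 1 = 0 := by omega
    have h2 : s 2 = 0 := by omega
    simp [h1, h2]
  · by_cases h1 : s 1 = 0
    · have h2 : s 2 ≠ 0 := by omega
      simp [h2]
    · simp [h1]

lemma resMap_lift {y : ℂ} (hy : y ≠ 0) (z : ℂ) (D : ℕ) (a : Polynomial ℂ) (ha : a.natDegree ≤ D) :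
    ∃ A : MvPolynomial (Fin 3) ℂ, A.IsHomogeneous D ∧ resMap y z A = a := by
  refine ⟨∑ i ∈ Finset.range (D + 1), C (a.coeff i / y ^ (D - i)) * (X 0 ^ i * X 1 ^ (D - i)), ?_, ?_⟩
  · apply IsHomogeneous.sum
    intro i hi
    apply IsHomogeneous.C_mul
    have := (isHomogeneous_X_pow (R := ℂ) (0 : Fin 3) i).mul
      (isHomogeneous_X_pow (R := ℂ) (1 : Fin 3) (D - i))
    rwa [show i + (D - i) = D by have := Finset.mem_range.mp hi; omega] at this
  · conv_rhs => rw [a.as_sum_range_C_mul_X_pow' (Nat.lt_succ_of_le ha)]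
    rw [map_sum]
    apply Finset.sum_congr rfl
    intro i hi
    have h1 : resMap y z (X 0) = Polynomial.X := by simp [resMap]
    have h2 : resMap y z (X 1) = Polynomial.C y := by simp [resMap]
    have h3 : ∀ c, resMap y z (C c) = Polynomial.C c := by intro c; simp [resMap]
    rw [map_mul, map_mul, map_pow, map_pow, h1, h2, h3]
    have : Polynomial.C (a.coeff i) = Polynomial.C (a.coeff i / y ^ (D - i)) * Polynomial.C y ^ (D - i) := by
      rw [← map_pow, ← map_mul]
      congr 1
      field_simp
    rw [this]
    ring

lemma homog_eval_smul {F : MvPolynomial (Fin 3) ℂ} {p : ℕ} (hF : F.IsHomogeneous p)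
    (c : ℂ) (v : Fin 3 → ℂ) : eval (c • v) F = c ^ p * eval v F := by
  rw [F.as_sum, map_sum, map_sum, Finset.mul_sum]
  apply Finset.sum_congr rfl
  intro s hs
  have := hom_deg hF hs
  rw [eval_monomial, eval_monomial, Finsupp.prod_fintype _ _ (by simp),
    Finsupp.prod_fintype _ _ (by simp), this]
  simp only [Fin.prod_univ_three, Pi.smul_apply, smul_eq_mul]
  ring

lemma resMap_ker {y : ℂ} (hy : y ≠ 0) (z : ℂ) {e : ℕ} {H : MvPolynomial (Fin 3) ℂ}
    (hH : H.IsHomogeneous (e + 1)) (h0 : resMap y z H = 0) :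
    ∃ M : MvPolynomial (Fin 3) ℂ, M.IsHomogeneous e ∧ H = (X 2 - C (z / y) * X 1) * M := by
  by_cases hH0 : H = 0
  · exact ⟨0, isHomogeneous_zero _ _ _, by simp [hH0]⟩
  let l : MvPolynomial (Fin 3) ℂ := X 2 - C (z / y) * X 1
  let θ : MvPolynomial (Fin 3) ℂ →ₐ[ℂ] MvPolynomial (Fin 3) ℂ :=
    aeval ![X 0, X 1, C (z / y) * X 1]
  have hθ : θ H = 0 := by
    have : X 1 * θ H = 0 := by
      apply MvPolynomial.funext
      intro v
      have h1 : eval v (θ H) = eval ![v 0, v 1, z / y * v 1] H := by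
        have : ((aeval v : MvPolynomial (Fin 3) ℂ →ₐ[ℂ] ℂ).comp θ) =
          (aeval ![v 0, v 1, z / y * v 1]) := by
          ext i
          fin_cases i <;> simp [θ]
        exact congrArg (fun f => f H) this
      rw [map_mul, h1, eval_X, map_zero]
      by_cases hv : v 1 = 0
      · simp [hv]
      · have h2 : ![v 0, v 1, z / y * v 1] = (v 1 / y) • ![v 0 * y / v 1, y, z] := by
          ext i
          fin_cases i <;> simp <;> field_simp
        rw [h2, homog_eval_smul hH, ← resMap_eval, h0]
        simp
    exact (mul_eq_zero.mp this).resolve_left (X_ne_zero 1)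
  have hdvd : l ∣ H := by
    rw [← Ideal.mem_span_singleton, ← Ideal.Quotient.eq_zero_iff_mem]
    have : ((Ideal.Quotient.mkₐ ℂ (Ideal.span {l})).comp θ) = Ideal.Quotient.mkₐ ℂ (Ideal.span {l}) := by
      ext i
      fin_cases i
      · simp [θ]
      · simp [θ]
      · simp only [θ, AlgHom.comp_apply, aeval_X]
        symm
        apply Ideal.Quotient.eq.mpr
        exact Ideal.mem_span_singleton_self l
    have h2 := congrArg (fun f => f H) this
    simp only [AlgHom.comp_apply, hθ, map_zero] at h2
    exact h2.symm
  obtain ⟨M, hM⟩ := hdvd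
  have hl : l.IsHomogeneous 1 := (isHomogeneous_X _ _).sub ((isHomogeneous_C_mul_X _ _))
  obtain ⟨a, b, hab, ha, hb⟩ := homog_factor (hM ▸ hH) (hM ▸ hH0)
  have hl0 : l ≠ 0 := left_ne_zero_of_mul (hM ▸ hH0)
  have := hl.inj_right ha hl0
  refine ⟨M, ?_, hM⟩
  rwa [show e = b by omega]

lemma surj_step {y : ℂ} (hy : y ≠ 0) (z : ℂ) {p q e : ℕ} {F G H : MvPolynomial (Fin 3) ℂ}
    (hF : F.IsHomogeneous p) (hG : G.IsHomogeneous q) (hF0 : eval ![1, 0, 0] F ≠ 0)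
    (hc : IsCoprime (resMap y z F) (resMap y z G)) (he : p + q ≤ e + 1)
    (hH : H.IsHomogeneous (e + 1)) :
    ∃ A B M : MvPolynomial (Fin 3) ℂ, M.IsHomogeneous e ∧
      H = A * F + B * G + (X 2 - C (z / y) * X 1) * M := by
  set f := resMap y z F with hf
  set g := resMap y z G with hg
  set h := resMap y z H with hh
  have hfc : f.coeff p ≠ 0 := by rw [hf, resMap_coeff _ _ hF]; exact hF0
  have hfd : f.natDegree = p := le_antisymm (resMap_natDegree _ _ hF) (Polynomial.le_natDegree_of_ne_zero hfc)
  have hf0 : f ≠ 0 := by rintro h; simp [h] at hfc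
  obtain ⟨u, v, huv⟩ := hc
  have hbd : ((h * v) % f * g).natDegree ≤ e + 1 := by
    by_cases hp : p = 0
    · have : (h * v) % f = 0 := by
        apply EuclideanDomain.mod_eq_zero.mpr
        apply IsUnit.dvd
        rw [Polynomial.isUnit_iff_degree_eq_zero, Polynomial.degree_eq_natDegree hf0, hfd, hp]; rfl
      simp [this]
    · have := Polynomial.natDegree_mod_lt (h * v) (q := f) (by omega)
      have h2 : g.natDegree ≤ q := resMap_natDegree y z hG
      refine Polynomial.natDegree_mul_le.trans ?_
      omega
  have key : h = (h * u + (h * v) / f * g) * f + (h * v) % f * g := by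
    have := EuclideanDomain.div_add_mod (h * v) f
    linear_combination (-h) * huv - g * this
  have had : (h * u + (h * v) / f * g).natDegree ≤ e + 1 - p := by
    by_cases ha : (h * u + (h * v) / f * g) = 0
    · simp [ha]
    have h1 : ((h * u + (h * v) / f * g) * f).natDegree ≤ e + 1 := by
      rw [show (h * u + (h * v) / f * g) * f = h - (h * v) % f * g by linear_combination -key]
      exact (Polynomial.natDegree_sub_le _ _).trans (max_le (resMap_natDegree _ _ hH) hbd)
    rw [Polynomial.natDegree_mul ha hf0] at h1
    omega
  have hbd' : ((h * v) % f).natDegree ≤ e + 1 - q := by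
    by_cases hp : p = 0
    · have : (h * v) % f = 0 := by
        apply EuclideanDomain.mod_eq_zero.mpr
        apply IsUnit.dvd
        rw [Polynomial.isUnit_iff_degree_eq_zero, Polynomial.degree_eq_natDegree hf0, hfd, hp]; rfl
      simp [this]
    · have := Polynomial.natDegree_mod_lt (h * v) (q := f) (by omega)
      omega
  obtain ⟨A, hA, hA'⟩ := resMap_lift hy z _ _ had
  obtain ⟨B, hB, hB'⟩ := resMap_lift hy z _ _ hbd'
  have hAF := hA.mul hF
  have hBG := hB.mul hG
  rw [show e + 1 - p + p = e + 1 by omega] at hAF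
  rw [show e + 1 - q + q = e + 1 by omega] at hBG
  obtain ⟨M, hM, hM'⟩ := resMap_ker hy z ((hH.sub hAF).sub hBG) (by
    rw [map_sub, map_sub, map_mul, map_mul, hA', hB', ← hf, ← hg, ← hh]
    linear_combination key)
  exact ⟨A, B, M, hM, by rw [← hM']; ring⟩

lemma elim_mv (F G : MvPolynomial (Fin 3) ℂ) (h : IsRelPrime F G) :
    ∃ (A B : MvPolynomial (Fin 3) ℂ) (R : MvPolynomial (Fin 2) ℂ), R ≠ 0 ∧
      A * F + B * G = rename Fin.succ R := by
  let φ := finSuccEquiv ℂ 2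
  obtain ⟨a, b, r, hr, hab⟩ := elim_poly (φ F) (φ G) (by
    intro d hd1 hd2
    have h1 : φ.symm d ∣ F := by simpa using map_dvd φ.symm hd1
    have h2 : φ.symm d ∣ G := by simpa using map_dvd φ.symm hd2
    simpa using (h h1 h2).map φ)
  refine ⟨φ.symm a, φ.symm b, r, hr, ?_⟩
  apply φ.injective
  simp only [map_add, map_mul, AlgEquiv.apply_symm_apply, hab]
  have : ((φ : _ →ₐ[ℂ] _).comp (rename Fin.succ)) =
      (Algebra.ofId (MvPolynomial (Fin 2) ℂ) (Polynomial (MvPolynomial (Fin 2) ℂ))).restrictScalars ℂ := by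
    ext1 i
    simp [φ, finSuccEquiv_X_succ, Algebra.ofId_apply]
  exact (congrArg (fun f => f r) this).symm


/-- points in the finite set are separated by linear forms -/
def SepLin {ι : Type*} (v : ι → Fin 3 → ℂ) (Z : Finset ι) : Prop :=
  (∀ P ∈ Z, ∃ L : MvPolynomial (Fin 3) ℂ, L.IsHomogeneous 1 ∧ eval (v P) L ≠ 0) ∧
  (∀ P ∈ Z, ∀ Q ∈ Z, Q ≠ P → ∃ L : MvPolynomial (Fin 3) ℂ, L.IsHomogeneous 1 ∧
    eval (v Q) L = 0 ∧ eval (v P) L ≠ 0)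

/-- a linear relation between the evaluations at points, in degree e -/
def EvRel {ι : Type*} (v : ι → Fin 3 → ℂ) (Z : Finset ι) (c : ι → ℂ) (e : ℕ) : Prop :=
  ∀ H : MvPolynomial (Fin 3) ℂ, H.IsHomogeneous e → ∑ Q ∈ Z, c Q * eval (v Q) H = 0

lemma no_rel_large {ι : Type*} {v : ι → Fin 3 → ℂ} {Z : Finset ι} (hs : SepLin v Z)
    {c : ι → ℂ} {e : ℕ} (he : Z.card ≤ e) (hr : EvRel v Z c e) : ∀ P ∈ Z, c P = 0 := by
  classical
  intro P hP
  obtain ⟨L0, hL0, hL0'⟩ := hs.1 P hP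
  have hs2 := hs.2 P hP
  choose! L hL hLQ hLP using hs2
  have h1 : (∏ Q ∈ Z.erase P, L Q).IsHomogeneous (∑ Q ∈ Z.erase P, 1) :=
    IsHomogeneous.prod _ _ _ (fun Q hQ => hL Q (Finset.mem_of_mem_erase hQ) (Finset.ne_of_mem_erase hQ))
  have h2 := (hL0.pow (e - (Z.erase P).card)).mul h1
  have hle : (Z.erase P).card ≤ Z.card := Finset.card_le_card (Finset.erase_subset _ _)
  rw [show 1 * (e - (Z.erase P).card) + ∑ Q ∈ Z.erase P, 1 = e by rw [Finset.sum_const, smul_eq_mul]; omega] at h2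
  have h3 := hr _ h2
  rw [Finset.sum_eq_single_of_mem P hP] at h3
  · rw [map_mul, map_pow, map_prod] at h3
    have h4 : ∏ Q ∈ Z.erase P, eval (v P) (L Q) ≠ 0 := Finset.prod_ne_zero_iff.mpr
      (fun Q hQ => hLP Q (Finset.mem_of_mem_erase hQ) (Finset.ne_of_mem_erase hQ))
    have h5 := mul_ne_zero (pow_ne_zero (e - (Z.erase P).card) hL0') h4
    exact (mul_eq_zero.mp h3).resolve_right h5
  · intro Q hQ hQP
    rw [map_mul, map_prod, Finset.prod_eq_zero (Finset.mem_erase.mpr ⟨hQP, hQ⟩) (hLQ Q hQ hQP)]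
    simp

lemma sep0 {ι : Type*} {v : ι → Fin 3 → ℂ} {Z : Finset ι} (hs : SepLin v Z) (hne : Z.Nonempty)
    {c : ι → ℂ} (hc : ∀ P ∈ Z, c P ≠ 0) {p q e : ℕ} {F G : MvPolynomial (Fin 3) ℂ}
    (hF : F.IsHomogeneous p) (hG : G.IsHomogeneous q) (hF0 : eval ![1, 0, 0] F ≠ 0)
    (hrel : IsRelPrime F G) (hFZ : ∀ P ∈ Z, eval (v P) F = 0) (hGZ : ∀ P ∈ Z, eval (v P) G = 0)
    (he : p + q ≤ e + 1) (hr : EvRel v Z c e) : False := by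
  obtain ⟨A, B, R, hR, hAB⟩ := elim_mv F G hrel
  have hQ12 : ∀ Q ∈ Z, v Q 1 ≠ 0 ∨ v Q 2 ≠ 0 := by
    intro Q hQ
    by_contra! h
    have h1 : v Q = v Q 0 • ![1, 0, 0] := by
      ext i; fin_cases i <;> simp [h]
    have h2 := hFZ Q hQ
    rw [h1, homog_eval_smul hF, mul_eq_zero] at h2
    have h3 : v Q 0 = 0 := by
      rcases h2 with h2 | h2
      · exact eq_zero_of_pow_eq_zero h2
      · exact absurd h2 hF0
    obtain ⟨L, hL, hL'⟩ := hs.1 Q hQ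
    rw [h1, homog_eval_smul hL, h3] at hL'
    simp at hL'
  have hlin : ∀ Q ∈ Z, (C (v Q 2) * X 0 - C (v Q 1) * X 1 : MvPolynomial (Fin 2) ℂ) ≠ 0 := by
    intro Q hQ h0
    have h1 := congrArg (eval ![1, 0]) h0
    have h2 := congrArg (eval ![0, 1]) h0
    simp at h1 h2
    exact (hQ12 Q hQ).elim (fun h => h h2) (fun h => h h1)
  have hprod : X 0 * R * ∏ Q ∈ Z, (C (v Q 2) * X 0 - C (v Q 1) * X 1 : MvPolynomial (Fin 2) ℂ) ≠ 0 :=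
    mul_ne_zero (mul_ne_zero (X_ne_zero 0) hR) (Finset.prod_ne_zero_iff.mpr hlin)
  obtain ⟨x, hx⟩ : ∃ x, eval x (X 0 * R * ∏ Q ∈ Z, (C (v Q 2) * X 0 - C (v Q 1) * X 1 : MvPolynomial (Fin 2) ℂ)) ≠ 0 := by
    by_contra! h
    exact hprod (MvPolynomial.funext (fun x => by rw [h x, map_zero]))
  rw [map_mul, map_mul, map_prod, eval_X] at hx
  have hy : x 0 ≠ 0 := left_ne_zero_of_mul (left_ne_zero_of_mul hx)
  have hRx : eval x R ≠ 0 := right_ne_zero_of_mul (left_ne_zero_of_mul hx)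
  have hZx := Finset.prod_ne_zero_iff.mp (right_ne_zero_of_mul hx)
  set l : MvPolynomial (Fin 3) ℂ := X 2 - C (x 1 / x 0) * X 1 with hl
  have hlZ : ∀ Q ∈ Z, eval (v Q) l ≠ 0 := by
    intro Q hQ h0
    apply hZx Q hQ
    simp [hl] at h0 ⊢
    field_simp at h0
    linear_combination h0
  have hcop : IsCoprime (resMap (x 0) (x 1) F) (resMap (x 0) (x 1) G) := by
    have h1 : (resMap (x 0) (x 1)).comp (rename Fin.succ) =
      (Algebra.ofId ℂ (Polynomial ℂ)).comp (aeval x) := by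
      ext1 i
      fin_cases i <;> simp [resMap, Algebra.ofId_apply]
    have h2 : resMap (x 0) (x 1) (rename Fin.succ R) = Polynomial.C (eval x R) :=
      congrArg (fun f => f R) h1
    rw [← hAB, map_add, map_mul, map_mul] at h2
    refine ⟨Polynomial.C (eval x R)⁻¹ * resMap (x 0) (x 1) A,
      Polynomial.C (eval x R)⁻¹ * resMap (x 0) (x 1) B, ?_⟩
    have h3 : Polynomial.C (eval x R)⁻¹ * Polynomial.C (eval x R) = 1 := by
      rw [← map_mul, inv_mul_cancel₀ hRx, map_one]
    linear_combination Polynomial.C (eval x R)⁻¹ * h2 + h3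
  have hind : ∀ j : ℕ, ∃ c' : ι → ℂ, (∀ P ∈ Z, c' P ≠ 0) ∧ EvRel v Z c' (e + j) := by
    intro j
    induction j with
    | zero => exact ⟨c, hc, hr⟩
    | succ j ih =>
      obtain ⟨c', hc', hr'⟩ := ih
      refine ⟨fun Q => c' Q / eval (v Q) l, fun P hP => div_ne_zero (hc' P hP) (hlZ P hP), ?_⟩
      intro H hH
      obtain ⟨A', B', M, hM, hHe⟩ := surj_step hy (x 1) (e := e + j) hF hG hF0 hcop (by omega) hH
      rw [← hr' M hM]
      apply Finset.sum_congr rfl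
      intro Q hQ
      rw [hHe, map_add, map_add, map_mul, map_mul, hFZ Q hQ, hGZ Q hQ, map_mul]
      have := hlZ Q hQ
      rw [← hl]
      field_simp
      ring
  obtain ⟨c', hc', hr'⟩ := hind Z.card
  obtain ⟨P, hP⟩ := hne
  exact hc' P hP (no_rel_large hs (by omega) hr' P hP)

lemma sep1 {ι : Type*} {v : ι → Fin 3 → ℂ} {Z : Finset ι} (hs : SepLin v Z) (hne : Z.Nonempty)
    {c : ι → ℂ} (hc : ∀ P ∈ Z, c P ≠ 0) {p q e : ℕ} {F G : MvPolynomial (Fin 3) ℂ}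
    (hF : F.IsHomogeneous p) (hG : G.IsHomogeneous q) (hF0 : F ≠ 0)
    (hrel : IsRelPrime F G) (hFZ : ∀ P ∈ Z, eval (v P) F = 0) (hGZ : ∀ P ∈ Z, eval (v P) G = 0)
    (he : p + q ≤ e + 1) (hr : EvRel v Z c e) : False := by
  obtain ⟨x, hx⟩ : ∃ x, eval x (X 0 * F) ≠ 0 := by
    by_contra! h
    exact (mul_ne_zero (X_ne_zero 0) hF0) (MvPolynomial.funext (fun x => by rw [h x, map_zero]))
  rw [map_mul, eval_X] at hx
  have ha : x 0 ≠ 0 := left_ne_zero_of_mul hx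
  have hFx : eval x F ≠ 0 := right_ne_zero_of_mul hx
  let φ1 : MvPolynomial (Fin 3) ℂ →ₐ[ℂ] MvPolynomial (Fin 3) ℂ :=
    aeval ![C (x 0) * X 0, X 1 + C (x 1) * X 0, X 2 + C (x 2) * X 0]
  let φ2 : MvPolynomial (Fin 3) ℂ →ₐ[ℂ] MvPolynomial (Fin 3) ℂ :=
    aeval ![C (x 0)⁻¹ * X 0, X 1 - C (x 1 / x 0) * X 0, X 2 - C (x 2 / x 0) * X 0]
  have hC1 : ∀ a, φ1 (C a) = C a := fun a => by simp [φ1]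
  have hC2 : ∀ a, φ2 (C a) = C a := fun a => by simp [φ2]
  have e1 : (C (x 0) : MvPolynomial (Fin 3) ℂ) * C (x 0)⁻¹ = 1 := by
    rw [← map_mul, mul_inv_cancel₀ ha, map_one]
  let φ : MvPolynomial (Fin 3) ℂ ≃ₐ[ℂ] MvPolynomial (Fin 3) ℂ := AlgEquiv.ofAlgHom φ1 φ2
    (by
      ext1 i
      fin_cases i
      · simp [φ1, φ2, -map_inv₀]
        linear_combination X 0 * e1
      · simp [φ1, φ2, -map_inv₀, div_eq_mul_inv]
        linear_combination - (C (x 1)) * X 0 * e1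
      · simp [φ1, φ2, -map_inv₀, div_eq_mul_inv]
        linear_combination - (C (x 2)) * X 0 * e1)
    (by
      ext1 i
      fin_cases i
      · simp [φ1, φ2, -map_inv₀]
        linear_combination X 0 * e1
      · simp [φ1, φ2, -map_inv₀, div_eq_mul_inv]
        ring
      · simp [φ1, φ2, -map_inv₀, div_eq_mul_inv]
        ring)
  let v' : ι → Fin 3 → ℂ := fun P =>
    ![(x 0)⁻¹ * v P 0, v P 1 - x 1 / x 0 * v P 0, v P 2 - x 2 / x 0 * v P 0]
  have hev : ∀ P (H : MvPolynomial (Fin 3) ℂ), eval (v' P) (φ H) = eval (v P) H := by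
    intro P H
    have h1 : (aeval (v' P) : _ →ₐ[ℂ] ℂ).comp φ1 = aeval (v P) := by
      ext1 i
      fin_cases i
      · simp [φ1, v']; field_simp
      · simp [φ1, v']; field_simp; ring
      · simp [φ1, v']; field_simp; ring
    exact congrArg (fun f => f H) h1
  have hev2 : ∀ P (H : MvPolynomial (Fin 3) ℂ), eval (v' P) H = eval (v P) (φ.symm H) := by
    intro P H
    rw [← hev, AlgEquiv.apply_symm_apply]
  have hφ1 : ∀ {H : MvPolynomial (Fin 3) ℂ} {m : ℕ}, H.IsHomogeneous m → (φ H).IsHomogeneous m := by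
    intro H m hH
    have := hH.aeval (n := 1) (τ := Fin 3) (S := ℂ) ![C (x 0) * X 0, X 1 + C (x 1) * X 0, X 2 + C (x 2) * X 0] (by
      intro i
      fin_cases i
      · exact isHomogeneous_C_mul_X _ _
      · exact (isHomogeneous_X _ _).add (isHomogeneous_C_mul_X _ _)
      · exact (isHomogeneous_X _ _).add (isHomogeneous_C_mul_X _ _))
    rw [one_mul] at this
    exact this
  have hφ2 : ∀ {H : MvPolynomial (Fin 3) ℂ} {m : ℕ}, H.IsHomogeneous m → (φ.symm H).IsHomogeneous m := by
    intro H m hH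
    have := hH.aeval (n := 1) (τ := Fin 3) (S := ℂ) ![C (x 0)⁻¹ * X 0, X 1 - C (x 1 / x 0) * X 0, X 2 - C (x 2 / x 0) * X 0] (by
      intro i
      fin_cases i
      · exact isHomogeneous_C_mul_X _ _
      · exact (isHomogeneous_X _ _).sub (isHomogeneous_C_mul_X _ _)
      · exact (isHomogeneous_X _ _).sub (isHomogeneous_C_mul_X _ _))
    rw [one_mul] at this
    exact this
  refine sep0 (v := v') (Z := Z) (c := c) (p := p) (q := q) (e := e) (F := φ F) (G := φ G)
    ⟨?_, ?_⟩ hne hc (hφ1 hF) (hφ1 hG) ?_ ?_ ?_ ?_ he ?_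
  · intro P hP
    obtain ⟨L, hL, hL'⟩ := hs.1 P hP
    exact ⟨φ L, hφ1 hL, by rwa [hev]⟩
  · intro P hP Q hQ hQP
    obtain ⟨L, hL, hL', hL''⟩ := hs.2 P hP Q hQ hQP
    exact ⟨φ L, hφ1 hL, by rwa [hev], by rwa [hev]⟩
  · have h1 : (aeval ![1, 0, 0] : _ →ₐ[ℂ] ℂ).comp φ1 = aeval x := by
      ext1 i
      fin_cases i <;> simp [φ1]
    have h2 : eval ![1, 0, 0] (φ F) = eval x F := congrArg (fun f => f F) h1
    rwa [h2]
  · intro d hd1 hd2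
    have h1 : φ.symm d ∣ F := by simpa using map_dvd φ.symm hd1
    have h2 : φ.symm d ∣ G := by simpa using map_dvd φ.symm hd2
    simpa using (hrel h1 h2).map φ
  · intro P hP; rw [hev]; exact hFZ P hP
  · intro P hP; rw [hev]; exact hGZ P hP
  · intro H hH
    simp only [hev2]
    exact hr _ (hφ2 hH)

/-- evaluation of forms of degree n at the points of Z -/
def evL {ι : Type*} (v : ι → Fin 3 → ℂ) (Z : Finset ι) (n : ℕ) :
    homogeneousSubmodule (Fin 3) ℂ n →ₗ[ℂ] (Z → ℂ) :=
  LinearMap.pi (fun Q => (aeval (v Q) : MvPolynomial (Fin 3) ℂ →ₐ[ℂ] ℂ).toLinearMap ∘ₗ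
    (homogeneousSubmodule (Fin 3) ℂ n).subtype)

lemma evL_apply {ι : Type*} (v : ι → Fin 3 → ℂ) (Z : Finset ι) (n : ℕ)
    (F : homogeneousSubmodule (Fin 3) ℂ n) (Q : Z) : evL v Z n F Q = eval (v Q) F.1 := rfl

lemma evL_inj {ι : Type*} {v : ι → Fin 3 → ℂ} {Z : Finset ι} {n : ℕ}
    (h : ∀ F : MvPolynomial (Fin 3) ℂ, F.IsHomogeneous n → (∀ P ∈ Z, eval (v P) F = 0) → F = 0) :
    Function.Injective (evL v Z n) := by
  rw [injective_iff_map_eq_zero]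
  intro F hF
  apply Subtype.ext
  apply h _ F.2
  intro P hP
  exact congrFun hF ⟨P, hP⟩

lemma two_choose (n : ℕ) : 2 * (n + 2).choose 2 = (n + 2) * (n + 1) := by
  rw [Nat.choose_two_right]
  have : 2 ∣ (n + 2) * (n + 2 - 1) := (Nat.even_mul_pred_self (n + 2)).two_dvd
  rw [Nat.mul_div_cancel' this]
  rfl

lemma card_of_inj {ι : Type*} {v : ι → Fin 3 → ℂ} {Z : Finset ι} {n : ℕ}
    (h : ∀ F : MvPolynomial (Fin 3) ℂ, F.IsHomogeneous n → (∀ P ∈ Z, eval (v P) F = 0) → F = 0) :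
    (n + 2).choose 2 ≤ Z.card := by
  have := LinearMap.finrank_le_finrank_of_injective (evL_inj h)
  rw [aux_finrank] at this
  simpa using this

lemma orth {ι : Type*} {v : ι → Fin 3 → ℂ} {Z : Finset ι}
    {c : ι → ℂ} (hc : ∀ P ∈ Z, c P ≠ 0) {a b d : ℕ} (hab : a + b = d) (hr : EvRel v Z c d) :
    Module.finrank ℂ (LinearMap.range (evL v Z a)) +
      Module.finrank ℂ (LinearMap.range (evL v Z b)) ≤ Z.card := by
  let Ψ : (Z → ℂ) →ₗ[ℂ] Module.Dual ℂ (Z → ℂ) :=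
    LinearMap.mk₂ ℂ (fun g f => ∑ Q : Z, c Q * g Q * f Q)
      (by intros; simp only [← Finset.sum_add_distrib, Pi.add_apply]; congr 1; ext; ring)
      (by intros; simp only [smul_eq_mul, Finset.mul_sum, Pi.smul_apply]; congr 1; ext; ring)
      (by intros; simp only [← Finset.sum_add_distrib, Pi.add_apply]; congr 1; ext; ring)
      (by intros; simp only [smul_eq_mul, Finset.mul_sum, Pi.smul_apply]; congr 1; ext; ring)
  have hΨ : ∀ g f, Ψ g f = ∑ Q : Z, c Q * g Q * f Q := fun _ _ => rfl
  have hinj : Function.Injective Ψ := by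
    classical
    rw [injective_iff_map_eq_zero]
    intro g hg
    ext Q
    have h1 := congrArg (fun F => F (Pi.single Q 1)) hg
    simp only [hΨ, LinearMap.zero_apply] at h1
    rw [Finset.sum_eq_single Q] at h1
    · simpa [hc Q.1 Q.2] using h1
    · intro R _ hR
      simp [Pi.single_eq_of_ne hR]
    · simp
  have hle : (LinearMap.range (evL v Z b)).map Ψ ≤ (LinearMap.range (evL v Z a)).dualAnnihilator := by
    rintro _ ⟨_, ⟨G, rfl⟩, rfl⟩
    rw [Submodule.mem_dualAnnihilator]
    rintro _ ⟨F, rfl⟩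
    rw [hΨ]
    have h1 := hr (F.1 * G.1) (hab ▸ (IsHomogeneous.mul F.2 G.2))
    rw [← Finset.sum_coe_sort] at h1
    rw [← h1]
    apply Finset.sum_congr rfl
    intro Q _
    rw [evL_apply, evL_apply, map_mul]
    ring
  have h1 := Submodule.finrank_mono hle
  rw [← (Submodule.equivMapOfInjective Ψ hinj (LinearMap.range (evL v Z b))).finrank_eq] at h1
  have h2 := Subspace.finrank_add_finrank_dualAnnihilator_eq (LinearMap.range (evL v Z a))
  rw [Module.finrank_fintype_fun_eq_card, Fintype.card_coe] at h2
  omega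

lemma main_bound {ι : Type*} {v : ι → Fin 3 → ℂ} {Z : Finset ι} (hs : SepLin v Z) (hne : Z.Nonempty)
    {c : ι → ℂ} (hc : ∀ P ∈ Z, c P ≠ 0) {d : ℕ} (hr : EvRel v Z c d) :
    ∃ (s : ℕ) (F : MvPolynomial (Fin 3) ℂ), 1 ≤ s ∧ F ≠ 0 ∧ F.IsHomogeneous s ∧
      (∀ P ∈ Z, eval (v P) F = 0) ∧
      ((2 * s ≤ d + 1 ∧ s * (d + 3 - s) ≤ Z.card) ∨ (d + 2 ≤ 2 * s ∧ s * (s + 1) ≤ 2 * Z.card)) := by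
  classical
  have hex : ∃ s, ∃ F : MvPolynomial (Fin 3) ℂ, F.IsHomogeneous s ∧
      (∀ P ∈ Z, eval (v P) F = 0) ∧ F ≠ 0 := by
    by_contra! h
    have h1 := card_of_inj (h Z.card)
    have h2 := two_choose Z.card
    nlinarith
  let s := Nat.find hex
  obtain ⟨F, hF, hFZ, hF0⟩ := Nat.find_spec hex
  have hmin : ∀ t < s, ∀ F : MvPolynomial (Fin 3) ℂ, F.IsHomogeneous t →
      (∀ P ∈ Z, eval (v P) F = 0) → F = 0 := by
    intro t ht F h1 h2
    by_contra h3
    exact Nat.find_min hex ht ⟨F, h1, h2, h3⟩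
  change F.IsHomogeneous s at hF
  have hs1 : 1 ≤ s := by
    by_contra! h
    have h0 : s = 0 := by omega
    rw [h0] at hF
    obtain ⟨P, hP⟩ := hne
    have h1 := totalDegree_eq_zero_iff_eq_C.mp (Nat.le_zero.mp hF.totalDegree_le)
    have h2 := hFZ P hP
    rw [h1, eval_C] at h2
    rw [h2] at h1
    exact hF0 (by simpa using h1)
  refine ⟨s, F, hs1, hF0, hF, hFZ, ?_⟩
  obtain ⟨r, hr1⟩ : ∃ r, s = r + 1 := ⟨s - 1, by omega⟩
  by_cases hsd : 2 * s ≤ d + 1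
  · left
    refine ⟨hsd, ?_⟩
    obtain ⟨j, hj⟩ : ∃ j, d + 1 = 2 * s + j := ⟨d + 1 - 2 * s, by omega⟩
    have h1 := orth hc (a := s + j) (b := r) (by omega) hr
    rw [LinearMap.finrank_range_of_inj (evL_inj (hmin r (by omega))), aux_finrank] at h1
    have h2 := LinearMap.finrank_range_add_finrank_ker (evL v Z (s + j))
    rw [aux_finrank] at h2
    let μ : homogeneousSubmodule (Fin 3) ℂ j →ₗ[ℂ] homogeneousSubmodule (Fin 3) ℂ (s + j) :=
      LinearMap.codRestrict _ ((LinearMap.mulLeft ℂ F).comp (Submodule.subtype _))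
        (fun K => hF.mul K.2)
    have hker : LinearMap.ker (evL v Z (s + j)) ≤ LinearMap.range μ := by
      rintro ⟨G, hG⟩ hGk
      have hGZ : ∀ P ∈ Z, eval (v P) G = 0 := fun P hP => congrFun hGk ⟨P, hP⟩
      suffices hdvd : F ∣ G by
        obtain ⟨K, hK⟩ := hdvd
        by_cases hG0 : G = 0
        · exact ⟨0, by rw [map_zero]; exact Subtype.ext hG0.symm⟩
        · have hG' : G.IsHomogeneous (s + j) := hG
          obtain ⟨x, y, hxy, hx, hy⟩ := homog_factor (hK ▸ hG') (hK ▸ hG0)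
          have := hF.inj_right hx hF0
          have hyj : y = j := by omega
          subst hyj
          exact ⟨⟨K, hy⟩, Subtype.ext hK.symm⟩
      by_contra hnd
      have hG0 : G ≠ 0 := by rintro rfl; exact hnd (dvd_zero _)
      have hG' : G.IsHomogeneous (s + j) := hG
      obtain ⟨F', G', D, hrel, hDF, hDG⟩ :=
        UniqueFactorizationMonoid.exists_reduced_factors F hF0 G
      obtain ⟨t, p, htp, ht, hp⟩ := homog_factor (hDF ▸ hF) (hDF ▸ hF0)
      obtain ⟨t', q, htq, ht', hq⟩ := homog_factor (hDG ▸ hG') (hDG ▸ hG0)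
      have hD0 : D ≠ 0 := left_ne_zero_of_mul (hDF ▸ hF0)
      have hF'0 : F' ≠ 0 := right_ne_zero_of_mul (hDF ▸ hF0)
      have := ht.inj_right ht' hD0
      subst this
      have htlt : t < s := by
        rcases Nat.eq_zero_or_pos p with h0 | h0
        · exfalso
          subst h0
          have h1 := totalDegree_eq_zero_iff_eq_C.mp (Nat.le_zero.mp hp.totalDegree_le)
          have hu : IsUnit F' := by
            rw [h1]
            apply IsUnit.map
            apply IsUnit.mk0
            intro h2
            rw [h2] at h1
            exact hF'0 (by simpa using h1)
          apply hnd
          rw [← hDF, ← hDG]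
          exact mul_dvd_mul_left D hu.dvd
        · omega
      let Z' := Z.filter (fun P => eval (v P) D ≠ 0)
      have hZ'ne : Z'.Nonempty := by
        by_contra h
        rw [Finset.not_nonempty_iff_eq_empty, Finset.filter_eq_empty_iff] at h
        exact hD0 (hmin t htlt D ht (fun P hP => by simpa using h hP))
      have hZ'Z : ∀ P ∈ Z', P ∈ Z := fun P hP => (Finset.mem_filter.mp hP).1
      have hZ'D : ∀ P ∈ Z', eval (v P) D ≠ 0 := fun P hP => (Finset.mem_filter.mp hP).2
      refine sep1 (v := v) (Z := Z') (c := fun P => c P * eval (v P) D) (e := d - t)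
        (p := p) (q := q) (F := F') (G := G')
        ⟨fun P hP => hs.1 P (hZ'Z P hP), fun P hP Q hQ => hs.2 P (hZ'Z P hP) Q (hZ'Z Q hQ)⟩
        hZ'ne (fun P hP => mul_ne_zero (hc P (hZ'Z P hP)) (hZ'D P hP)) hp hq hF'0 hrel ?_ ?_
        (by omega) ?_
      · intro P hP
        have := hFZ P (hZ'Z P hP)
        rw [← hDF, map_mul, mul_eq_zero] at this
        exact this.resolve_left (hZ'D P hP)
      · intro P hP
        have := hGZ P (hZ'Z P hP)
        rw [← hDG, map_mul, mul_eq_zero] at this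
        exact this.resolve_left (hZ'D P hP)
      · intro H hH
        have h1 := ht.mul hH
        rw [show t + (d - t) = d by omega] at h1
        rw [← hr _ h1]
        rw [Finset.sum_filter_of_ne]
        · apply Finset.sum_congr rfl
          intro Q _
          rw [map_mul]; ring
        · intro P _ h2 h3
          simp [h3] at h2
    have h3 := (Submodule.finrank_mono hker).trans (LinearMap.finrank_range_le μ)
    rw [aux_finrank] at h3
    have e1 := two_choose (s + j)
    have e2 := two_choose j
    have e3 := two_choose r
    rw [show d + 3 - s = s + j + 2 by omega]
    rw [hr1] at *
    nlinarith
  · right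
    refine ⟨by omega, ?_⟩
    have h1 := card_of_inj (hmin r (by omega))
    have h2 := two_choose r
    rw [hr1]
    nlinarith

lemma sepLin_rep (Z : Finset (ProjPt 2)) : SepLin (fun P : ProjPt 2 => P.rep) Z := by
  have hex : ∀ P : ProjPt 2, ∃ i, P.rep i ≠ 0 := by
    intro P
    by_contra! h
    exact P.rep_nonzero (_root_.funext h)
  constructor
  · intro P _
    obtain ⟨i, hi⟩ := hex P
    exact ⟨X i, isHomogeneous_X _ _, by simpa using hi⟩
  · intro P _ Q _ hQP
    obtain ⟨j, hj⟩ := hex Q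
    obtain ⟨i, hi⟩ : ∃ i, Q.rep j * P.rep i ≠ Q.rep i * P.rep j := by
      by_contra! h
      apply hQP
      rw [← P.mk_rep, ← Q.mk_rep, eq_comm, Projectivization.mk_eq_mk_iff']
      refine ⟨P.rep j / Q.rep j, ?_⟩
      ext i
      simp only [Pi.smul_apply, smul_eq_mul]
      field_simp
      linear_combination -(h i)
    refine ⟨C (Q.rep j) * X i - C (Q.rep i) * X j,
      (isHomogeneous_C_mul_X _ _).sub (isHomogeneous_C_mul_X _ _), ?_, ?_⟩
    · simp; ring
    · simpa [sub_eq_zero] using hi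

theorem stmt_10 (n k : ℕ) (hn : 5 ≤ n) (hk : 2 ≤ k) (hkn : k ≤ n)
    (S : Set (ProjPt 2)) (hfin : S.Finite)
    (hcard : 5 * S.ncard ≤ (n + k - 2) * (n - 1))
    (hcurve : ∀ t : ℕ, 1 ≤ t →
      ∀ C : MvPolynomial (Fin 3) ℂ, C ≠ 0 → C.IsHomogeneous t →
        (S ∩ {p : ProjPt 2 | VanishesAt C p}).ncard ≤ t * (n + k - 2)) :
    ∀ P ∈ S, ∃ F : MvPolynomial (Fin 3) ℂ,
      F.IsHomogeneous (2 * n + k - 6) ∧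
      (∀ Q ∈ S, Q ≠ P → VanishesAt F Q) ∧ ¬ VanishesAt F P := by
  classical
  intro P hP
  by_contra hcon
  set d := 2 * n + k - 6 with hd
  let T := hfin.toFinset
  let ev : ProjPt 2 → (homogeneousSubmodule (Fin 3) ℂ d →ₗ[ℂ] ℂ) := fun Q =>
    (aeval Q.rep : MvPolynomial (Fin 3) ℂ →ₐ[ℂ] ℂ).toLinearMap ∘ₗ
      (homogeneousSubmodule (Fin 3) ℂ d).subtype
  have hev : ∀ Q F, ev Q F = eval Q.rep F.1 := fun _ _ => rfl
  have hspan : ev P ∈ Submodule.span ℂ (Set.range (fun Q : (T.erase P : Finset _) => ev Q)) := by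
    apply mem_span_of_iInf_ker_le_ker
    intro F hF
    by_contra hFP
    apply hcon
    refine ⟨F.1, F.2, ?_, ?_⟩
    · intro Q hQ hQP
      have := (Submodule.mem_iInf _).mp hF ⟨Q, Finset.mem_erase.mpr ⟨hQP, by simpa [T] using hQ⟩⟩
      exact this
    · exact hFP
  obtain ⟨a, ha⟩ := (Submodule.mem_span_range_iff_exists_fun ℂ).mp hspan
  let c : ProjPt 2 → ℂ := fun Q => if h : Q ∈ T.erase P then a ⟨Q, h⟩ else -1
  have hPT : P ∈ T := by simpa [T] using hP
  have hcP : c P = -1 := by simp [c]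
  let Z := T.filter (fun Q => c Q ≠ 0)
  have hPZ : P ∈ Z := Finset.mem_filter.mpr ⟨hPT, by rw [hcP]; norm_num⟩
  have hrelT : EvRel (fun P : ProjPt 2 => P.rep) T c d := by
    intro H hH
    have h1 := congrArg (fun f => f ⟨H, hH⟩) ha
    simp only [LinearMap.sum_apply, LinearMap.smul_apply, hev, smul_eq_mul] at h1
    rw [← Finset.sum_erase_add _ _ hPT, hcP, ← Finset.sum_coe_sort, ← h1]
    have h2 : ∀ Q : (T.erase P : Finset _), c Q = a Q := by
      intro Q
      simp only [c, dif_pos Q.2]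
    simp only [h2]
    ring
  have hrelZ : EvRel (fun P : ProjPt 2 => P.rep) Z c d := by
    intro H hH
    rw [← hrelT H hH]
    apply Finset.sum_filter_of_ne
    intro Q _ h1 h2
    rw [h2] at h1
    simp at h1
  obtain ⟨s, F, hs1, hF0, hF, hFZ, hor⟩ := main_bound (sepLin_rep Z) ⟨P, hPZ⟩
    (fun Q hQ => (Finset.mem_filter.mp hQ).2) hrelZ
  have hZS : (Z : Set (ProjPt 2)) ⊆ S := by
    intro Q hQ
    have := (Finset.mem_filter.mp (Finset.mem_coe.mp hQ)).1
    simpa [T] using this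
  have hN1 : Z.card ≤ S.ncard := by
    rw [← Set.ncard_coe_finset]
    exact Set.ncard_le_ncard hZS hfin
  have hN2 : Z.card ≤ s * (n + k - 2) := by
    refine le_trans ?_ (hcurve s hs1 F hF0 hF)
    rw [← Set.ncard_coe_finset]
    exact Set.ncard_le_ncard (fun Q hQ => ⟨hZS hQ, hFZ Q hQ⟩) (hfin.inter_of_left _)
  generalize Z.card = N at *
  have hN3 : 5 * N ≤ (n + k - 2) * (n - 1) := by omega
  obtain ⟨m, hm⟩ : ∃ m, n + k - 2 = m := ⟨_, rfl⟩
  obtain ⟨b, hb⟩ : ∃ b, n - 1 = b := ⟨_, rfl⟩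
  rw [hm, hb] at hN3
  rw [hm] at hN2
  have hd' : d + 3 = m + b := by omega
  have hb4 : 4 ≤ b := by omega
  have hmb : b + 1 ≤ m := by omega
  have hmb' : 20 ≤ m * b := by nlinarith
  rcases hor with ⟨h1, h2⟩ | ⟨h1, h2⟩
  · have h3 : d + 3 - s ≤ m := by
      by_contra! h
      have := Nat.mul_lt_mul_of_pos_left h hs1
      omega
    have h4 : b ≤ s := by omega
    have h5 : s ≤ m := by omega
    obtain ⟨x, rfl⟩ := Nat.exists_eq_add_of_le h4
    obtain ⟨y, rfl⟩ := Nat.exists_eq_add_of_le h5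
    rw [show d + 3 - (b + x) = b + y by omega] at h2
    nlinarith
  · have h3 : m + b ≤ 2 * s + 1 := by omega
    zify at *
    nlinarith [sq_nonneg ((m : ℤ) - b)]
end
end

section
/- Let n, r be integers with r ≥ 3, n ≥ 2 and 2r ≥ n, and let Σ ⊂ ℙ²(ℂ) be a finite set such that 4·|Σ| ≤ (2r+n−2)·r and such that, for every integer t ≥ 1 and every nonzero homogeneous polynomial C of degree t in ℂ[x_0,x_1,x_2], at most t(2r+n−2) points of Σ lie on the plane curve {C = 0}. Then for every point P ∈ Σ there exists a homogeneous polynomial of degree 3r+n−5 in ℂ[x_0,x_1,x_2] that vanishes at every point of Σ \ {P} and does not vanish at P. -/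
open MvPolynomial

noncomputable section

/-! ## Bivariate polynomials of bounded total degree, as `K[X][Y]` -/

section Affine

variable {K : Type*} [Field K]

/-- `f ∈ K[X][Y]` has total degree at most `i`. -/
def TD (i : ℕ) (f : Polynomial (Polynomial K)) : Prop :=
  ∀ j l, i < j + l → (f.coeff j).coeff l = 0

/-- The homomorphism `X ↦ X T`, `Y ↦ Y T`. -/
def phi : Polynomial (Polynomial K) →+* Polynomial (Polynomial (Polynomial K)) :=
  Polynomial.eval₂RingHom (R := Polynomial K) (S := Polynomial (Polynomial (Polynomial K)))
    (Polynomial.eval₂RingHom (R := K) (S := Polynomial (Polynomial (Polynomial K)))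
      ((Polynomial.C : Polynomial (Polynomial K) →+* Polynomial (Polynomial (Polynomial K))).comp
        ((Polynomial.C : Polynomial K →+* Polynomial (Polynomial K)).comp
          (Polynomial.C : K →+* Polynomial K)))
      (Polynomial.C (Polynomial.C Polynomial.X) * Polynomial.X))
    (Polynomial.C Polynomial.X * Polynomial.X)

lemma phi_monomial (a b : ℕ) (c : K) :
    phi (Polynomial.monomial a (Polynomial.monomial b c)) =
      Polynomial.monomial (a + b) (Polynomial.monomial a (Polynomial.monomial b c)) := by
  simp only [phi, Polynomial.coe_eval₂RingHom, Polynomial.eval₂_monomial, RingHom.comp_apply]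
  simp only [← Polynomial.C_mul_X_pow_eq_monomial, map_mul, map_pow]
  ring

lemma phi_coeff (f : Polynomial (Polynomial K)) (k j l : ℕ) :
    (((phi f).coeff k).coeff j).coeff l = if k = j + l then (f.coeff j).coeff l else 0 := by
  induction f using Polynomial.induction_on' with
  | add p q hp hq =>
    simp only [map_add, Polynomial.coeff_add, hp, hq]
    split_ifs <;> simp
  | monomial a p =>
    induction p using Polynomial.induction_on' with
    | add p q hp hq =>
      simp only [map_add, Polynomial.coeff_add, hp, hq]
      split_ifs <;> simp
    | monomial b c =>
      rw [phi_monomial]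
      simp only [Polynomial.coeff_monomial]
      by_cases h1 : a = j
      · by_cases h2 : b = l
        · subst h1 h2
          by_cases h3 : k = a + b
          · simp [h3]
          · simp [h3, Ne.symm h3]
        · subst h1
          split_ifs <;> simp [Polynomial.coeff_monomial, h2]
      · split_ifs <;> simp [Polynomial.coeff_monomial, h1]

lemma TD_iff (i : ℕ) (f : Polynomial (Polynomial K)) : TD i f ↔ (phi f).natDegree ≤ i := by
  rw [Polynomial.natDegree_le_iff_coeff_eq_zero]
  constructor
  · intro h k hk
    ext j l
    rw [phi_coeff]
    split_ifs with h1
    · rw [h j l (h1 ▸ hk)]; simp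
    · simp
  · intro h j l hjl
    have := phi_coeff f (j + l) j l
    rw [h _ hjl] at this
    simpa using this.symm

lemma TD.mul {i k : ℕ} {f g : Polynomial (Polynomial K)} (hf : TD i f) (hg : TD k g) :
    TD (i + k) (f * g) := by
  rw [TD_iff] at *
  rw [map_mul]
  exact Polynomial.natDegree_mul_le.trans (add_le_add hf hg)

lemma TD.add {i : ℕ} {f g : Polynomial (Polynomial K)} (hf : TD i f) (hg : TD i g) :
    TD i (f + g) := by
  intro j l h
  simp [hf j l h, hg j l h]

lemma TD.sub {i : ℕ} {f g : Polynomial (Polynomial K)} (hf : TD i f) (hg : TD i g) :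
    TD i (f - g) := by
  intro j l h
  simp [hf j l h, hg j l h]

lemma TD.mono {i k : ℕ} {f : Polynomial (Polynomial K)} (hf : TD i f) (h : i ≤ k) : TD k f :=
  fun j l hjl => hf j l (h.trans_lt hjl)

lemma TD_exists (f : Polynomial (Polynomial K)) : ∃ i, TD i f :=
  ⟨_, (TD_iff _ f).2 le_rfl⟩

lemma TD.of_mul {t i j l : ℕ} {f g : Polynomial (Polynomial K)} (h : TD (t + i) (f * g))
    (hjl : t = j + l) (hf : (f.coeff j).coeff l ≠ 0) : TD i g := by
  rw [TD_iff] at *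
  rw [map_mul] at h
  by_cases hg : phi g = 0
  · simp [hg]
  have h1 : (phi f).coeff t ≠ 0 := by
    intro h0
    have := phi_coeff f t j l
    rw [h0, if_pos hjl] at this
    exact hf (by simpa using this.symm)
  have hf0 : phi f ≠ 0 := by rintro h0; simp [h0] at h1
  rw [Polynomial.natDegree_mul hf0 hg] at h
  have := Polynomial.le_natDegree_of_ne_zero h1
  omega

/-- `C (X - a)` divides. -/
lemma TD.div_line {i : ℕ} {f : Polynomial (Polynomial K)} (hf : TD (i + 1) f) (a : K)
    (h : f.map (Polynomial.evalRingHom a) = 0) :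
    ∃ g, TD i g ∧ f = Polynomial.C (Polynomial.X - Polynomial.C a) * g := by
  have : Polynomial.C (Polynomial.X - Polynomial.C a) ∣ f := by
    rw [Polynomial.C_dvd_iff_dvd_coeff]
    intro j
    rw [Polynomial.dvd_iff_isRoot]
    have := congrArg (fun p => Polynomial.coeff p j) h
    simpa using this
  obtain ⟨g, rfl⟩ := this
  refine ⟨g, ?_, rfl⟩
  rw [add_comm] at hf
  exact hf.of_mul (j := 0) (l := 1) rfl (by simp [Polynomial.coeff_X])

/-- A polynomial in `Y` only. -/
lemma TD_mapC {i : ℕ} {u : Polynomial K} (h : u.natDegree ≤ i) : TD i (u.map Polynomial.C) := by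
  intro j l hjl
  rw [Polynomial.coeff_map, Polynomial.coeff_C]
  split_ifs with h0
  · exact Polynomial.coeff_eq_zero_of_natDegree_lt (by omega)
  · rfl

lemma TD.natDegree_map_le {i : ℕ} {f : Polynomial (Polynomial K)} (hf : TD i f) (a : K) :
    (f.map (Polynomial.evalRingHom a)).natDegree ≤ i := by
  rw [Polynomial.natDegree_le_iff_coeff_eq_zero]
  intro j hj
  have : f.coeff j = 0 := by
    ext l
    exact hf j l (by omega)
  simp [this]

/-- Restriction to the line `X = a`. -/
lemma exists_decomp {s e i : ℕ} {C G f : Polynomial (Polynomial K)} (hCm : C.Monic)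
    (hCs : C.natDegree = s) (hC : TD s C) (hG : TD e G) (a : K)
    (hco : IsCoprime (C.map (Polynomial.evalRingHom a)) (G.map (Polynomial.evalRingHom a)))
    (hi : s + e ≤ i + 2) (hf : TD (i + 1) f) :
    ∃ u v g, f = u * C + v * G + Polynomial.C (Polynomial.X - Polynomial.C a) * g ∧ TD i g := by
  set c := C.map (Polynomial.evalRingHom a) with hc
  set g := G.map (Polynomial.evalRingHom a) with hg
  set f0 := f.map (Polynomial.evalRingHom a) with hf0
  have hcm : c.Monic := hCm.map _
  have hcs : c.natDegree = s := by rw [hc, hCm.natDegree_map, hCs]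
  have hgd : g.natDegree ≤ e := hG.natDegree_map_le a
  have hfd : f0.natDegree ≤ i + 1 := hf.natDegree_map_le a
  have hid : ∀ w : Polynomial K,
      (w.map Polynomial.C).map (Polynomial.evalRingHom a) = w := by
    intro w
    ext j
    simp
  obtain ⟨p, q, hpq⟩ := hco
  rcases Nat.eq_zero_or_pos s with hs0 | hspos
  · -- `C = 1`
    have hC1 : C = 1 := by
      exact Polynomial.eq_one_of_monic_natDegree_zero hCm (by omega)
    exact ⟨f, 0, 0, by simp [hC1], fun j l _ => by simp⟩
  set v := (f0 * q) %ₘ c with hv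
  have hvd : v.natDegree < s := by
    rw [← hcs]
    apply Polynomial.natDegree_modByMonic_lt _ hcm
    intro h1
    rw [h1] at hcs
    simp at hcs
    omega
  set u := f0 * p + ((f0 * q) /ₘ c) * g with hu
  have huv : f0 = u * c + v * g := by
    have h1 := Polynomial.modByMonic_add_div (f0 * q) c
    rw [← hv] at h1
    calc f0 = f0 * (p * c + q * g) := by rw [hpq, mul_one]
      _ = f0 * p * c + (f0 * q) * g := by ring
      _ = _ := by rw [← h1, hu]; ring
  have hvg : (v * g).natDegree ≤ i + 1 := by
    refine Polynomial.natDegree_mul_le.trans ?_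
    omega
  have hucd : u * c = f0 - v * g := by rw [huv]; ring
  have hud : u = 0 ∨ u.natDegree + s ≤ i + 1 := by
    by_cases h0 : u = 0
    · exact Or.inl h0
    right
    rw [← hcs, add_comm, ← hcm.natDegree_mul' h0, mul_comm c u, hucd]
    exact (Polynomial.natDegree_sub_le _ _).trans (max_le hfd hvg)
  have hTu : TD (i + 1) (u.map Polynomial.C * C) := by
    rcases hud with h0 | h0
    · rw [h0]; intro j l _; simp
    · exact ((TD_mapC le_rfl).mul hC).mono h0
  have hTv : TD (i + 1) (v.map Polynomial.C * G) :=
    ((TD_mapC le_rfl).mul hG).mono (by omega)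
  have hrest := (hf.sub hTu).sub hTv
  obtain ⟨w, hw, hw'⟩ := hrest.div_line a (by
    rw [Polynomial.map_sub, Polynomial.map_sub, Polynomial.map_mul, Polynomial.map_mul,
      hid, hid, ← hc, ← hg, ← hf0, huv]
    ring)
  refine ⟨u.map Polynomial.C, v.map Polynomial.C, w, ?_, hw⟩
  rw [← hw']
  ring

end Affine
section Affine2

variable {K : Type*} [Field K]

/-- The gcd over `K(X)` of a monic `C` and `G`, brought back to `K[X][Y]`. -/
lemma exists_gcd (C G : Polynomial (Polynomial K)) (hC : C.Monic) :
    ∃ D C' G' : Polynomial (Polynomial K), D.Monic ∧ C'.Monic ∧ C = D * C' ∧ G = D * G' ∧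
      ∃ u v, ∃ R : Polynomial K, R ≠ 0 ∧ u * C' + v * G' = Polynomial.C R := by
  classical
  let L := FractionRing (Polynomial K)
  let ψ := algebraMap (Polynomial K) L
  have hinj : Function.Injective ψ := IsFractionRing.injective _ _
  have hcm : (C.map ψ).Monic := hC.map _
  let d := EuclideanDomain.gcd (C.map ψ) (G.map ψ)
  have hd1 : d ∣ C.map ψ := EuclideanDomain.gcd_dvd_left _ _
  have hd2 : d ∣ G.map ψ := EuclideanDomain.gcd_dvd_right _ _
  have hd0 : d ≠ 0 := ne_zero_of_dvd_ne_zero hcm.ne_zero hd1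
  obtain ⟨D, hD⟩ := IsIntegrallyClosed.eq_map_mul_C_of_dvd L hC hd1
  have hlc : d.leadingCoeff ≠ 0 := Polynomial.leadingCoeff_ne_zero.2 hd0
  have hDm : D.Monic := by
    have h1 := congrArg Polynomial.leadingCoeff hD
    rw [Polynomial.leadingCoeff_mul, Polynomial.leadingCoeff_C] at h1
    have h2 : (D.map ψ).Monic := mul_right_cancel₀ hlc (h1.trans (one_mul _).symm)
    exact Polynomial.monic_of_injective hinj h2
  have hDd : D.map ψ ∣ d := ⟨_, hD.symm⟩
  obtain ⟨C', hC'⟩ := (Polynomial.map_dvd_map ψ hinj hDm).1 (hDd.trans hd1)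
  obtain ⟨G', hG'⟩ := (Polynomial.map_dvd_map ψ hinj hDm).1 (hDd.trans hd2)
  refine ⟨D, C', G', hDm, hDm.of_mul_monic_left (hC' ▸ hC), hC', hG', ?_⟩
  have hb : d = C.map ψ * EuclideanDomain.gcdA (C.map ψ) (G.map ψ) +
      G.map ψ * EuclideanDomain.gcdB (C.map ψ) (G.map ψ) := EuclideanDomain.gcd_eq_gcd_ab _ _
  set p := EuclideanDomain.gcdA (C.map ψ) (G.map ψ)
  set q := EuclideanDomain.gcdB (C.map ψ) (G.map ψ)
  have hD0 : D.map ψ ≠ 0 := (hDm.map ψ).ne_zero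
  have hb2 : Polynomial.C d.leadingCoeff = C'.map ψ * p + G'.map ψ * q := by
    apply mul_left_cancel₀ hD0
    rw [hD, hb]
    conv_lhs => rw [hC', hG']
    rw [Polynomial.map_mul, Polynomial.map_mul]
    ring
  have hb3 : (1 : Polynomial L) = C'.map ψ * (p * Polynomial.C d.leadingCoeff⁻¹) +
      G'.map ψ * (q * Polynomial.C d.leadingCoeff⁻¹) := by
    rw [← mul_assoc, ← mul_assoc, ← add_mul, ← hb2, ← Polynomial.C_mul, mul_inv_cancel₀ hlc,
      Polynomial.C_1]
  obtain ⟨b1, hb1, e1⟩ := IsLocalization.integerNormalization_spec (nonZeroDivisors (Polynomial K))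
    (p * Polynomial.C d.leadingCoeff⁻¹)
  obtain ⟨b2, hb2', e2⟩ := IsLocalization.integerNormalization_spec
    (nonZeroDivisors (Polynomial K)) (q * Polynomial.C d.leadingCoeff⁻¹)
  set u := IsLocalization.integerNormalization (nonZeroDivisors (Polynomial K))
    (p * Polynomial.C d.leadingCoeff⁻¹)
  set v := IsLocalization.integerNormalization (nonZeroDivisors (Polynomial K))
    (q * Polynomial.C d.leadingCoeff⁻¹)
  refine ⟨Polynomial.C b2 * u, Polynomial.C b1 * v, b1 * b2,
    mul_ne_zero (nonZeroDivisors.ne_zero hb1) (nonZeroDivisors.ne_zero hb2'), ?_⟩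
  apply Polynomial.map_injective ψ hinj
  have e1' : u.map ψ = Polynomial.C (ψ b1) * (p * Polynomial.C d.leadingCoeff⁻¹) := by
    rw [e1, ← Polynomial.smul_eq_C_mul, algebraMap_smul]
  have e2' : v.map ψ = Polynomial.C (ψ b2) * (q * Polynomial.C d.leadingCoeff⁻¹) := by
    rw [e2, ← Polynomial.smul_eq_C_mul, algebraMap_smul]
  simp only [Polynomial.map_add, Polynomial.map_mul, Polynomial.map_C, e1', e2', map_mul]
  linear_combination (-(Polynomial.C (ψ b1) * Polynomial.C (ψ b2))) * hb3

/-- A complete intersection of type `(s, e)` is `(s + e - 2)`-regular. -/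
lemma CI [Infinite K] {ι : Type*} [Fintype ι] (x y μ : ι → K)
    (hinj : ∀ i j, x i = x j → y i = y j → i = j)
    {s e m : ℕ} {C G : Polynomial (Polynomial K)} (hCm : C.Monic) (hCs : C.natDegree = s)
    (hC : TD s C) (hG : TD e G)
    (hco : ∃ u v, ∃ R : Polynomial K, R ≠ 0 ∧ u * C + v * G = Polynomial.C R)
    (hC0 : ∀ q, μ q ≠ 0 → C.evalEval (x q) (y q) = 0)
    (hG0 : ∀ q, μ q ≠ 0 → G.evalEval (x q) (y q) = 0)
    (hm : s + e ≤ m + 2)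
    (hann : ∀ f, TD m f → ∑ q, μ q * f.evalEval (x q) (y q) = 0) : ∀ q, μ q = 0 := by
  classical
  obtain ⟨u, v, R, hR, huv⟩ := hco
  obtain ⟨a, ha⟩ : ∃ a, R.eval a ≠ 0 := by
    by_contra! h
    exact hR (Polynomial.funext (by simpa using h))
  have hcop : IsCoprime (C.map (Polynomial.evalRingHom a)) (G.map (Polynomial.evalRingHom a)) := by
    refine ⟨Polynomial.C (R.eval a)⁻¹ * u.map (Polynomial.evalRingHom a),
      Polynomial.C (R.eval a)⁻¹ * v.map (Polynomial.evalRingHom a), ?_⟩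
    have := congrArg (Polynomial.map (Polynomial.evalRingHom a)) huv
    simp only [Polynomial.map_add, Polynomial.map_mul, Polynomial.map_C,
      Polynomial.coe_evalRingHom] at this
    rw [mul_assoc, mul_assoc, ← mul_add, this, ← Polynomial.C_mul, inv_mul_cancel₀ ha,
      Polynomial.C_1]
  have hxa : ∀ q, μ q ≠ 0 → x q - a ≠ 0 := by
    intro q hq h
    have hx : x q = a := sub_eq_zero.1 h
    have := congrArg (Polynomial.evalEval (x q) (y q)) huv
    simp only [Polynomial.evalEval_add, Polynomial.evalEval_mul, hC0 q hq, hG0 q hq,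
      Polynomial.evalEval_C] at this
    apply ha
    rw [← hx, ← this]
    ring
  have key : ∀ j, ∀ f, TD (m + j) f →
      ∑ q, μ q * ((x q - a) ^ j)⁻¹ * f.evalEval (x q) (y q) = 0 := by
    intro j
    induction j with
    | zero => intro f hf; simpa using hann f hf
    | succ j ih =>
      intro f hf
      obtain ⟨u, v, g, hfe, hg⟩ := exists_decomp hCm hCs hC hG a hcop
        (i := m + j) (by omega) hf
      rw [← ih g hg]
      refine Finset.sum_congr rfl fun q _ => ?_
      by_cases hq : μ q = 0
      · simp [hq]
      have h1 := hxa q hq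
      rw [hfe]
      simp only [Polynomial.evalEval_add, Polynomial.evalEval_mul, hC0 q hq, hG0 q hq,
        Polynomial.evalEval_C, Polynomial.eval_sub, Polynomial.eval_X, Polynomial.eval_C]
      field_simp
      ring
  intro q
  by_contra hq
  -- a polynomial separating `q`
  have hsep : ∀ p, ∃ f : Polynomial (Polynomial K), p ≠ q →
      f.evalEval (x p) (y p) = 0 ∧ f.evalEval (x q) (y q) ≠ 0 := by
    intro p
    by_cases hx : x p = x q
    · refine ⟨Polynomial.X - Polynomial.C (Polynomial.C (y p)), fun hpq => ?_⟩
      have hy : y p ≠ y q := fun h => hpq (hinj _ _ hx h)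
      simp [Polynomial.evalEval_sub, sub_eq_zero, hy.symm]
    · refine ⟨Polynomial.C (Polynomial.X - Polynomial.C (x p)), fun hpq => ?_⟩
      simp only [Polynomial.evalEval_C, Polynomial.eval_sub, Polynomial.eval_X, Polynomial.eval_C]
      exact ⟨sub_self _, sub_ne_zero.2 (Ne.symm hx)⟩
  choose F hF using hsep
  obtain ⟨i, hi⟩ := TD_exists (∏ p ∈ Finset.univ.erase q, F p)
  have h1 := key i _ (hi.mono (by omega))
  have hprod : ∀ a b, (∏ p ∈ Finset.univ.erase q, F p).evalEval a b =
      ∏ p ∈ Finset.univ.erase q, (F p).evalEval a b := by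
    intro a b
    exact map_prod (Polynomial.evalEvalRingHom a b) _ _
  rw [Finset.sum_eq_single q] at h1
  · rw [hprod] at h1
    have h2 : ∏ p ∈ Finset.univ.erase q, (F p).evalEval (x q) (y q) ≠ 0 :=
      Finset.prod_ne_zero_iff.2 fun p hp => (hF p (Finset.ne_of_mem_erase hp)).2
    exact mul_ne_zero (mul_ne_zero hq (inv_ne_zero (pow_ne_zero _ (hxa q hq)))) h2 h1
  · intro p _ hp
    rw [hprod, Finset.prod_eq_zero (Finset.mem_erase.2 ⟨hp, Finset.mem_univ _⟩) (hF p hp).1,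
      mul_zero]
  · simp

/-- `f` is supported on `X^l Y^j` with `j < k`, `l < a j`. -/
def Box (k : ℕ) (a : ℕ → ℕ) (f : Polynomial (Polynomial K)) : Prop :=
  ∀ j l, ¬ (j < k ∧ l < a j) → (f.coeff j).coeff l = 0

/-- Polynomial with prescribed coefficients in a box. -/
def boxPoly (k : ℕ) (a : ℕ → ℕ) :
    ((Σ j : Fin k, Fin (a j)) → K) →ₗ[K] Polynomial (Polynomial K) :=
  LinearMap.lsum K _ K fun p : (Σ j : Fin k, Fin (a j)) =>
    ((Polynomial.monomial (p.1 : ℕ)).restrictScalars K ∘ₗ Polynomial.monomial (p.2 : ℕ))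

lemma boxPoly_apply (k : ℕ) (a : ℕ → ℕ) (c : (Σ j : Fin k, Fin (a j)) → K) :
    boxPoly k a c = ∑ p : (Σ j : Fin k, Fin (a j)),
      Polynomial.monomial (p.1 : ℕ) (Polynomial.monomial (p.2 : ℕ) (c p)) := by
  simp [boxPoly]

lemma boxPoly_coeff (k : ℕ) (a : ℕ → ℕ) (c : (Σ j : Fin k, Fin (a j)) → K)
    (q : Σ j : Fin k, Fin (a j)) :
    ((boxPoly k a c).coeff q.1).coeff q.2 = c q := by
  rw [boxPoly_apply, Polynomial.finsetSum_coeff, Polynomial.finsetSum_coeff, Finset.sum_eq_single q]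
  · simp
  · rintro ⟨j, l⟩ _ hp
    obtain ⟨j', l'⟩ := q
    by_cases h1 : (j : ℕ) = j'
    · obtain rfl := Fin.ext h1
      have : (l : ℕ) ≠ l' := fun h => hp (by rw [Fin.ext h])
      simp [Polynomial.coeff_monomial, this]
    · simp [Polynomial.coeff_monomial, h1]
  · simp

lemma boxPoly_box (k : ℕ) (a : ℕ → ℕ) (c : (Σ j : Fin k, Fin (a j)) → K) :
    Box k a (boxPoly k a c) := by
  intro j l h
  rw [boxPoly_apply, Polynomial.finsetSum_coeff, Polynomial.finsetSum_coeff]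
  refine Finset.sum_eq_zero ?_
  rintro ⟨j', l'⟩ _
  by_cases h1 : (j' : ℕ) = j
  · subst h1
    have : (l' : ℕ) ≠ l := fun h2 => h ⟨j'.2, h2 ▸ l'.2⟩
    simp [Polynomial.coeff_monomial, this]
  · simp [Polynomial.coeff_monomial, h1]

/-- Evaluation on box polynomials. -/
def boxEval {ι : Type*} (x y : ι → K) (k : ℕ) (a : ℕ → ℕ) :
    ((Σ j : Fin k, Fin (a j)) → K) →ₗ[K] (ι → K) where
  toFun c q := (boxPoly k a c).evalEval (x q) (y q)
  map_add' c d := by ext q; simp [Polynomial.evalEval_add]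
  map_smul' t c := by
    ext q
    rw [map_smul]
    simp [Polynomial.evalEval, Polynomial.eval_smul]

lemma boxEval_injective {ι : Type*} (x y : ι → K) (k : ℕ) (a : ℕ → ℕ)
    (h : ∀ f, Box k a f → (∀ q, f.evalEval (x q) (y q) = 0) → f = 0) :
    Function.Injective (boxEval x y k a) := by
  rw [injective_iff_map_eq_zero]
  intro c hc
  have h0 := h _ (boxPoly_box k a c) (fun q => congrFun hc q)
  ext q
  rw [← boxPoly_coeff k a c q, h0]
  simp

lemma rank_add_le {ι V W : Type*} [Fintype ι] [AddCommGroup V] [Module K V] [AddCommGroup W]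
    [Module K W] [FiniteDimensional K V] [FiniteDimensional K W]
    (mu : ι → K) (hmu : ∀ i, mu i ≠ 0) (E : V →ₗ[K] (ι → K)) (F : W →ₗ[K] (ι → K))
    (hE : Function.Injective E) (hF : Function.Injective F)
    (horth : ∀ v w, ∑ i, mu i * (E v i * F w i) = 0) :
    Module.finrank K V + Module.finrank K W ≤ Fintype.card ι := by
  classical
  let T : (ι → K) →ₗ[K] Module.Dual K (ι → K) :=
    LinearMap.mk₂ K (fun u w => ∑ i, mu i * (w i * u i))
      (by intro a b c; simp [mul_add, Finset.sum_add_distrib])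
      (by intro t a b; simp only [Pi.smul_apply, smul_eq_mul, Finset.mul_sum]
          exact Finset.sum_congr rfl fun _ _ => by ring)
      (by intro a b c; simp [mul_add, add_mul, Finset.sum_add_distrib])
      (by intro t a b; simp only [Pi.smul_apply, smul_eq_mul, Finset.mul_sum]
          exact Finset.sum_congr rfl fun _ _ => by ring)
  have hTapp : ∀ u w, T u w = ∑ i, mu i * (w i * u i) := fun _ _ => rfl
  have hTi : Function.Injective T := by
    rw [injective_iff_map_eq_zero]
    intro u hu
    ext i
    have := congrArg (fun φ => φ (Pi.single i 1)) hu
    simp only [hTapp] at this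
    rw [Finset.sum_eq_single i] at this
    · simpa [hmu i] using this
    · intro j _ hj; simp [hj]
    · simp
  have hTs : Function.Surjective T := by
    rw [← LinearMap.injective_iff_surjective_of_finrank_eq_finrank]
    · exact hTi
    · exact (Subspace.dual_finrank_eq).symm
  let B : (ι → K) →ₗ[K] Module.Dual K V := E.dualMap ∘ₗ T
  have hBs : Function.Surjective B :=
    (LinearMap.dualMap_surjective_of_injective hE).comp hTs
  have h1 := LinearMap.finrank_range_add_finrank_ker B
  rw [LinearMap.range_eq_top.2 hBs, finrank_top, Subspace.dual_finrank_eq,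
    Module.finrank_fintype_fun_eq_card] at h1
  have h2 : LinearMap.range F ≤ LinearMap.ker B := by
    rintro _ ⟨w, rfl⟩
    rw [LinearMap.mem_ker]
    ext v
    exact horth v w
  have h3 := Submodule.finrank_mono h2
  rw [LinearMap.finrank_range_of_inj hF] at h3
  omega

lemma box_bound {ι : Type*} [Fintype ι] (x y mu : ι → K) (hmu : ∀ i, mu i ≠ 0)
    (k1 k2 : ℕ) (a1 a2 : ℕ → ℕ)
    (h1 : ∀ f, Box k1 a1 f → (∀ q, f.evalEval (x q) (y q) = 0) → f = 0)
    (h2 : ∀ f, Box k2 a2 f → (∀ q, f.evalEval (x q) (y q) = 0) → f = 0)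
    (horth : ∀ f g, Box k1 a1 f → Box k2 a2 g →
      ∑ q, mu q * (f * g).evalEval (x q) (y q) = 0) :
    ∑ j ∈ Finset.range k1, a1 j + ∑ j ∈ Finset.range k2, a2 j ≤ Fintype.card ι := by
  have := rank_add_le mu hmu _ _ (boxEval_injective x y k1 a1 h1)
    (boxEval_injective x y k2 a2 h2) (by
      intro v w
      have := horth _ _ (boxPoly_box k1 a1 v) (boxPoly_box k2 a2 w)
      simp only [Polynomial.evalEval_mul] at this
      exact this)
  simpa [Module.finrank_fintype_fun_eq_card, Finset.sum_range] using this

lemma Box.TD {k i : ℕ} {a : ℕ → ℕ} {f : Polynomial (Polynomial K)} (hf : Box k a f)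
    (h : ∀ j l, j < k → l < a j → j + l ≤ i) : TD i f := by
  intro j l hjl
  apply hf
  rintro ⟨h1, h2⟩
  have := h j l h1 h2
  omega

lemma sum_tri (k : ℕ) : 2 * ∑ j ∈ Finset.range k, (k - j) = k * (k + 1) := by
  rw [← Finset.sum_range_reflect]
  have : ∑ j ∈ Finset.range k, (k - (k - 1 - j)) = ∑ j ∈ Finset.range k, (j + 1) :=
    Finset.sum_congr rfl fun j hj => by
      have := Finset.mem_range.1 hj
      omega
  rw [this]
  clear this
  induction k with
  | zero => simp
  | succ k ih => rw [Finset.sum_range_succ, mul_add, ih]; ring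

lemma sum_trap (k b : ℕ) (h : k ≤ b) :
    2 * ∑ j ∈ Finset.range k, (b - j) + k * k = k * (2 * b + 1) := by
  induction k with
  | zero => simp
  | succ k ih =>
    rw [Finset.sum_range_succ]
    have h1 := ih (by omega)
    obtain ⟨d, rfl⟩ := Nat.exists_eq_add_of_le (show k ≤ b by omega)
    rw [show k + d - k = d by omega]
    nlinarith

/-- First bound. -/
lemma bound_one {ι : Type*} [Fintype ι] (x y mu : ι → K) (hmu : ∀ i, mu i ≠ 0) (m k : ℕ)
    (hk : 1 ≤ k) (hkm : 2 * k ≤ m + 2)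
    (hann : ∀ f, TD m f → ∑ q, mu q * f.evalEval (x q) (y q) = 0)
    (hmin : ∀ f, TD (k - 1) f → (∀ q, f.evalEval (x q) (y q) = 0) → f = 0) :
    k * (k + 1) ≤ Fintype.card ι := by
  have hT : ∀ f : Polynomial (Polynomial K), Box k (fun j => k - j) f → TD (k - 1) f :=
    fun f hf => hf.TD (fun j l h1 h2 => by omega)
  have := box_bound x y mu hmu k k (fun j => k - j) (fun j => k - j)
    (fun f hf => hmin f (hT f hf)) (fun f hf => hmin f (hT f hf))
    (fun f g hf hg => hann _ (((hT f hf).mul (hT g hg)).mono (by omega)))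
  have h2 := sum_tri k
  omega

/-- Everything of low degree through the points is divisible by `C`. -/
lemma dvd_of_vanish [Infinite K] {ι : Type*} [Fintype ι] (x y mu : ι → K)
    (hmu : ∀ i, mu i ≠ 0)
    (hinj : ∀ i j, x i = x j → y i = y j → i = j) (m s : ℕ)
    (hs : 1 ≤ s) (hsm : 2 * s ≤ m + 2)
    (hann : ∀ f, TD m f → ∑ q, mu q * f.evalEval (x q) (y q) = 0)
    (hmin : ∀ f, TD (s - 1) f → (∀ q, f.evalEval (x q) (y q) = 0) → f = 0)
    (C : Polynomial (Polynomial K)) (hCm : C.Monic) (hCs : C.natDegree = s) (hC : TD s C)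
    (hC0 : ∀ q, C.evalEval (x q) (y q) = 0)
    (G : Polynomial (Polynomial K)) (hG : TD (m + 2 - s) G)
    (hG0 : ∀ q, G.evalEval (x q) (y q) = 0) : C ∣ G := by
  obtain ⟨D, C', G', hDm, hC'm, rfl, rfl, hco⟩ := exists_gcd C G hCm
  have hdeg : D.natDegree + C'.natDegree = s := by rw [← hDm.natDegree_mul hC'm, hCs]
  set t := D.natDegree with ht
  by_cases hts : t = s
  · have : C' = 1 := Polynomial.eq_one_of_monic_natDegree_zero hC'm (by omega)
    rw [this]
    exact mul_dvd_mul_left _ (one_dvd _)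
  exfalso
  have hDc : (D.coeff t).coeff 0 ≠ 0 := by
    rw [ht, hDm.coeff_natDegree]; simp
  have hC'c : (C'.coeff C'.natDegree).coeff 0 ≠ 0 := by
    rw [hC'm.coeff_natDegree]; simp
  have hC'T : TD (s - t) C' := by
    rw [show s = t + (s - t) by omega] at hC
    exact hC.of_mul (by omega) hDc
  have hDT : TD t D := by
    rw [show s = (s - t) + t by omega, mul_comm] at hC
    exact hC.of_mul (by omega) hC'c
  have hG'T : TD (m + 2 - s - t) G' := by
    rw [show m + 2 - s = t + (m + 2 - s - t) by omega] at hG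
    exact hG.of_mul (by omega) hDc
  have hmu0 := CI x y (fun q => mu q * D.evalEval (x q) (y q)) hinj (s := s - t)
    (e := m + 2 - s - t) (m := m - t) hC'm (by omega) hC'T hG'T hco
    (by
      intro q hq
      have := hC0 q
      rw [Polynomial.evalEval_mul] at this
      exact (mul_eq_zero.1 this).resolve_left (right_ne_zero_of_mul hq))
    (by
      intro q hq
      have := hG0 q
      rw [Polynomial.evalEval_mul] at this
      exact (mul_eq_zero.1 this).resolve_left (right_ne_zero_of_mul hq))
    (by omega)
    (by
      intro f hf
      have := hann _ ((hDT.mul hf).mono (by omega))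
      simpa only [Polynomial.evalEval_mul, mul_assoc] using this)
  exact hDm.ne_zero (hmin D (hDT.mono (by omega))
    (fun q => (mul_eq_zero.1 (hmu0 q)).resolve_left (hmu q)))

/-- Second bound. -/
lemma bound_two [Infinite K] {ι : Type*} [Fintype ι] (x y mu : ι → K)
    (hmu : ∀ i, mu i ≠ 0)
    (hinj : ∀ i j, x i = x j → y i = y j → i = j) (m s : ℕ)
    (hs : 1 ≤ s) (hsm : 2 * s ≤ m + 2)
    (hann : ∀ f, TD m f → ∑ q, mu q * f.evalEval (x q) (y q) = 0)
    (hmin : ∀ f, TD (s - 1) f → (∀ q, f.evalEval (x q) (y q) = 0) → f = 0)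
    (C : Polynomial (Polynomial K)) (hCm : C.Monic) (hCs : C.natDegree = s) (hC : TD s C)
    (hC0 : ∀ q, C.evalEval (x q) (y q) = 0) :
    s * (m + 3 - s) ≤ Fintype.card ι := by
  have hT1 : ∀ f : Polynomial (Polynomial K), Box s (fun j => s - j) f → TD (s - 1) f :=
    fun f hf => hf.TD (fun j l h1 h2 => by omega)
  have hT2 : ∀ f : Polynomial (Polynomial K), Box s (fun j => m + 2 - s - j) f →
      TD (m + 1 - s) f :=
    fun f hf => hf.TD (fun j l h1 h2 => by omega)
  have := box_bound x y mu hmu s s (fun j => s - j) (fun j => m + 2 - s - j)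
    (fun f hf => hmin f (hT1 f hf))
    (by
      intro f hf hf0
      have hdvd := dvd_of_vanish x y mu hmu hinj m s hs hsm hann hmin C hCm hCs hC hC0 f
        ((hT2 f hf).mono (by omega)) hf0
      by_contra hne
      have h1 : C.natDegree ≤ f.natDegree := by
        obtain ⟨w, rfl⟩ := hdvd
        have hw : w ≠ 0 := by rintro rfl; simp at hne
        rw [hCm.natDegree_mul' hw]
        omega
      apply hne
      apply Polynomial.leadingCoeff_eq_zero.1
      ext l
      exact hf _ _ (by rintro ⟨h2, _⟩; omega))
    (fun f g hf hg => hann _ (((hT1 f hf).mul (hT2 g hg)).mono (by omega)))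
  have h2 := sum_tri s
  have h3 := sum_trap s (m + 2 - s) (by omega)
  obtain ⟨d, hd⟩ := Nat.exists_eq_add_of_le (show s ≤ m + 2 - s by omega)
  rw [show m + 3 - s = s + d + 1 by omega]
  rw [hd] at h3
  simp only [hd] at this
  nlinarith

end Affine2
section Chart

variable {K : Type*} [Field K]

lemma exists_chart [Infinite K] {ι : Type*} [Finite ι] [Nonempty ι] (v : ι → Fin 3 → K) (p : Fin 3 → K)
    (hp : p ≠ 0) (hv : ∀ q, v q ∉ Submodule.span K {p}) :
    ∃ b : Module.Basis (Fin 3) K (Fin 3 → K), b 2 = p ∧ ∀ q, b.repr (v q) 0 ≠ 0 := by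
  classical
  obtain ⟨f, hf⟩ := Module.exists_dual_forall_apply_ne_zero (K := K)
    (fun q => (Submodule.span K {p}).mkQ (v q)) (fun q h => hv q (by simpa using h))
  let L : (Fin 3 → K) →ₗ[K] K := f ∘ₗ (Submodule.span K {p}).mkQ
  have hL : ∀ q, L (v q) ≠ 0 := hf
  have hLp : L p = 0 := by
    have : (Submodule.span K {p}).mkQ p = 0 := by
      simp [Submodule.mem_span_singleton_self]
    simp only [L, LinearMap.comp_apply, this, map_zero]
  obtain ⟨q0⟩ := ‹Nonempty ι›
  obtain ⟨e0, he0⟩ : ∃ e0, L e0 = 1 :=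
    ⟨(L (v q0))⁻¹ • v q0, by rw [map_smul, smul_eq_mul, inv_mul_cancel₀ (hL q0)]⟩
  obtain ⟨e1, he1, he1'⟩ : ∃ e1 ∈ LinearMap.ker L, e1 ∉ Submodule.span K {p} := by
    by_contra! h
    have h1 : LinearMap.ker L ≤ Submodule.span K {p} := h
    have h2 := Submodule.finrank_mono h1
    have h3 := LinearMap.finrank_range_add_finrank_ker L
    have h4 : Module.finrank K (LinearMap.range L) ≤ 1 := by
      simpa using Submodule.finrank_le (LinearMap.range L)
    rw [finrank_span_singleton hp] at h2
    simp at h3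
    omega
  have hli : LinearIndependent K ![e0, e1, p] := by
    rw [Fintype.linearIndependent_iff]
    intro g hg
    simp only [Fin.sum_univ_three, Matrix.cons_val_zero, Matrix.cons_val_one,
      Matrix.cons_val] at hg
    have h0 : g 0 = 0 := by
      have := congrArg L hg
      simpa [he0, hLp, LinearMap.mem_ker.1 he1] using this
    rw [h0, zero_smul, zero_add] at hg
    have h1 : g 1 = 0 := by
      by_contra h1
      apply he1'
      rw [Submodule.mem_span_singleton]
      refine ⟨-(g 1)⁻¹ * g 2, ?_⟩
      have : g 2 • p = - (g 1 • e1) := eq_neg_of_add_eq_zero_right hg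
      rw [mul_smul, this, smul_neg, neg_smul, neg_neg, smul_smul, inv_mul_cancel₀ h1, one_smul]
    rw [h1, zero_smul, zero_add] at hg
    have h2 : g 2 = 0 := (smul_eq_zero.1 hg).resolve_right hp
    intro i
    fin_cases i <;> assumption
  let b := basisOfLinearIndependentOfCardEqFinrank hli (by simp)
  have hb : ∀ i, b i = ![e0, e1, p] i := fun i => by simp [b]
  refine ⟨b, by simp [hb], fun q => ?_⟩
  have h1 := congrArg L (b.sum_repr (v q))
  simp only [Fin.sum_univ_three, map_add, map_smul, hb, Matrix.cons_val_zero, Matrix.cons_val_one,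
      Matrix.cons_val, he0, hLp, LinearMap.mem_ker.1 he1, mul_zero, add_zero, smul_eq_mul,
      mul_one] at h1
  rw [h1]
  exact hL q

/-- The linear form computing the `k`-th coordinate. -/
def linForm (b : Module.Basis (Fin 3) K (Fin 3 → K)) (k : Fin 3) : MvPolynomial (Fin 3) K :=
  ∑ i, MvPolynomial.C (b.repr (Pi.single i 1) k) * MvPolynomial.X i

lemma linForm_homog (b : Module.Basis (Fin 3) K (Fin 3 → K)) (k : Fin 3) :
    (linForm b k).IsHomogeneous 1 := by
  apply MvPolynomial.IsHomogeneous.sum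
  intro i _
  simpa using (MvPolynomial.isHomogeneous_C (Fin 3) (b.repr (Pi.single i 1) k)).mul
    (MvPolynomial.isHomogeneous_X K i)

lemma linForm_eval (b : Module.Basis (Fin 3) K (Fin 3 → K)) (k : Fin 3) (v : Fin 3 → K) :
    MvPolynomial.eval v (linForm b k) = b.repr v k := by
  conv_rhs => rw [pi_eq_sum_univ' v]
  simp [linForm, mul_comm, Fin.sum_univ_three]

/-- Homogenization. -/
def homog (b : Module.Basis (Fin 3) K (Fin 3 → K)) (i : ℕ) (f : Polynomial (Polynomial K)) :
    MvPolynomial (Fin 3) K :=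
  ∑ j ∈ Finset.range (i + 1), ∑ l ∈ Finset.range (i + 1 - j),
    MvPolynomial.C ((f.coeff j).coeff l) *
      (linForm b 0 ^ (i - j - l) * (linForm b 1 ^ l * linForm b 2 ^ j))

lemma homog_homog (b : Module.Basis (Fin 3) K (Fin 3 → K)) (i : ℕ)
    (f : Polynomial (Polynomial K)) : (homog b i f).IsHomogeneous i := by
  apply MvPolynomial.IsHomogeneous.sum
  intro j hj
  apply MvPolynomial.IsHomogeneous.sum
  intro l hl
  rw [Finset.mem_range] at hj hl
  have := (MvPolynomial.isHomogeneous_C (Fin 3) ((f.coeff j).coeff l)).mul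
    (((linForm_homog b 0).pow (i - j - l)).mul
      (((linForm_homog b 1).pow l).mul ((linForm_homog b 2).pow j)))
  convert this using 1
  omega

lemma homog_eval (b : Module.Basis (Fin 3) K (Fin 3 → K)) (i : ℕ)
    (f : Polynomial (Polynomial K)) (hf : TD i f) (v : Fin 3 → K) (hv : b.repr v 0 ≠ 0) :
    MvPolynomial.eval v (homog b i f) = b.repr v 0 ^ i *
      f.evalEval (b.repr v 1 / b.repr v 0) (b.repr v 2 / b.repr v 0) := by
  have hfd : f.natDegree < i + 1 := by
    rw [Nat.lt_succ_iff, Polynomial.natDegree_le_iff_coeff_eq_zero]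
    intro j hj
    ext l
    exact hf j l (by omega)
  rw [Polynomial.evalEval, Polynomial.eval_eq_sum_range' hfd, Polynomial.eval_finsetSum,
    Finset.mul_sum, homog, map_sum]
  refine Finset.sum_congr rfl fun j hj => ?_
  rw [Finset.mem_range] at hj
  have hjd : (f.coeff j).natDegree < i + 1 - j := by
    rw [show i + 1 - j = (i - j) + 1 by omega, Nat.lt_succ_iff,
      Polynomial.natDegree_le_iff_coeff_eq_zero]
    intro l hl
    exact hf j l (by omega)
  rw [Polynomial.eval_mul, Polynomial.eval_pow, Polynomial.eval_C,
    Polynomial.eval_eq_sum_range' hjd, Finset.sum_mul, Finset.mul_sum, map_sum]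
  refine Finset.sum_congr rfl fun l hl => ?_
  rw [Finset.mem_range] at hl
  simp only [map_mul, map_pow, MvPolynomial.eval_C, linForm_eval]
  obtain ⟨d, hd⟩ := Nat.exists_eq_add_of_le (show j + l ≤ i by omega)
  rw [show i - j - l = d by omega, hd, div_pow, div_pow, pow_add, pow_add]
  field_simp

lemma homog_ne_zero [Infinite K] (b : Module.Basis (Fin 3) K (Fin 3 → K)) (i : ℕ)
    (f : Polynomial (Polynomial K)) (hf : TD i f) (h0 : f ≠ 0) : homog b i f ≠ 0 := by
  intro h
  apply h0
  have h1 : ∀ y, f.eval (Polynomial.C y) = 0 := by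
    intro y
    apply Polynomial.funext
    intro x
    have h2 := homog_eval b i f hf (b.equivFun.symm ![1, x, y])
    rw [← Module.Basis.equivFun_apply, LinearEquiv.apply_symm_apply, h] at h2
    have h3 := h2 (by simp)
    simpa [Polynomial.evalEval] using h3.symm
  exact Polynomial.eq_zero_of_infinite_isRoot f
    ((Set.infinite_range_of_injective Polynomial.C_injective).mono (by
      rintro _ ⟨y, rfl⟩; exact h1 y))

/-- Dehomogenization. -/
def dehomog (b : Module.Basis (Fin 3) K (Fin 3 → K)) (F : MvPolynomial (Fin 3) K) :
    Polynomial (Polynomial K) :=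
  MvPolynomial.eval₂ (Polynomial.C.comp Polynomial.C)
    (fun i => Polynomial.C (Polynomial.C (b 0 i) + Polynomial.C (b 1 i) * Polynomial.X) +
      Polynomial.C (Polynomial.C (b 2 i)) * Polynomial.X) F

lemma dehomog_eval (b : Module.Basis (Fin 3) K (Fin 3 → K)) (F : MvPolynomial (Fin 3) K)
    (x y : K) : (dehomog b F).evalEval x y =
      MvPolynomial.eval (b 0 + x • b 1 + y • b 2) F := by
  have := MvPolynomial.hom_eval₂ F (Polynomial.C.comp Polynomial.C)
    (Polynomial.evalEvalRingHom x y)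
    (fun i => Polynomial.C (Polynomial.C (b 0 i) + Polynomial.C (b 1 i) * Polynomial.X) +
      Polynomial.C (Polynomial.C (b 2 i)) * Polynomial.X)
  rw [dehomog]
  refine Eq.trans this ?_
  rw [← MvPolynomial.eval₂_id]
  congr 1
  · ext t; simp
  · ext i
    simp [Polynomial.evalEval]
    ring

lemma dehomog_TD (b : Module.Basis (Fin 3) K (Fin 3 → K)) (F : MvPolynomial (Fin 3) K) (s : ℕ)
    (hF : F.IsHomogeneous s) : TD s (dehomog b F) := by
  have h1 : ∀ i, TD 1 (Polynomial.C (Polynomial.C (b 0 i) + Polynomial.C (b 1 i) * Polynomial.X) +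
      Polynomial.C (Polynomial.C (b 2 i)) * Polynomial.X) := by
    intro i j l hjl
    rcases j with _ | _ | j
    · have : l ≠ 0 := by omega
      have : (1 : ℕ) ≠ l := by omega
      simp [Polynomial.coeff_C, Polynomial.coeff_X, *]
    · have : l ≠ 0 := by omega
      simp [Polynomial.coeff_C, *]
    · simp [Polynomial.coeff_C, Polynomial.coeff_X]
  have h0 : ∀ t : K, TD 0 (Polynomial.C (Polynomial.C t)) := by
    intro t j l hjl
    rcases j with _ | j
    · have : l ≠ 0 := by omega
      simp [Polynomial.coeff_C, *]
    · simp [Polynomial.coeff_C]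
  have hpow : ∀ (f : Polynomial (Polynomial K)) (k : ℕ), TD 1 f → TD k (f ^ k) := by
    intro f k hf
    induction k with
    | zero => simpa using h0 1
    | succ k ih => rw [pow_succ]; exact ih.mul hf
  rw [dehomog, MvPolynomial.eval₂_eq']
  have hsum : ∀ (S : Finset (Fin 3 →₀ ℕ)) (g : (Fin 3 →₀ ℕ) → Polynomial (Polynomial K)),
      (∀ d ∈ S, TD s (g d)) → TD s (∑ d ∈ S, g d) := by
    intro S g h j l hjl
    rw [Polynomial.finsetSum_coeff, Polynomial.finsetSum_coeff]
    exact Finset.sum_eq_zero fun d hd => h d hd j l hjl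
  apply hsum
  intro d hd
  have hdeg : d 0 + d 1 + d 2 = s := by
    have := hF (MvPolynomial.mem_support_iff.1 hd)
    rw [Finsupp.weight_apply, Finsupp.sum_fintype _ _ (by simp)] at this
    simpa [Fin.sum_univ_three] using this
  rw [Fin.prod_univ_three, ← hdeg]
  have := (h0 (MvPolynomial.coeff d F)).mul (((hpow _ (d 0) (h1 0)).mul (hpow _ (d 1) (h1 1))).mul
    (hpow _ (d 2) (h1 2)))
  rw [zero_add] at this
  exact this

lemma dehomog_coeff (b : Module.Basis (Fin 3) K (Fin 3 → K)) (F : MvPolynomial (Fin 3) K) (s : ℕ)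
    (hF : F.IsHomogeneous s) :
    (dehomog b F).coeff s = Polynomial.C (MvPolynomial.eval (b 2) F) := by
  rw [dehomog, MvPolynomial.eval₂_eq', MvPolynomial.eval_eq', Polynomial.finsetSum_coeff, map_sum]
  refine Finset.sum_congr rfl fun d hd => ?_
  have hdeg : d 0 + d 1 + d 2 = s := by
    have := hF (MvPolynomial.mem_support_iff.1 hd)
    rw [Finsupp.weight_apply, Finsupp.sum_fintype _ _ (by simp)] at this
    simpa [Fin.sum_univ_three] using this
  set w : Fin 3 → Polynomial (Polynomial K) := fun i =>
    Polynomial.C (Polynomial.C (b 0 i) + Polynomial.C (b 1 i) * Polynomial.X) +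
      Polynomial.C (Polynomial.C (b 2 i)) * Polynomial.X with hw
  have hw1 : ∀ i, (w i).natDegree ≤ 1 := by
    intro i
    rw [hw]
    simp only
    compute_degree
  have hwc : ∀ i, (w i).coeff 1 = Polynomial.C (b 2 i) := by
    intro i
    simp [hw, Polynomial.coeff_C]
  have hp : ∀ i k, (w i ^ k).natDegree ≤ k := fun i k => by
    simpa using Polynomial.natDegree_pow_le_of_le k (hw1 i)
  have hpc : ∀ i k, (w i ^ k).coeff k = Polynomial.C (b 2 i) ^ k := fun i k => by
    have := Polynomial.coeff_pow_of_natDegree_le (m := k) (hw1 i)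
    rwa [mul_one, hwc] at this
  rw [RingHom.comp_apply, Polynomial.coeff_C_mul, Fin.prod_univ_three, Fin.prod_univ_three, ← hdeg,
    Polynomial.coeff_mul_add_eq_of_natDegree_le
      (Polynomial.natDegree_mul_le_of_le (hp _ _) (hp _ _)) (hp _ _),
    Polynomial.coeff_mul_add_eq_of_natDegree_le (hp _ _) (hp _ _), hpc, hpc, hpc]
  simp only [map_mul, map_pow]

end Chart
section Core

variable {K : Type*} [Field K]

lemma eval_smul_homog (F : MvPolynomial (Fin 3) K) (s : ℕ) (hF : F.IsHomogeneous s) (c : K)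
    (v : Fin 3 → K) : MvPolynomial.eval (c • v) F = c ^ s * MvPolynomial.eval v F := by
  rw [MvPolynomial.eval_eq', MvPolynomial.eval_eq', Finset.mul_sum]
  refine Finset.sum_congr rfl fun d hd => ?_
  have hdeg : d 0 + d 1 + d 2 = s := by
    have := hF (MvPolynomial.mem_support_iff.1 hd)
    rw [Finsupp.weight_apply, Finsupp.sum_fintype _ _ (by simp)] at this
    simpa [Fin.sum_univ_three] using this
  simp only [Fin.prod_univ_three, Pi.smul_apply, smul_eq_mul, mul_pow, ← hdeg, pow_add]
  ring

/-- There is some curve through a finite set of points. -/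
lemma exists_curve {ι : Type*} [Fintype ι] (v : ι → Fin 3 → K) (hv : ∀ q, v q ≠ 0) :
    ∃ s, ∃ F : MvPolynomial (Fin 3) K, F ≠ 0 ∧ F.IsHomogeneous s ∧
      ∀ q, MvPolynomial.eval (v q) F = 0 := by
  classical
  have h1 : ∀ q, ∃ F : MvPolynomial (Fin 3) K, F ≠ 0 ∧ F.IsHomogeneous 1 ∧
      MvPolynomial.eval (v q) F = 0 := by
    intro q
    by_cases h0 : v q 0 = 0
    · exact ⟨MvPolynomial.X 0, MvPolynomial.X_ne_zero _, MvPolynomial.isHomogeneous_X _ _,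
        by simpa using h0⟩
    · refine ⟨MvPolynomial.C (v q 0) * MvPolynomial.X 1 - MvPolynomial.C (v q 1) *
        MvPolynomial.X 0, ?_, ?_, ?_⟩
      · intro h
        have := congrArg (MvPolynomial.eval (Pi.single (1 : Fin 3) (1 : K))) h
        simp [h0] at this
      · apply MvPolynomial.IsHomogeneous.sub
        · simpa using (MvPolynomial.isHomogeneous_C (Fin 3) (v q 0)).mul
            (MvPolynomial.isHomogeneous_X K (1 : Fin 3))
        · simpa using (MvPolynomial.isHomogeneous_C (Fin 3) (v q 1)).mul
            (MvPolynomial.isHomogeneous_X K (0 : Fin 3))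
      · simp [mul_comm]
  choose F hF0 hF1 hF using h1
  refine ⟨∑ q : ι, 1, ∏ q, F q, Finset.prod_ne_zero_iff.2 fun q _ => hF0 q,
    MvPolynomial.IsHomogeneous.prod _ _ _ fun q _ => hF1 q, fun q => ?_⟩
  rw [map_prod]
  exact Finset.prod_eq_zero (Finset.mem_univ q) (hF q)

/-- The main bound for a set of points with a nowhere zero relation in degree `m`. -/
lemma homog_core [Infinite K] {ι : Type*} [Fintype ι] [Nonempty ι] (v : ι → Fin 3 → K)
    (hv : ∀ q, v q ≠ 0) (hinj : ∀ i j, ∀ c : K, v i = c • v j → i = j) (mu : ι → K)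
    (hmu : ∀ q, mu q ≠ 0) (m r : ℕ) (hr : 1 ≤ r) (hrm : 2 * r ≤ m + 2)
    (hann : ∀ F : MvPolynomial (Fin 3) K, F.IsHomogeneous m →
      ∑ q, mu q * MvPolynomial.eval (v q) F = 0) :
    r * (r + 1) ≤ Fintype.card ι ∨
    ∃ s, 1 ≤ s ∧ s < r ∧ (∃ F : MvPolynomial (Fin 3) K, F ≠ 0 ∧ F.IsHomogeneous s ∧
      ∀ q, MvPolynomial.eval (v q) F = 0) ∧ s * (m + 3 - s) ≤ Fintype.card ι := by
  classical
  have hex := exists_curve v hv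
  set s := Nat.find hex with hsdef
  obtain ⟨F, hF0, hF, hFv⟩ := Nat.find_spec hex
  rw [← hsdef] at hF
  have hmin : ∀ t, t < s → ∀ G : MvPolynomial (Fin 3) K, G.IsHomogeneous t →
      (∀ q, MvPolynomial.eval (v q) G = 0) → G = 0 := by
    intro t ht G hG hGv
    by_contra hG0
    exact Nat.find_min hex ht ⟨G, hG0, hG, hGv⟩
  obtain ⟨p0, hp0⟩ : ∃ p, MvPolynomial.eval p F ≠ 0 := by
    by_contra! h
    exact hF0 (MvPolynomial.funext (by simpa using h))
  obtain ⟨q0⟩ := id ‹Nonempty ι›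
  have hs : 1 ≤ s := by
    rw [Nat.one_le_iff_ne_zero]
    intro h0
    rw [h0] at hF
    have e1 := eval_smul_homog F 0 hF 0 p0
    have e2 := eval_smul_homog F 0 hF 0 (v q0)
    rw [zero_smul] at e1 e2
    rw [e1, hFv q0] at e2
    simp [hp0] at e2
  have hzero : MvPolynomial.eval (0 : Fin 3 → K) F = 0 := by
    have e1 := eval_smul_homog F s hF 0 p0
    rw [zero_smul, zero_pow (by omega), zero_mul] at e1
    exact e1
  have hpne : p0 ≠ 0 := by rintro rfl; exact hp0 hzero
  have hspan : ∀ q, v q ∉ Submodule.span K {p0} := by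
    intro q hq
    obtain ⟨c, hc⟩ := Submodule.mem_span_singleton.1 hq
    have e1 := eval_smul_homog F s hF c p0
    rw [hc, hFv q] at e1
    have hc0 : c = 0 := by
      by_contra hc0
      exact mul_ne_zero (pow_ne_zero _ hc0) hp0 e1.symm
    rw [hc0, zero_smul] at hc
    exact hv q hc.symm
  obtain ⟨b, hb2, hb0⟩ := exists_chart v p0 hpne hspan
  set x : ι → K := fun q => b.repr (v q) 1 / b.repr (v q) 0 with hx
  set y : ι → K := fun q => b.repr (v q) 2 / b.repr (v q) 0 with hy
  have hvq : ∀ q, v q = b.repr (v q) 0 • (b 0 + x q • b 1 + y q • b 2) := by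
    intro q
    have h1 := b.sum_repr (v q)
    have h0 := hb0 q
    rw [Fin.sum_univ_three] at h1
    conv_lhs => rw [← h1]
    rw [smul_add, smul_add, smul_smul, smul_smul, hx, hy]
    simp only
    rw [mul_div_cancel₀ _ h0, mul_div_cancel₀ _ h0]
  have hinj' : ∀ i j, x i = x j → y i = y j → i = j := by
    intro i j h1 h2
    apply hinj i j (b.repr (v i) 0 * (b.repr (v j) 0)⁻¹)
    have e2 : (b.repr (v j) 0)⁻¹ • v j = b 0 + x j • b 1 + y j • b 2 := by
      conv_lhs => rw [hvq j]
      rw [smul_smul]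
      conv_lhs => rw [← hvq j]
      rw [inv_mul_cancel₀ (hb0 j), one_smul]
    rw [mul_smul, e2, ← h1, ← h2]
    exact hvq i
  set nu : ι → K := fun q => mu q * b.repr (v q) 0 ^ m with hnu
  have hnu0 : ∀ q, nu q ≠ 0 := fun q => mul_ne_zero (hmu q) (pow_ne_zero _ (hb0 q))
  have hann' : ∀ f, TD m f → ∑ q, nu q * f.evalEval (x q) (y q) = 0 := by
    intro f hf
    rw [← hann _ (homog_homog b m f)]
    refine Finset.sum_congr rfl fun q _ => ?_
    rw [homog_eval b m f hf (v q) (hb0 q), hnu]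
    ring
  have hmin' : ∀ k, 1 ≤ k → k ≤ s → ∀ f, TD (k - 1) f →
      (∀ q, f.evalEval (x q) (y q) = 0) → f = 0 := by
    intro k hk hks f hf hfv
    by_contra hf0
    apply homog_ne_zero b (k - 1) f hf hf0
    apply hmin (k - 1) (by omega) _ (homog_homog b (k - 1) f)
    intro q
    rw [homog_eval b _ f hf (v q) (hb0 q), hfv q, mul_zero]
  rcases le_or_gt r s with hrs | hrs
  · left
    exact bound_one x y nu hnu0 m r hr hrm hann' (hmin' r hr hrs)
  right
  refine ⟨s, hs, hrs, ⟨F, hF0, hF, hFv⟩, ?_⟩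
  set F1 : MvPolynomial (Fin 3) K := MvPolynomial.C (MvPolynomial.eval p0 F)⁻¹ * F with hF1
  have hF1h : F1.IsHomogeneous s := by
    simpa using (MvPolynomial.isHomogeneous_C (Fin 3) (MvPolynomial.eval p0 F)⁻¹).mul hF
  have hTD := dehomog_TD b F1 s hF1h
  have hco := dehomog_coeff b F1 s hF1h
  have hco1 : (dehomog b F1).coeff s = 1 := by
    rw [hco, hb2, hF1, map_mul, MvPolynomial.eval_C, inv_mul_cancel₀ hp0, Polynomial.C_1]
  have hnd : (dehomog b F1).natDegree ≤ s := by
    rw [Polynomial.natDegree_le_iff_coeff_eq_zero]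
    intro j hj
    ext l
    exact hTD j l (by omega)
  have hnd' : (dehomog b F1).natDegree = s :=
    le_antisymm hnd (Polynomial.le_natDegree_of_ne_zero (by rw [hco1]; exact one_ne_zero))
  have hmon : (dehomog b F1).Monic := Polynomial.monic_of_natDegree_le_of_coeff_eq_one s hnd hco1
  refine bound_two x y nu hnu0 hinj' m s hs (by omega) hann' (hmin' s hs le_rfl)
    (dehomog b F1) hmon hnd' hTD ?_
  intro q
  rw [dehomog_eval]
  have e1 := eval_smul_homog F1 s hF1h (b.repr (v q) 0) (b 0 + x q • b 1 + y q • b 2)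
  rw [← hvq q, hF1, map_mul, hFv q, mul_zero] at e1
  exact (mul_eq_zero.1 e1.symm).resolve_left (pow_ne_zero _ (hb0 q))

/-- A point which cannot be separated gives a linear relation. -/
lemma exists_relation {ι : Type*} [Fintype ι] (v : ι → Fin 3 → K) (m : ℕ) (P : ι)
    (h : ∀ F : MvPolynomial (Fin 3) K, F.IsHomogeneous m →
      (∀ q, q ≠ P → MvPolynomial.eval (v q) F = 0) → MvPolynomial.eval (v P) F = 0) :
    ∃ mu : ι → K, mu P ≠ 0 ∧ ∀ F : MvPolynomial (Fin 3) K, F.IsHomogeneous m →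
      ∑ q, mu q * MvPolynomial.eval (v q) F = 0 := by
  classical
  let E := MvPolynomial.homogeneousSubmodule (Fin 3) K m
  let ev : ι → (E →ₗ[K] K) := fun q =>
    (MvPolynomial.aeval (R := K) (v q)).toLinearMap ∘ₗ E.subtype
  have hev : ∀ q (F : E), ev q F = MvPolynomial.eval (v q) F := fun q F => by
    simp [ev, MvPolynomial.aeval_eq_eval]
  let L : ι → (E →ₗ[K] K) := fun q => if q = P then 0 else ev q
  have hmem : ev P ∈ Submodule.span K (Set.range L) := by
    apply mem_span_of_iInf_ker_le_ker
    intro F hF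
    rw [LinearMap.mem_ker, hev]
    apply h F F.2
    intro q hq
    have := (Submodule.mem_iInf _).1 hF q
    simp only [L, if_neg hq, LinearMap.mem_ker, hev] at this
    exact this
  obtain ⟨c, hc⟩ := (Submodule.mem_span_range_iff_exists_fun K).1 hmem
  refine ⟨fun q => if q = P then 1 else - c q, by simp, fun F hF => ?_⟩
  have h1 := congrArg (fun φ : E →ₗ[K] K => φ ⟨F, hF⟩) hc
  simp only [LinearMap.coe_sum, Finset.sum_apply, LinearMap.smul_apply, hev] at h1
  rw [← Finset.add_sum_erase _ _ (Finset.mem_univ P)]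
  rw [← Finset.add_sum_erase _ _ (Finset.mem_univ P)] at h1
  simp only [L, if_true, LinearMap.zero_apply, smul_zero, zero_add, one_mul] at h1 ⊢
  rw [← h1, ← Finset.sum_add_distrib]
  refine Finset.sum_eq_zero fun q hq => ?_
  have hqP := Finset.ne_of_mem_erase hq
  simp [if_neg hqP, hev]

end Core

theorem stmt_11 (n r : ℕ) (hr : 3 ≤ r) (hn : 2 ≤ n) (hrn : n ≤ 2 * r)
    (S : Set (ProjPt 2)) (hfin : S.Finite)
    (hcard : 4 * S.ncard ≤ (2 * r + n - 2) * r)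
    (hcurve : ∀ t : ℕ, 1 ≤ t →
      ∀ C : MvPolynomial (Fin 3) ℂ, C ≠ 0 → C.IsHomogeneous t →
        (S ∩ {p : ProjPt 2 | VanishesAt C p}).ncard ≤ t * (2 * r + n - 2)) :
    ∀ P ∈ S, ∃ F : MvPolynomial (Fin 3) ℂ,
      F.IsHomogeneous (3 * r + n - 5) ∧
      (∀ Q ∈ S, Q ≠ P → VanishesAt F Q) ∧ ¬ VanishesAt F P := by
  
  classical
  intro P hP
  by_contra! hno
  have : Fintype S := hfin.fintype
  obtain ⟨mu, hmuP, hmu⟩ := exists_relation (fun q : S => (q : ProjPt 2).rep) (3 * r + n - 5)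
    ⟨P, hP⟩ (by
      intro F hF hFv
      exact by_contra fun hne => hne (by
        have := hno F hF (fun Q hQ hQP => hFv ⟨Q, hQ⟩ (fun h => hQP (congrArg Subtype.val h)))
        exact this))
  let ι := {q : S // mu q ≠ 0}
  have : Nonempty ι := ⟨⟨⟨P, hP⟩, hmuP⟩⟩
  have hcardle : Fintype.card ι ≤ S.ncard := by
    rw [← Nat.card_coe_set_eq, Nat.card_eq_fintype_card]
    exact Fintype.card_subtype_le _
  have hcore := homog_core (fun q : ι => (q.1 : ProjPt 2).rep) (fun q => (q.1 : ProjPt 2).rep_nonzero)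
    (by
      intro i j c hc
      apply Subtype.ext
      apply Subtype.ext
      rw [← (i.1 : ProjPt 2).mk_rep, ← (j.1 : ProjPt 2).mk_rep]
      rw [Projectivization.mk_eq_mk_iff']
      exact ⟨c, hc.symm⟩)
    (fun q => mu q.1) (fun q => q.2) (3 * r + n - 5) r (by omega) (by omega)
    (by
      intro F hF
      refine Eq.trans ?_ (hmu F hF)
      rw [← Finset.sum_filter_of_ne (p := fun q => mu q ≠ 0)
        (fun q _ hq => left_ne_zero_of_mul hq)]
      exact (Finset.sum_subtype _ (by simp)
        (fun q : S => mu q * MvPolynomial.eval (q : ProjPt 2).rep F)).symm)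
  obtain ⟨N, hN⟩ : ∃ N, N = 2 * r + n - 2 := ⟨_, rfl⟩
  rw [← hN] at hcard
  rcases hcore with h | ⟨s, hs1, hsr, ⟨F, hF0, hF, hFv⟩, hs⟩
  · have : N ≤ 4 * r - 2 := by omega
    have h2 : N * r ≤ 4 * r * r := Nat.mul_le_mul_right r (by omega)
    nlinarith
  · have h1 := hcurve s hs1 F hF0 hF
    rw [← hN] at h1
    have h2 : Fintype.card ι ≤ (S ∩ {p : ProjPt 2 | VanishesAt F p}).ncard := by
      rw [← Nat.card_coe_set_eq, ← Nat.card_eq_fintype_card]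
      have : Finite ↑(S ∩ {p : ProjPt 2 | VanishesAt F p}) := (hfin.inter_of_left _).to_subtype
      exact Nat.card_le_card_of_injective
        (fun q : ι => (⟨q.1.1, q.1.2, hFv q⟩ : ↑(S ∩ {p : ProjPt 2 | VanishesAt F p})))
        (fun i j hij => Subtype.ext (Subtype.ext (Subtype.mk.inj hij)))
    rw [show 3 * r + n - 5 + 3 - s = N + (r - s) by omega] at hs
    have h3 : 1 ≤ r - s := by omega
    nlinarith
end
end
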